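/- arXiv:math/0507429 — 10 statements merged into one kernel-verified Lean document; each statement's English description precedes it below -/
import Mathlib

section
/- Let T be an invertible measure-preserving transformation of a probability space (X, 𝒜, μ) and S an invertible measure-preserving transformation of a probability space (Y, ℬ, ν), with S ergodic. If λ is a joining of T and S which is moreover invariant under the map Id × S : (x,y) ↦ (x, Sy), then λ = μ ⊗ ν, the product measure. -/
open MeasureTheory

/-- If `λ` is a joining of `T` and `S`, with `S` ergodic, and `λ` is moreover invariant
under `Id × S`, then `λ` is the product measure `μ ⊗ ν`. -/
theorem joining_invariant_id_prod_eq_prod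
    {X Y : Type*} [MeasurableSpace X] [MeasurableSpace Y]
    (μ : Measure X) (ν : Measure Y) [IsProbabilityMeasure μ] [IsProbabilityMeasure ν]
    (T : X ≃ᵐ X) (S : Y ≃ᵐ Y)
    (hT : MeasurePreserving T μ μ)
    (hS : Ergodic S ν)
    (lam : Measure (X × Y))
    (h1 : lam.map Prod.fst = μ)
    (h2 : lam.map Prod.snd = ν)
    (hinv : MeasurePreserving (Prod.map T S) lam lam)
    (hIdS : MeasurePreserving (Prod.map (id : X → X) S) lam lam) :
    lam = μ.prod ν := by
  have hp : IsProbabilityMeasure lam := by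
    constructor
    have h : lam.map Prod.fst Set.univ = 1 := by rw [h1]; exact measure_univ
    rwa [Measure.map_apply measurable_fst MeasurableSet.univ, Set.preimage_univ] at h
  symm
  apply Measure.prod_eq
  intro A B hA hB
  set κ : Measure Y := (lam.restrict (Prod.fst ⁻¹' A)).map Prod.snd with hκ
  have hAm : MeasurableSet (Prod.fst ⁻¹' A : Set (X × Y)) := measurable_fst hA
  have hval : ∀ C : Set Y, MeasurableSet C → κ C = lam (A ×ˢ C) := by
    intro C hC
    rw [hκ, Measure.map_apply measurable_snd hC, Measure.restrict_apply (measurable_snd hC)]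
    congr 1
    ext ⟨x, y⟩
    simp [and_comm]
  have hinvκ : MeasurePreserving S κ κ := by
    refine ⟨S.measurable, ?_⟩
    ext C hC
    rw [Measure.map_apply S.measurable hC, hval _ (S.measurable hC), hval _ hC,
      ← hIdS.measure_preimage (hA.prod hC).nullMeasurableSet]
    rfl
  have hac : κ ≪ ν := by
    rw [hκ, ← h2]
    exact Measure.absolutelyContinuous_of_le
      (Measure.map_mono Measure.restrict_le_self measurable_snd)
  obtain ⟨c, hc⟩ := hS.eq_smul_of_absolutelyContinuous hinvκ hac
  have hcu : κ Set.univ = c := by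
    rw [hc]; simp
  have hμ : κ Set.univ = μ A := by
    rw [hval _ MeasurableSet.univ, ← h1, Measure.map_apply measurable_fst hA, Set.prod_univ]
  rw [← hval B hB, ← hμ, hcu, hc]
  simp
end

section
/- Let T be a weakly mixing invertible measure-preserving transformation of a probability space (X, 𝒜, μ). Then for every integer k ≥ 1 and all measurable subsets A₀, A₁, …, A_k of X, the averages (1/n) · Σ_{j=1}^{n} μ(A₀ ∩ T^{−j}A₁ ∩ T^{−2j}A₂ ∩ ⋯ ∩ T^{−kj}A_k) converge, as n → ∞, to μ(A₀)·μ(A₁)⋯μ(A_k). -/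
open MeasureTheory Filter

noncomputable def cavg {E : Type*} [NormedAddCommGroup E] [NormedSpace ℝ E] (u : ℕ → E) (N : ℕ) : E :=
  (N : ℝ)⁻¹ • ∑ n ∈ Finset.range N, u n

lemma cavg_norm_le {E : Type*} [NormedAddCommGroup E] [NormedSpace ℝ E] (u : ℕ → E) (N : ℕ) :
    ‖cavg u N‖ ≤ cavg (fun n => ‖u n‖) N := by
  unfold cavg
  rw [norm_smul, norm_inv, Real.norm_natCast, smul_eq_mul]
  gcongr
  exact norm_sum_le _ _

lemma cavg_sq_norm_le {E : Type*} [NormedAddCommGroup E] [NormedSpace ℝ E] (u : ℕ → E) (N : ℕ) :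
    ‖cavg u N‖ ^ 2 ≤ cavg (fun n => ‖u n‖ ^ 2) N := by
  have h1 : ‖cavg u N‖ ^ 2 ≤ (cavg (fun n => ‖u n‖) N) ^ 2 := by
    gcongr; exact cavg_norm_le u N
  refine h1.trans ?_
  unfold cavg
  have h2 := sq_sum_le_card_mul_sum_sq (s := Finset.range N) (f := fun n => ‖u n‖)
  rw [Finset.card_range] at h2
  simp only [smul_eq_mul]
  rcases Nat.eq_zero_or_pos N with rfl | hN
  · simp
  have hN' : (0 : ℝ) < N := by exact_mod_cast hN
  calc ((N : ℝ)⁻¹ * ∑ n ∈ Finset.range N, ‖u n‖) ^ 2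
      = (N : ℝ)⁻¹ ^ 2 * (∑ n ∈ Finset.range N, ‖u n‖) ^ 2 := by ring
    _ ≤ (N : ℝ)⁻¹ ^ 2 * (N * ∑ n ∈ Finset.range N, ‖u n‖ ^ 2) := by gcongr
    _ = _ := by field_simp

lemma cavg_add {E : Type*} [NormedAddCommGroup E] [NormedSpace ℝ E] (u v : ℕ → E) (N : ℕ) :
    cavg (fun n => u n + v n) N = cavg u N + cavg v N := by
  simp [cavg, Finset.sum_add_distrib, smul_add]

lemma cavg_const {E : Type*} [NormedAddCommGroup E] [NormedSpace ℝ E] (c : E) :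
    Tendsto (cavg (fun _ => c)) atTop (nhds c) := by
  refine tendsto_const_nhds.congr' ?_
  filter_upwards [eventually_gt_atTop 0] with N hN
  have hN' : (N : ℝ) ≠ 0 := by exact_mod_cast hN.ne'
  simp only [cavg, Finset.sum_const, Finset.card_range]
  rw [← Nat.cast_smul_eq_nsmul ℝ, smul_smul, inv_mul_cancel₀ hN', one_smul]

lemma cavg_shift {E : Type*} [NormedAddCommGroup E] [NormedSpace ℝ E] (u : ℕ → E) (C : ℝ)
    (hC : ∀ n, ‖u n‖ ≤ C) (h : ℕ) :
    Tendsto (fun N => cavg (fun n => u (n + h)) N - cavg u N) atTop (nhds 0) := by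
  have key : ∀ N, ‖cavg (fun n => u (n + h)) N - cavg u N‖ ≤ (N : ℝ)⁻¹ * (2 * h * C) := by
    intro N
    have e1 : ∑ n ∈ Finset.range N, u (n + h) - ∑ n ∈ Finset.range N, u n
        = ∑ n ∈ Finset.range h, u (N + n) - ∑ n ∈ Finset.range h, u n := by
      have a1 := Finset.sum_range_add u N h
      have a2 := Finset.sum_range_add u h N
      rw [add_comm h N, a1] at a2
      simp only [add_comm _ h]
      rw [sub_eq_sub_iff_add_eq_add, add_comm, ← a2, add_comm]
    unfold cavg
    rw [← smul_sub, norm_smul, norm_inv, Real.norm_natCast, e1]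
    gcongr
    refine (norm_sub_le _ _).trans ?_
    have b1 : ‖∑ n ∈ Finset.range h, u (N + n)‖ ≤ h * C := by
      simpa using norm_sum_le_of_le (Finset.range h) (fun n _ => hC (N + n))
    have b2 : ‖∑ n ∈ Finset.range h, u n‖ ≤ h * C := by
      simpa using norm_sum_le_of_le (Finset.range h) (fun n _ => hC n)
    linarith
  refine squeeze_zero_norm key ?_
  simpa using (tendsto_inv_atTop_nhds_zero_nat (𝕜 := ℝ)).mul_const (2 * (h : ℝ) * C)

lemma dist_sum_le (g : ℕ → ℝ) (hg : ∀ n, 0 ≤ g n) (H h : ℕ) (hh : h < H) :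
    ∑ i ∈ Finset.range H, g ((h - i) + (i - h)) ≤ 2 * ∑ d ∈ Finset.range H, g d := by
  rw [← Finset.sum_filter_add_sum_filter_not (Finset.range H) (fun i => i ≤ h), two_mul]
  have gen : ∀ (s : Finset ℕ), s ⊆ Finset.range H →
      Set.InjOn (fun i => (h - i) + (i - h)) s →
      ∑ i ∈ s, g ((h - i) + (i - h)) ≤ ∑ d ∈ Finset.range H, g d := by
    intro s hs hi
    rw [← Finset.sum_image (f := g) hi]
    refine Finset.sum_le_sum_of_subset_of_nonneg ?_ (fun i _ _ => hg i)
    intro d hd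
    obtain ⟨i, hi, rfl⟩ := Finset.mem_image.1 hd
    have := Finset.mem_range.1 (hs hi)
    simp only [Finset.mem_range]; omega
  refine add_le_add (gen _ (Finset.filter_subset _ _) ?_) (gen _ (Finset.filter_subset _ _) ?_)
  · intro a ha b hb hab
    simp at ha hb hab; omega
  · intro a ha b hb hab
    simp at ha hb hab; omega

lemma vdc {E : Type*} [NormedAddCommGroup E] [InnerProductSpace ℝ E] (u : ℕ → E) (C : ℝ)
    (hC : ∀ n, ‖u n‖ ≤ C) (γ : ℕ → ℝ)
    (hγ : ∀ h, Tendsto (cavg (fun n => inner ℝ (u n) (u (n + h)))) atTop (nhds (γ h)))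
    (h0 : Tendsto (cavg (fun h => |γ h|)) atTop (nhds 0)) :
    Tendsto (cavg u) atTop (nhds 0) := by
  have hC0 : 0 ≤ C := (norm_nonneg _).trans (hC 0)
  -- shifted correlations
  have hs1 : ∀ a d, Tendsto (cavg (fun n => inner ℝ (u (n + a)) (u (n + a + d)))) atTop
      (nhds (γ d)) := by
    intro a d
    have := (cavg_shift (fun n => inner ℝ (u n) (u (n + d)) : ℕ → ℝ) (C * C) (by
      intro n
      exact (norm_inner_le_norm _ _).trans
        (mul_le_mul (hC _) (hC _) (norm_nonneg _) hC0)) a).add (hγ d)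
    simpa using this
  have hs : ∀ a b, Tendsto (cavg (fun n => inner ℝ (u (n + a)) (u (n + b)))) atTop
      (nhds (γ ((a - b) + (b - a)))) := by
    intro a b
    rcases le_total a b with hab | hab
    · have := hs1 a (b - a)
      have e : a - b + (b - a) = b - a := by omega
      rw [e]
      convert this using 5
      omega
    · have := hs1 b (a - b)
      have e : a - b + (b - a) = a - b := by omega
      rw [e]
      convert this using 3 with n
      rw [real_inner_comm]
      congr 2
      omega
  rw [tendsto_zero_iff_norm_tendsto_zero]
  have hmain : ∀ H : ℕ, 0 < H → ∃ w : ℕ → ℝ, ∃ L : ℝ, (∀ N, ‖cavg u N‖ ^ 2 ≤ w N) ∧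
      Tendsto w atTop (nhds L) ∧ L ≤ 4 * cavg (fun h => |γ h|) H := by
    intro H hH
    have hH' : (0 : ℝ) < H := by exact_mod_cast hH
    let v : ℕ → E := fun n => cavg (fun h => u (n + h)) H
    have hv1 : ∀ N, cavg v N = cavg (fun h => cavg (fun n => u (n + h)) N) H := by
      intro N
      simp only [v, cavg]
      rw [← Finset.smul_sum, ← Finset.smul_sum, smul_comm, Finset.sum_comm]
    have hv2 : ∀ N, cavg v N - cavg u N
        = (H : ℝ)⁻¹ • ∑ h ∈ Finset.range H, (cavg (fun n => u (n + h)) N - cavg u N) := by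
      intro N
      rw [hv1 N, Finset.sum_sub_distrib, smul_sub, Finset.sum_const, Finset.card_range,
        ← Nat.cast_smul_eq_nsmul ℝ, smul_smul, inv_mul_cancel₀ hH'.ne', one_smul]
      rfl
    have hv3 : Tendsto (fun N => cavg v N - cavg u N) atTop (nhds 0) := by
      simp only [hv2]
      have := (tendsto_finsetSum (Finset.range H) (fun h _ => cavg_shift u C hC h)).const_smul
        ((H : ℝ)⁻¹)
      simpa using this
    have hv4 : ∀ n, ‖v n‖ ^ 2 = (H : ℝ)⁻¹ * ((H : ℝ)⁻¹ * ∑ a ∈ Finset.range H,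
        ∑ b ∈ Finset.range H, inner ℝ (u (n + a)) (u (n + b))) := by
      intro n
      rw [← real_inner_self_eq_norm_sq]
      simp only [v, cavg]
      rw [real_inner_smul_left, real_inner_smul_right, sum_inner]
      simp only [inner_sum]
    have hv5 : ∀ N, cavg (fun n => ‖v n‖ ^ 2) N = (H : ℝ)⁻¹ * ((H : ℝ)⁻¹ *
        ∑ a ∈ Finset.range H, ∑ b ∈ Finset.range H,
          cavg (fun n => inner ℝ (u (n + a)) (u (n + b))) N) := by
      intro N
      simp only [hv4, cavg, smul_eq_mul, ← Finset.mul_sum]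
      have e : ∑ n ∈ Finset.range N, ∑ a ∈ Finset.range H, ∑ b ∈ Finset.range H,
          (inner ℝ (u (n + a)) (u (n + b)) : ℝ) = ∑ a ∈ Finset.range H, ∑ b ∈ Finset.range H,
          ∑ n ∈ Finset.range N, (inner ℝ (u (n + a)) (u (n + b)) : ℝ) := by
        rw [Finset.sum_comm]
        exact Finset.sum_congr rfl fun a _ => Finset.sum_comm
      rw [e]
      ring
    refine ⟨fun N => 2 * ‖cavg v N - cavg u N‖ ^ 2 + 2 * cavg (fun n => ‖v n‖ ^ 2) N,
      2 * ‖(0 : E)‖ ^ 2 + 2 * ((H : ℝ)⁻¹ * ((H : ℝ)⁻¹ *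
        ∑ a ∈ Finset.range H, ∑ b ∈ Finset.range H, γ ((a - b) + (b - a)))), ?_, ?_, ?_⟩
    · intro N
      have h1 := cavg_sq_norm_le v N
      have h2 : ‖cavg u N‖ ≤ ‖cavg v N - cavg u N‖ + ‖cavg v N‖ := by
        have := norm_sub_le (cavg v N) (cavg v N - cavg u N)
        rw [sub_sub_cancel] at this
        linarith
      have h3 : ‖cavg u N‖ ^ 2 ≤ (‖cavg v N - cavg u N‖ + ‖cavg v N‖) ^ 2 := by gcongr
      nlinarith [sq_nonneg (‖cavg v N - cavg u N‖ - ‖cavg v N‖)]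
    · refine Tendsto.add ((hv3.norm.pow 2).const_mul 2) (Tendsto.const_mul 2 ?_)
      rw [show cavg (fun n => ‖v n‖ ^ 2) = _ from funext hv5]
      refine Tendsto.const_mul _ (Tendsto.const_mul _ ?_)
      exact tendsto_finsetSum _ fun a _ => tendsto_finsetSum _ fun b _ => hs a b
    · have h1 : ∑ a ∈ Finset.range H, ∑ b ∈ Finset.range H, γ ((a - b) + (b - a))
          ≤ ∑ a ∈ Finset.range H, 2 * ∑ d ∈ Finset.range H, |γ d| := by
        refine Finset.sum_le_sum fun a ha => ?_
        refine (Finset.sum_le_sum fun b _ => le_abs_self _).trans ?_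
        exact dist_sum_le (fun d => |γ d|) (fun d => abs_nonneg _) H a (Finset.mem_range.1 ha)
      rw [Finset.sum_const, Finset.card_range, nsmul_eq_mul] at h1
      have h2 : (H : ℝ)⁻¹ * ((H : ℝ)⁻¹ *
        ∑ a ∈ Finset.range H, ∑ b ∈ Finset.range H, γ ((a - b) + (b - a))) ≤
        (H : ℝ)⁻¹ * ((H : ℝ)⁻¹ * (H * (2 * ∑ d ∈ Finset.range H, |γ d|))) := by gcongr
      rw [inv_mul_cancel_left₀ hH'.ne'] at h2
      simp only [cavg, smul_eq_mul, norm_zero]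
      linarith
  have hsq : Tendsto (fun N => ‖cavg u N‖ ^ 2) atTop (nhds 0) := by
    rw [Metric.tendsto_nhds]
    intro ε hε
    have hH := (h0.eventually (gt_mem_nhds (show (0 : ℝ) < ε / 4 by positivity))).and
      (eventually_gt_atTop 0)
    obtain ⟨H, hH1, hH2⟩ := hH.exists
    obtain ⟨w, L, hw, hL, hLle⟩ := hmain H hH2
    have hLε : L < ε := by linarith
    filter_upwards [hL.eventually (gt_mem_nhds hLε)] with N hN
    rw [Real.dist_eq, sub_zero, abs_of_nonneg (by positivity)]
    exact (hw N).trans_lt hN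
  have := hsq.sqrt
  simpa using this

structure BM {X : Type*} [MeasurableSpace X] (f : X → ℝ) : Prop where
  meas : Measurable f
  bdd : ∃ C, ∀ x, ‖f x‖ ≤ C

namespace BM
variable {X Y : Type*} [MeasurableSpace X] [MeasurableSpace Y]

lemma mul {f g : X → ℝ} (hf : BM f) (hg : BM g) : BM (fun x => f x * g x) := by
  obtain ⟨C, hC⟩ := hf.bdd
  obtain ⟨D, hD⟩ := hg.bdd
  refine ⟨hf.meas.mul hg.meas, C * D, fun x => ?_⟩
  rw [norm_mul]
  exact mul_le_mul (hC x) (hD x) (norm_nonneg _) ((norm_nonneg _).trans (hC x))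

lemma comp {f : X → ℝ} (hf : BM f) {S : Y → X} (hS : Measurable S) : BM (fun y => f (S y)) := by
  obtain ⟨C, hC⟩ := hf.bdd
  exact ⟨hf.meas.comp hS, C, fun x => hC _⟩

lemma const (c : ℝ) : BM (fun _ : X => c) := ⟨measurable_const, ‖c‖, fun _ => le_rfl⟩

lemma sub_const {f : X → ℝ} (hf : BM f) (c : ℝ) : BM (fun x => f x - c) := by
  obtain ⟨C, hC⟩ := hf.bdd
  exact ⟨hf.meas.sub_const c, C + ‖c‖, fun x => (norm_sub_le _ _).trans (by gcongr; exact hC x)⟩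

lemma prod {f : ℕ → X → ℝ} (s : Finset ℕ) (hf : ∀ i, BM (f i)) : BM (fun x => ∏ i ∈ s, f i x) := by
  classical
  induction s using Finset.induction_on with
  | empty => simpa using const 1
  | insert a s ha ih => simpa [Finset.prod_insert ha] using (hf a).mul ih

lemma memLp {f : X → ℝ} (hf : BM f) (μ : Measure X) [IsProbabilityMeasure μ] : MemLp f 2 μ := by
  obtain ⟨C, hC⟩ := hf.bdd
  exact MemLp.of_bound hf.meas.aestronglyMeasurable C (ae_of_all _ hC)

lemma integrable {f : X → ℝ} (hf : BM f) (μ : Measure X) [IsProbabilityMeasure μ] :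
    Integrable f μ := (hf.memLp μ).integrable (by norm_num)

lemma inner_toLp {f g : X → ℝ} {μ : Measure X} [IsProbabilityMeasure μ]
    (hf : MemLp f 2 μ) (hg : MemLp g 2 μ) :
    inner ℝ (hf.toLp f) (hg.toLp g) = ∫ x, f x * g x ∂μ := by
  rw [L2.inner_def]
  refine integral_congr_ae ?_
  filter_upwards [hf.coeFn_toLp, hg.coeFn_toLp] with x h1 h2
  rw [h1, h2]
  simp [mul_comm]

end BM

lemma erg_zero {Y : Type*} [MeasurableSpace Y] (ν : Measure Y) [IsProbabilityMeasure ν]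
    (S : Y → Y) (hS : Ergodic S ν) (G : Y → ℝ) (hG : BM G) (h0 : ∫ y, G y ∂ν = 0) :
    Tendsto (cavg (fun n => ∫ y, G y * G (S^[n] y) ∂ν)) atTop (nhds 0) := by
  have hSm := hS.toMeasurePreserving
  let U : Lp ℝ 2 ν →L[ℝ] Lp ℝ 2 ν := (Lp.compMeasurePreservingₗᵢ ℝ S hSm).toContinuousLinearMap
  have hU : ‖U‖ ≤ 1 := LinearIsometry.norm_toContinuousLinearMap_le _
  let g := (hG.memLp ν).toLp G
  have hiter : ∀ n, U^[n] g = ((hG.comp (hSm.iterate n).measurable).memLp ν).toLp _ := by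
    intro n
    have := congrFun (Lp.compMeasurePreserving_iterate (E := ℝ) (p := 2) hSm n) g
    exact this
  have hmet := U.tendsto_birkhoffAverage_orthogonalProjection hU g
  have hproj : (((U.eqLocus (1 : Lp ℝ 2 ν →L[ℝ] Lp ℝ 2 ν)).orthogonalProjectionOnto g :
      U.eqLocus (1 : Lp ℝ 2 ν →L[ℝ] Lp ℝ 2 ν)) : Lp ℝ 2 ν) = 0 := by
    rw [ZeroMemClass.coe_eq_zero, Submodule.orthogonalProjectionOnto_eq_zero_iff]
    rw [Submodule.mem_orthogonal]
    intro w hw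
    have hw' : U w = w := hw
    have h1 : w ∘ S =ᵐ[ν] w := by
      have := Lp.coeFn_compMeasurePreserving w hSm
      refine this.symm.trans ?_
      have e : Lp.compMeasurePreserving S hSm w = w := hw'
      rw [e]
    obtain ⟨c, hc⟩ := hS.ae_eq_const_of_ae_eq_comp_ae (Lp.aestronglyMeasurable w) h1
    rw [L2.inner_def]
    have : ∫ y, inner ℝ (w y) (g y) ∂ν = ∫ y, c * G y ∂ν := by
      refine integral_congr_ae ?_
      filter_upwards [hc, (hG.memLp ν).coeFn_toLp] with y h2 h3
      rw [h2]
      simp only [g]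
      rw [h3]
      simp [mul_comm]
    rw [this, integral_const_mul, h0, mul_zero]
  rw [hproj] at hmet
  have h2 := (tendsto_const_nhds (x := g)).inner (𝕜 := ℝ) hmet
  rw [inner_zero_right] at h2
  refine h2.congr fun N => ?_
  simp only [birkhoffAverage, birkhoffSum, cavg, id]
  rw [real_inner_smul_right, inner_sum, smul_eq_mul]
  congr 1
  refine Finset.sum_congr rfl fun n _ => ?_
  rw [hiter n]
  exact BM.inner_toLp _ _

lemma wm_abs {X : Type*} [MeasurableSpace X] (μ : Measure X) [IsProbabilityMeasure μ]
    (T : X → X) (hwm : Ergodic (Prod.map T T) (μ.prod μ)) (f : X → ℝ) (hf : BM f)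
    (h0 : ∫ x, f x ∂μ = 0) (q : ℕ) (hq : 0 < q) :
    Tendsto (cavg (fun n => |∫ x, f x * f (T^[q * n] x) ∂μ|)) atTop (nhds 0) := by
  have hG : BM (fun p : X × X => f p.1 * f p.2) :=
    (hf.comp measurable_fst).mul (hf.comp measurable_snd)
  have h1 := erg_zero (μ.prod μ) (Prod.map T T) hwm _ hG (by
    rw [integral_prod_mul, h0, mul_zero])
  have h2 : ∀ n, ∫ p : X × X, (fun p : X × X => f p.1 * f p.2) p *
      (fun p : X × X => f p.1 * f p.2) ((Prod.map T T)^[n] p) ∂(μ.prod μ)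
      = (∫ x, f x * f (T^[n] x) ∂μ) ^ 2 := by
    intro n
    rw [sq, ← integral_prod_mul]
    congr 1
    ext p
    rw [Prod.map_iterate]
    simp only [Prod.map_fst, Prod.map_snd]
    ring
  simp only [h2] at h1
  set a : ℕ → ℝ := fun n => ∫ x, f x * f (T^[n] x) ∂μ with ha
  change Tendsto (cavg (fun n => a n ^ 2)) atTop (nhds 0) at h1
  change Tendsto (cavg (fun n => |a (q * n)|)) atTop (nhds 0)
  have h3 : Tendsto (fun N => q * cavg (fun n => a n ^ 2) (q * N)) atTop (nhds 0) := by
    have := (h1.comp (tendsto_id.const_mul_atTop' hq)).const_mul (q : ℝ)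
    simpa using this
  have h4 : ∀ N, cavg (fun n => |a (q * n)|) N ^ 2 ≤ q * cavg (fun n => a n ^ 2) (q * N) := by
    intro N
    have := cavg_sq_norm_le (fun n => |a (q * n)|) N
    simp only [Real.norm_eq_abs, abs_abs, sq_abs] at this
    refine this.trans ?_
    have hle : ∑ n ∈ Finset.range N, a (q * n) ^ 2 ≤ ∑ n ∈ Finset.range (q * N), a n ^ 2 := by
      rw [← Finset.sum_image (f := fun n => a n ^ 2) (g := fun n => q * n)
        (fun x _ y _ hxy => Nat.eq_of_mul_eq_mul_left hq hxy)]
      refine Finset.sum_le_sum_of_subset_of_nonneg ?_ (fun i _ _ => sq_nonneg _)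
      intro d hd
      obtain ⟨i, hi, rfl⟩ := Finset.mem_image.1 hd
      have := Finset.mem_range.1 hi
      exact Finset.mem_range.2 (Nat.mul_lt_mul_of_pos_left this hq)
    have hq' : (q : ℝ) ≠ 0 := by exact_mod_cast hq.ne'
    simp only [cavg, smul_eq_mul, Nat.cast_mul, mul_inv]
    rw [mul_assoc, mul_inv_cancel_left₀ hq']
    gcongr
  have h5 : Tendsto (fun N => cavg (fun n => |a (q * n)|) N ^ 2) atTop (nhds 0) :=
    squeeze_zero (fun N => sq_nonneg _) h4 h3
  have h6 := h5.sqrt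
  simp only [Real.sqrt_sq_eq_abs, Real.sqrt_zero] at h6
  exact (tendsto_zero_iff_abs_tendsto_zero _).2 h6

lemma multi_zero {X : Type*} [MeasurableSpace X] (μ : Measure X) [IsProbabilityMeasure μ]
    (T : X → X) (hT : MeasurePreserving T μ μ)
    (hwm : Ergodic (Prod.map T T) (μ.prod μ)) (k : ℕ)
    (ih : ∀ f : ℕ → X → ℝ, (∀ i, BM (f i)) →
      Tendsto (cavg (fun n => ∫ x, ∏ i ∈ Finset.range (k + 1), f i (T^[i * n] x) ∂μ)) atTop
        (nhds (∏ i ∈ Finset.range (k + 1), ∫ x, f i x ∂μ)))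
    (g : ℕ → X → ℝ) (hg : ∀ i, BM (g i)) (h0 : ∫ x, g (k + 1) x ∂μ = 0) :
    Tendsto (cavg (fun n => ∫ x, ∏ i ∈ Finset.range (k + 2), g i (T^[i * n] x) ∂μ)) atTop
      (nhds 0) := by
  have hTm : ∀ m, Measurable (T^[m]) := fun m => (hT.iterate m).measurable
  let P : ℕ → X → ℝ := fun n x => ∏ i ∈ Finset.range (k + 1), g (i + 1) (T^[(i + 1) * n] x)
  have hP : ∀ n, BM (P n) := fun n =>
    BM.prod (f := fun i x => g (i + 1) (T^[(i + 1) * n] x)) _ fun i => (hg (i + 1)).comp (hTm _)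
  let u : ℕ → Lp ℝ 2 μ := fun n => ((hP n).memLp μ).toLp (P n)
  choose C hC using fun i => (hg i).bdd
  have hne : Nonempty X := μ.nonempty_of_neZero
  have hC0 : ∀ i, 0 ≤ C i := fun i => (norm_nonneg _).trans (hC i hne.some)
  have hPb : ∀ n x, ‖P n x‖ ≤ ∏ i ∈ Finset.range (k + 1), C (i + 1) := by
    intro n x
    simp only [P]
    rw [norm_prod]
    exact Finset.prod_le_prod (fun i _ => norm_nonneg _) fun i _ => hC _ _
  have hu : ∀ n, ‖u n‖ ≤ ∏ i ∈ Finset.range (k + 1), C (i + 1) := by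
    intro n
    have := Lp.norm_le_of_ae_bound (f := u n) (Finset.prod_nonneg fun i _ => hC0 (i + 1)) (by
      filter_upwards [((hP n).memLp μ).coeFn_toLp] with x hx
      simp only [u]
      rw [hx]
      exact hPb n x)
    have e : measureUnivNNReal μ = 1 := by
      rw [← ENNReal.coe_inj, coe_measureUnivNNReal]; simp
    simpa [e] using this
  let F : ℕ → ℕ → X → ℝ := fun h i x => g (i + 1) x * g (i + 1) (T^[(i + 1) * h] x)
  have hF : ∀ h i, BM (F h i) := fun h i => (hg (i + 1)).mul ((hg (i + 1)).comp (hTm _))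
  have hinner : ∀ n h, inner ℝ (u n) (u (n + h))
      = ∫ x, ∏ i ∈ Finset.range (k + 1), F h i (T^[i * n] x) ∂μ := by
    intro n h
    have hB : BM (fun x => ∏ i ∈ Finset.range (k + 1), F h i (T^[i * n] x)) :=
      BM.prod (f := fun i x => F h i (T^[i * n] x)) _ fun i => (hF h i).comp (hTm _)
    have e := integral_map (μ := μ) (hTm n).aemeasurable
      (f := fun x => ∏ i ∈ Finset.range (k + 1), F h i (T^[i * n] x))
      hB.meas.aestronglyMeasurable
    rw [(hT.iterate n).map_eq] at e
    rw [e]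
    refine (BM.inner_toLp _ _).trans ?_
    congr 1
    ext x
    simp only [P, F]
    rw [← Finset.prod_mul_distrib]
    refine Finset.prod_congr rfl fun i _ => ?_
    simp only [← Function.iterate_add_apply]
    congr 3
    · congr 1; ring
    · congr 1; ring
  have hv : Tendsto (cavg u) atTop (nhds 0) := by
    refine vdc u _ hu (fun h => ∏ i ∈ Finset.range (k + 1), ∫ x, F h i x ∂μ) ?_ ?_
    · intro h
      simp only [hinner]
      exact ih (F h) (hF h)
    · have hw := (wm_abs μ T hwm (g (k + 1)) (hg _) h0 (k + 1) k.succ_pos).const_mul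
        (∏ i ∈ Finset.range k, (C (i + 1) * C (i + 1)))
      rw [mul_zero] at hw
      refine squeeze_zero (fun N => ?_) (fun N => ?_) hw
      · simp only [cavg, smul_eq_mul]; positivity
      · simp only [cavg, smul_eq_mul]
        rw [mul_left_comm, Finset.mul_sum _ _ (∏ i ∈ Finset.range k, (C (i + 1) * C (i + 1)))]
        refine mul_le_mul_of_nonneg_left (Finset.sum_le_sum fun h _ => ?_) (by positivity)
        rw [Finset.prod_range_succ, abs_mul, Finset.abs_prod]
        refine mul_le_mul_of_nonneg_right (Finset.prod_le_prod (fun i _ => abs_nonneg _)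
          fun i _ => ?_) (abs_nonneg _)
        have := norm_integral_le_of_norm_le_const (μ := μ) (f := F h i)
          (C := C (i + 1) * C (i + 1)) (ae_of_all _ fun x => by
            simp only [F, norm_mul]
            exact mul_le_mul (hC _ _) (hC _ _) (norm_nonneg _) (hC0 _))
        simpa using this
  have h2 := (tendsto_const_nhds (x := ((hg 0).memLp μ).toLp (g 0))).inner (𝕜 := ℝ) hv
  rw [inner_zero_right] at h2
  refine h2.congr fun N => ?_
  simp only [cavg]
  rw [real_inner_smul_right, inner_sum, smul_eq_mul]
  congr 1
  refine Finset.sum_congr rfl fun n _ => ?_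
  refine (BM.inner_toLp _ _).trans ?_
  congr 1
  ext x
  rw [Finset.prod_range_succ']
  simp [P, mul_comm]

lemma multi {X : Type*} [MeasurableSpace X] (μ : Measure X) [IsProbabilityMeasure μ]
    (T : X → X) (hT : MeasurePreserving T μ μ)
    (hwm : Ergodic (Prod.map T T) (μ.prod μ)) (k : ℕ) :
    ∀ f : ℕ → X → ℝ, (∀ i, BM (f i)) →
      Tendsto (cavg (fun n => ∫ x, ∏ i ∈ Finset.range (k + 1), f i (T^[i * n] x) ∂μ)) atTop
        (nhds (∏ i ∈ Finset.range (k + 1), ∫ x, f i x ∂μ)) := by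
  have hTm : ∀ m, Measurable (T^[m]) := fun m => (hT.iterate m).measurable
  induction k with
  | zero =>
    intro f hf
    simpa using cavg_const (∫ x, f 0 x ∂μ)
  | succ k ih =>
    intro f hf
    set c := ∫ x, f (k + 1) x ∂μ with hc
    let g : ℕ → X → ℝ := Function.update f (k + 1) (fun x => f (k + 1) x - c)
    have hgk : g (k + 1) = fun x => f (k + 1) x - c := by simp [g]
    have hgi : ∀ i ∈ Finset.range (k + 1), g i = f i := by
      intro i hi
      have := Finset.mem_range.1 hi
      simp only [g]
      rw [Function.update_of_ne (by omega)]
    have hg : ∀ i, BM (g i) := by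
      intro i
      by_cases hi : i = k + 1
      · subst hi; rw [hgk]; exact (hf _).sub_const c
      · simp only [g]; rw [Function.update_of_ne hi]; exact hf i
    have h0 : ∫ x, g (k + 1) x ∂μ = 0 := by
      rw [hgk, integral_sub ((hf _).integrable μ) (integrable_const c)]
      simp [hc]
    have h1 := (multi_zero μ T hT hwm k ih g hg h0).add ((ih f hf).mul_const c)
    rw [zero_add] at h1
    rw [Finset.prod_range_succ (fun i => ∫ x, f i x ∂μ) (k + 1)]
    refine h1.congr fun N => ?_
    have hsplit : ∀ n, ∫ x, ∏ i ∈ Finset.range (k + 1 + 1), f i (T^[i * n] x) ∂μ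
        = ∫ x, ∏ i ∈ Finset.range (k + 2), g i (T^[i * n] x) ∂μ
          + (∫ x, ∏ i ∈ Finset.range (k + 1), f i (T^[i * n] x) ∂μ) * c := by
      intro n
      rw [← integral_mul_const, ← integral_add]
      · congr 1
        ext x
        rw [Finset.prod_range_succ, Finset.prod_range_succ (fun i => g i (T^[i * n] x)), hgk]
        rw [Finset.prod_congr rfl (fun i hi => by rw [hgi i hi] :
          ∀ i ∈ Finset.range (k + 1), g i (T^[i * n] x) = f i (T^[i * n] x))]
        ring
      · exact (BM.prod (f := fun i x => g i (T^[i * n] x)) _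
          fun i => (hg i).comp (hTm _)).integrable μ
      · exact ((BM.prod (f := fun i x => f i (T^[i * n] x)) _
          fun i => (hf i).comp (hTm _)).integrable μ).mul_const c
    simp only [hsplit]
    rw [cavg_add]
    congr 1
    simp only [cavg, smul_eq_mul]
    rw [← Finset.sum_mul, mul_assoc]

/-- Furstenberg's multiple recurrence theorem for weakly mixing transformations:
the Cesàro averages of `μ(A₀ ∩ T^{-j}A₁ ∩ ⋯ ∩ T^{-kj}A_k)` converge to
`μ(A₀)μ(A₁)⋯μ(A_k)`. -/
theorem furstenberg_weakly_mixing_multiple_recurrence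
    {X : Type*} [MeasurableSpace X]
    (μ : Measure X) [IsProbabilityMeasure μ]
    (T : X ≃ᵐ X) (hT : MeasurePreserving T μ μ)
    (hwm : Ergodic (Prod.map T T) (μ.prod μ))
    (k : ℕ) (hk : 1 ≤ k)
    (A : Fin (k + 1) → Set X) (hA : ∀ i, MeasurableSet (A i)) :
    Tendsto
      (fun n : ℕ =>
        (1 / (n : ℝ)) *
          ∑ j ∈ Finset.Icc 1 n,
            (μ (⋂ i : Fin (k + 1), (fun x => T^[(i : ℕ) * j] x) ⁻¹' A i)).toReal)
      atTop (nhds (∏ i : Fin (k + 1), (μ (A i)).toReal)) := by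
  classical
  have hTm : ∀ m, Measurable (T^[m]) := fun m => (hT.iterate m).measurable
  let B : ℕ → Set X := fun i => if h : i < k + 1 then A ⟨i, h⟩ else Set.univ
  have hB : ∀ i, MeasurableSet (B i) := by
    intro i
    simp only [B]
    split_ifs
    · exact hA _
    · exact MeasurableSet.univ
  have hBA : ∀ i : Fin (k + 1), B i = A i := by
    intro i; simp only [B]; rw [dif_pos i.2]
  let f : ℕ → X → ℝ := fun i => (B i).indicator 1
  have hf : ∀ i, BM (f i) := by
    intro i
    refine ⟨measurable_one.indicator (hB i), 1, fun x => ?_⟩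
    simp only [f, Set.indicator_apply]
    split_ifs <;> simp
  let a : ℕ → ℝ := fun j => (μ (⋂ i : Fin (k + 1), (fun x => T^[(i : ℕ) * j] x) ⁻¹' A i)).toReal
  have ha : ∀ j, a j = ∫ x, ∏ i ∈ Finset.range (k + 1), f i (T^[i * j] x) ∂μ := by
    intro j
    have hm : MeasurableSet (⋂ i : Fin (k + 1), (fun x => T^[(i : ℕ) * j] x) ⁻¹' A i) :=
      MeasurableSet.iInter fun i => (hTm _) (hA i)
    simp only [a]
    rw [← measureReal_def, ← integral_indicator_one hm]
    congr 1
    ext x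
    rw [Finset.prod_range]
    simp only [f, Set.indicator_apply, hBA, Set.mem_iInter, Set.mem_preimage, Pi.one_apply]
    rw [Finset.prod_ite_zero]
    simp
  have h1 := multi μ T hT hwm k f hf
  simp only [← ha] at h1
  have hlim : ∏ i ∈ Finset.range (k + 1), ∫ x, f i x ∂μ = ∏ i : Fin (k + 1), (μ (A i)).toReal := by
    rw [Finset.prod_range]
    refine Finset.prod_congr rfl fun i _ => ?_
    simp only [f]
    rw [integral_indicator_one (hB i), hBA, measureReal_def]
  rw [hlim] at h1
  have h2 := (cavg_shift a 1 (fun n => by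
    simp only [a]
    rw [← measureReal_def, Real.norm_eq_abs, abs_of_nonneg measureReal_nonneg]
    exact measureReal_le_one) 1).add h1
  rw [zero_add] at h2
  refine h2.congr fun N => ?_
  rw [sub_add_cancel]
  simp only [cavg, smul_eq_mul, one_div]
  congr 1
  rw [Finset.range_eq_Ico, Finset.sum_Ico_add' a 0 N 1, zero_add]
  rfl
end

section
/- Ornstein's criterion for mixing: Let T be an invertible measure-preserving transformation of a probability space (X, 𝒜, μ). Then T is strongly mixing (i.e., for all measurable A, B ⊆ X, μ(A ∩ T^{−n}B) → μ(A)μ(B) as n → ∞) if and only if T is weakly mixing and there exists a real number θ > 0 such that for all measurable A, B ⊆ X, limsup_{n→∞} μ(A ∩ T^{−n}B) ≤ θ·μ(A)·μ(B). -/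
open MeasureTheory Filter

theorem orn_mean {Z : Type*} [MeasurableSpace Z] (ν : Measure Z) [IsProbabilityMeasure ν]
    (τ : Z → Z) (hτ : Ergodic τ ν) (E : Set Z) (hE : MeasurableSet E) (ε : ℝ) (hε : 0 < ε) :
    ∃ N : ℕ, 0 < N ∧
      ∫ z, |(N : ℝ)⁻¹ * (∑ k ∈ Finset.range N, E.indicator (fun _ => (1 : ℝ)) (τ^[k] z))
        - ν.real E| ∂ν < ε := by
  have hm := hτ.toMeasurePreserving
  let U : Lp ℝ 2 ν →L[ℝ] Lp ℝ 2 ν :=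
    (Lp.compMeasurePreservingₗᵢ ℝ (E := ℝ) (p := 2) τ hm).toContinuousLinearMap
  have hUc : ∀ g, U g = Lp.compMeasurePreserving τ hm g := fun g => rfl
  have hU : ‖U‖ ≤ 1 := LinearIsometry.norm_toContinuousLinearMap_le _
  let f : Lp ℝ 2 ν := indicatorConstLp 2 hE (measure_ne_top ν E) 1
  have key := U.tendsto_birkhoffAverage_orthogonalProjection hU f
  obtain ⟨g, hg, hlim⟩ : ∃ g : Lp ℝ 2 ν, U g = g ∧
      Tendsto (birkhoffAverage ℝ U _root_.id · f) atTop (nhds g) :=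
    ⟨_, ((U.eqLocus (1 : Lp ℝ 2 ν →L[ℝ] Lp ℝ 2 ν)).orthogonalProjectionOnto f).2, key⟩
  obtain ⟨c, hc⟩ : ∃ c, (g : Z → ℝ) =ᵐ[ν] Function.const Z c := by
    apply hτ.ae_eq_const_of_ae_eq_comp_ae (Lp.aestronglyMeasurable g)
    have h1 := Lp.coeFn_compMeasurePreserving g hm
    rw [← hUc, hg] at h1
    exact h1.symm
  have hev := (Metric.tendsto_atTop.1 hlim (ε / 2) (by positivity))
  obtain ⟨N₀, hN₀⟩ := hev
  refine ⟨N₀ + 1, by omega, ?_⟩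
  specialize hN₀ (N₀ + 1) (by omega)
  set N := N₀ + 1 with hNdef
  have hNpos : (0 : ℝ) < N := by rw [hNdef]; positivity
  set S : Z → ℝ := fun z => (N : ℝ)⁻¹ * (∑ k ∈ Finset.range N,
    E.indicator (fun _ => (1 : ℝ)) (τ^[k] z)) with hS
  have hFm : Measurable (E.indicator (fun _ => (1 : ℝ))) := measurable_const.indicator hE
  have hFi : ∀ k, Integrable (fun z => E.indicator (fun _ => (1 : ℝ)) (τ^[k] z)) ν := fun k =>
    (hm.iterate k).integrable_comp_of_integrable ((integrable_const (1 : ℝ)).indicator hE)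
  have hSi : Integrable S ν := (integrable_finsetSum _ fun k _ => hFi k).const_mul _
  have hSint : ∫ z, S z ∂ν = ν.real E := by
    rw [hS, integral_const_mul, integral_finsetSum _ fun k _ => hFi k]
    have : ∀ k, ∫ z, E.indicator (fun _ => (1 : ℝ)) (τ^[k] z) ∂ν = ν.real E := by
      intro k
      have h1 : (fun z => E.indicator (fun _ => (1 : ℝ)) (τ^[k] z))
          = (τ^[k] ⁻¹' E).indicator (fun _ => (1 : ℝ)) := by
        ext z; rfl
      rw [h1, integral_indicator_const _ (hE.preimage (hm.iterate k).measurable),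
        (hm.iterate k).measureReal_preimage hE.nullMeasurableSet]
      simp
    simp only [this, Finset.sum_const, Finset.card_range, nsmul_eq_mul]
    field_simp
  have hav : (birkhoffAverage ℝ U _root_.id N f : Lp ℝ 2 ν) =ᵐ[ν] S := by
    have h2 : ∀ k, ((U^[k] f : Lp ℝ 2 ν) : Z → ℝ) =ᵐ[ν]
        fun z => E.indicator (fun _ => (1 : ℝ)) (τ^[k] z) := by
      intro k
      have h3 : (U^[k] f : Lp ℝ 2 ν) = Lp.compMeasurePreserving τ^[k] (hm.iterate k) f := by
        rw [← Lp.compMeasurePreserving_iterate]; rfl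
      rw [h3]
      refine (Lp.coeFn_compMeasurePreserving f (hm.iterate k)).trans ?_
      exact (hm.iterate k).quasiMeasurePreserving.ae_eq_comp indicatorConstLp_coeFn
    have h4 : birkhoffAverage ℝ U _root_.id N f
        = (N : ℝ)⁻¹ • ∑ k ∈ Finset.range N, (U^[k] f : Lp ℝ 2 ν) := rfl
    rw [h4]
    have h5 : ∀ᵐ z ∂ν, ∀ k, ((U^[k] f : Lp ℝ 2 ν) : Z → ℝ) z
        = E.indicator (fun _ => (1 : ℝ)) (τ^[k] z) := ae_all_iff.2 h2
    filter_upwards [h5, Lp.coeFn_smul (N : ℝ)⁻¹ (∑ k ∈ Finset.range N, (U^[k] f : Lp ℝ 2 ν)),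
      Lp.coeFn_finsetSum (Finset.range N) (fun k => (U^[k] f : Lp ℝ 2 ν))] with z hz h6 h7
    rw [h6, Pi.smul_apply, h7, Finset.sum_apply]
    simp [hS, hz]
  have hsub : ((birkhoffAverage ℝ U _root_.id N f - g : Lp ℝ 2 ν) : Z → ℝ)
      =ᵐ[ν] fun z => S z - c := by
    filter_upwards [hav, hc, Lp.coeFn_sub (birkhoffAverage ℝ U _root_.id N f) g] with z h1 h2 h3
    rw [h3, Pi.sub_apply, h1, h2]; rfl
  have hL1 : ∫ z, |S z - c| ∂ν < ε / 2 := by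
    rw [dist_eq_norm, Lp.norm_def, eLpNorm_congr_ae hsub] at hN₀
    refine lt_of_le_of_lt ?_ hN₀
    have hsi : Integrable (fun z => S z - c) ν := hSi.sub (integrable_const c)
    have h8 := integral_norm_eq_lintegral_enorm hsi.aestronglyMeasurable
    simp only [Real.norm_eq_abs] at h8
    rw [h8, ← eLpNorm_one_eq_lintegral_enorm]
    refine ENNReal.toReal_mono ?_
      (eLpNorm_le_eLpNorm_of_exponent_le (by norm_num) hsi.aestronglyMeasurable)
    rw [← eLpNorm_congr_ae hsub]
    exact Lp.eLpNorm_ne_top _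
  have hcE : |c - ν.real E| < ε / 2 := by
    refine lt_of_le_of_lt ?_ hL1
    have h9 : ∫ z, (S z - c) ∂ν = ν.real E - c := by
      rw [integral_sub hSi (integrable_const c), hSint]; simp
    rw [abs_sub_comm, ← h9]
    exact abs_integral_le_integral_abs
  calc ∫ z, |S z - ν.real E| ∂ν ≤ ∫ z, (|S z - c| + |c - ν.real E|) ∂ν := by
        apply integral_mono (hSi.sub (integrable_const _)).abs
          ((hSi.sub (integrable_const _)).abs.add (integrable_const _))
        intro z
        exact abs_sub_le _ _ _
    _ = ∫ z, |S z - c| ∂ν + |c - ν.real E| := by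
        have hi : Integrable (fun z => |S z - c|) ν := (hSi.sub (integrable_const c)).abs
        rw [integral_add hi (integrable_const _)]; simp
    _ < ε := by linarith

theorem orn_sum {Z K : Type*} [MeasurableSpace Z] (ν : Measure Z) [IsProbabilityMeasure ν]
    [Fintype K] [MeasurableSpace K] [MeasurableSingletonClass K] (Q : Z → K) (hQ : Measurable Q)
    (g : K → ℝ) : ∫ z, g (Q z) ∂ν = ∑ p, ν.real (Q ⁻¹' {p}) * g p := by
  have : IsProbabilityMeasure (ν.map Q) := Measure.isProbabilityMeasure_map hQ.aemeasurable
  have h1 : ∫ z, g (Q z) ∂ν = ∫ p, g p ∂(ν.map Q) :=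
    (integral_map hQ.aemeasurable (Measurable.of_discrete).aestronglyMeasurable).symm
  rw [h1, integral_fintype Integrable.of_finite]
  refine Finset.sum_congr rfl fun p _ => ?_
  rw [map_measureReal_apply hQ (measurableSet_singleton p), smul_eq_mul]

theorem orn_bound {X K : Type*} [MeasurableSpace X] (μ : Measure X) [IsProbabilityMeasure μ]
    (T : X → X) (hT : Measurable T) [Fintype K] [MeasurableSpace K] [MeasurableSingletonClass K]
    (P : X → K) (hP : Measurable P) (h : K × K → ℝ) (θ : ℝ)
    (hθ : ∀ A B : Set X, MeasurableSet A → MeasurableSet B →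
      Filter.limsup (fun n : ℕ => (μ (A ∩ T^[n] ⁻¹' B)).toReal) atTop
        ≤ θ * (μ A).toReal * (μ B).toReal) (ε : ℝ) (hε : 0 < ε) :
    ∀ᶠ n : ℕ in atTop, ∫ x, |h (P x, P (T^[n] x))| ∂μ
      ≤ θ * ∫ z, |h (P z.1, P z.2)| ∂(μ.prod μ) + ε := by
  set M := ∑ p, |h p| with hM
  have hM0 : 0 ≤ M := Finset.sum_nonneg fun _ _ => abs_nonneg _
  set δ := ε / (M + 1) with hδ
  have hδ0 : 0 < δ := by positivity
  have hev : ∀ p : K × K, ∀ᶠ n : ℕ in atTop,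
      (μ (P ⁻¹' {p.1} ∩ T^[n] ⁻¹' (P ⁻¹' {p.2}))).toReal
        < θ * (μ (P ⁻¹' {p.1})).toReal * (μ (P ⁻¹' {p.2})).toReal + δ := by
    intro p
    refine eventually_lt_of_limsup_lt
      ((hθ _ _ (hP (measurableSet_singleton _)) (hP (measurableSet_singleton _))).trans_lt
        (by linarith)) ?_
    exact isBoundedUnder_of ⟨1, fun n => measureReal_le_one⟩
  filter_upwards [eventually_all.2 hev] with n hn
  have e1 := orn_sum μ (fun x => (P x, P (T^[n] x)))
    (hP.prodMk (hP.comp (hT.iterate n))) (fun p => |h p|)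
  have e2 := orn_sum (μ.prod μ) (fun z : X × X => (P z.1, P z.2))
    ((hP.comp measurable_fst).prodMk (hP.comp measurable_snd)) (fun p => |h p|)
  rw [e1, e2, Finset.mul_sum]
  have hδM : δ * M ≤ ε := by
    rw [hδ, div_mul_eq_mul_div, div_le_iff₀ (by positivity)]; nlinarith
  refine le_trans ?_ (add_le_add_right hδM _)
  rw [hM, Finset.mul_sum, ← Finset.sum_add_distrib]
  refine Finset.sum_le_sum fun p _ => ?_
  have s1 : (fun x => (P x, P (T^[n] x))) ⁻¹' {p} = P ⁻¹' {p.1} ∩ T^[n] ⁻¹' (P ⁻¹' {p.2}) := by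
    ext x; simp [Prod.ext_iff]
  have s2 : (fun z : X × X => (P z.1, P z.2)) ⁻¹' {p} = (P ⁻¹' {p.1}) ×ˢ (P ⁻¹' {p.2}) := by
    ext x; simp [Prod.ext_iff]
  rw [s1, s2, measureReal_prod_prod]
  have h3 := mul_le_mul_of_nonneg_right (hn p).le (abs_nonneg (h p))
  simp only [Measure.real]
  linarith

theorem orn_fwd {X : Type*} [MeasurableSpace X] (μ : Measure X) [IsProbabilityMeasure μ]
    (T : X → X) (hT : MeasurePreserving T μ μ) (hE : Ergodic (Prod.map T T) (μ.prod μ))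
    (θ : ℝ) (hθ0 : 0 < θ)
    (hθ : ∀ A B : Set X, MeasurableSet A → MeasurableSet B →
      Filter.limsup (fun n : ℕ => (μ (A ∩ T^[n] ⁻¹' B)).toReal) atTop
        ≤ θ * (μ A).toReal * (μ B).toReal)
    (A B : Set X) (hA : MeasurableSet A) (hB : MeasurableSet B) :
    Tendsto (fun n : ℕ => (μ (A ∩ T^[n] ⁻¹' B)).toReal) atTop
          (nhds ((μ A).toReal * (μ B).toReal)) := by
  classical
  rw [Metric.tendsto_nhds]
  intro ε hε
  obtain ⟨N, hN, hlt⟩ := orn_mean (μ.prod μ) _ hE (A ×ˢ B) (hA.prod hB) (ε / (2 * θ))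
    (by positivity)
  have hNpos : (0 : ℝ) < N := by exact_mod_cast hN
  rw [measureReal_prod_prod] at hlt
  set c := μ.real A * μ.real B with hc
  let P : X → (Fin N → Prop) × (Fin N → Prop) :=
    fun x => (fun k => T^[k] x ∈ A, fun k => T^[k] x ∈ B)
  have hP : Measurable P := by
    refine Measurable.prodMk (measurable_pi_lambda _ fun k => ?_)
      (measurable_pi_lambda _ fun k => ?_)
    · exact measurableSet_setOfPred.1 (hA.preimage (hT.measurable.iterate k))
    · exact measurableSet_setOfPred.1 (hB.preimage (hT.measurable.iterate k))
  let h : ((Fin N → Prop) × (Fin N → Prop)) × ((Fin N → Prop) × (Fin N → Prop)) → ℝ :=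
    fun p => (N : ℝ)⁻¹ * (∑ k : Fin N, if p.1.1 k ∧ p.2.2 k then (1 : ℝ) else 0) - c
  have hh : ∀ x y, h (P x, P y) = (N : ℝ)⁻¹ * (∑ k ∈ Finset.range N,
      (A ×ˢ B).indicator (fun _ => (1 : ℝ)) ((Prod.map T T)^[k] (x, y))) - c := by
    intro x y
    simp only [h, P, Finset.sum_range, Prod.map_iterate, Set.indicator, Prod.map, Set.mem_prod]
  have hlt' : ∫ z, |h (P z.1, P z.2)| ∂(μ.prod μ) < ε / (2 * θ) := by
    simpa only [hh] using hlt
  filter_upwards [orn_bound μ T hT.measurable P hP h θ hθ (ε / 2) (by positivity)] with n hn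
  have hTk : ∀ k, ∫ x, (A ×ˢ B).indicator (fun _ => (1 : ℝ)) (T^[k] x, T^[k] (T^[n] x)) ∂μ
      = (μ (A ∩ T^[n] ⁻¹' B)).toReal := by
    intro k
    have hms : MeasurableSet (A ∩ T^[n] ⁻¹' B) := hA.inter (hB.preimage (hT.measurable.iterate n))
    have h1 : (fun x => (A ×ˢ B).indicator (fun _ => (1 : ℝ)) (T^[k] x, T^[k] (T^[n] x)))
        = (T^[k] ⁻¹' (A ∩ T^[n] ⁻¹' B)).indicator (fun _ => (1 : ℝ)) := by
      ext x
      have : T^[k] (T^[n] x) = T^[n] (T^[k] x) := by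
        rw [← Function.iterate_add_apply, ← Function.iterate_add_apply, add_comm]
      simp [Set.indicator, this]
    rw [h1, integral_indicator_const _ (hms.preimage (hT.iterate k).measurable),
      (hT.iterate k).measureReal_preimage hms.nullMeasurableSet]
    simp [Measure.real]
  have hint : ∀ k, Integrable
      (fun x => (A ×ˢ B).indicator (fun _ => (1 : ℝ)) (T^[k] x, T^[k] (T^[n] x))) μ := by
    intro k
    refine Integrable.of_bound (C := 1) ?_ (ae_of_all _ fun x => ?_)
    · refine Measurable.aestronglyMeasurable ?_
      exact (measurable_const.indicator (hA.prod hB)).comp ((hT.measurable.iterate k).prodMk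
        ((hT.measurable.iterate k).comp (hT.measurable.iterate n)))
    · simp only [Set.indicator]; split_ifs <;> simp
  have hval : ∫ x, h (P x, P (T^[n] x)) ∂μ = (μ (A ∩ T^[n] ⁻¹' B)).toReal - c := by
    simp only [hh, Prod.map_iterate, Prod.map]
    rw [integral_sub ((integrable_finsetSum _ fun k _ => hint k).const_mul _)
      (integrable_const c), integral_const_mul, integral_finsetSum _ fun k _ => hint k]
    simp only [hTk, Finset.sum_const, Finset.card_range, nsmul_eq_mul, integral_const,
      probReal_univ, one_smul]
    field_simp
  have hd : θ * ∫ z, |h (P z.1, P z.2)| ∂(μ.prod μ) < ε / 2 := by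
    rw [lt_div_iff₀ (by positivity)] at hlt'
    linarith
  rw [Real.dist_eq]
  change |(μ (A ∩ T^[n] ⁻¹' B)).toReal - c| < ε
  rw [← hval]
  exact (abs_integral_le_integral_abs.trans hn).trans_lt (by linarith)

theorem orn_mix {Z : Type*} [MeasurableSpace Z] (ν : Measure Z) [IsProbabilityMeasure ν]
    (τ : Z → Z) (hτ : MeasurePreserving τ ν ν) (C : Set (Set Z))
    (hC : ‹MeasurableSpace Z› = MeasurableSpace.generateFrom C) (hpi : IsPiSystem C) (R : Set Z)
    (hR : MeasurableSet R)
    (h : ∀ D ∈ C, Tendsto (fun n : ℕ => ν.real (R ∩ τ^[n] ⁻¹' D)) atTop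
      (nhds (ν.real R * ν.real D))) (D : Set Z) (hD : MeasurableSet D) :
    Tendsto (fun n : ℕ => ν.real (R ∩ τ^[n] ⁻¹' D)) atTop (nhds (ν.real R * ν.real D)) := by
  induction D, hD using MeasurableSpace.induction_on_inter hC hpi with
  | empty => simp
  | basic t ht => exact h t ht
  | compl t htm ih =>
    have e : ∀ n : ℕ, ν.real (R ∩ τ^[n] ⁻¹' tᶜ) = ν.real R - ν.real (R ∩ τ^[n] ⁻¹' t) := by
      intro n
      have := measureReal_inter_add_sdiff (μ := ν) (s := R)
        (htm.preimage (hτ.measurable.iterate n))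
      rw [← this, Set.preimage_compl, Set.sdiff_eq]; ring
    simp only [e]
    rw [probReal_compl_eq_one_sub htm, mul_sub, mul_one]
    exact tendsto_const_nhds.sub ih
  | iUnion f hd hfm ih =>
    have hs : ∀ S : Set Z, MeasurableSet S → ∀ g : ℕ → Set Z, Pairwise (Function.onFun Disjoint g) →
        (∀ i, MeasurableSet (g i)) → HasSum (fun i => ν.real (S ∩ g i)) (ν.real (S ∩ ⋃ i, g i)) := by
      intro S hS g hg hgm
      rw [Set.inter_iUnion]
      have h1 : ν (⋃ i, S ∩ g i) = ∑' i, ν (S ∩ g i) := measure_iUnion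
        (fun i j hij => (hg hij).mono Set.inter_subset_right Set.inter_subset_right)
        (fun i => hS.inter (hgm i))
      have h2 : ∑' i, ν (S ∩ g i) ≠ ⊤ := h1 ▸ measure_ne_top _ _
      have h3 := ENNReal.hasSum_toReal h2
      rw [← ENNReal.tsum_toReal_eq (fun i => measure_ne_top _ _), ← h1] at h3
      exact h3
    have hsu := hs Set.univ MeasurableSet.univ f hd hfm
    simp only [Set.univ_inter] at hsu
    have e : ∀ n : ℕ, ν.real (R ∩ τ^[n] ⁻¹' ⋃ i, f i) = ∑' i, ν.real (R ∩ τ^[n] ⁻¹' f i) := by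
      intro n
      rw [Set.preimage_iUnion]
      exact (hs R hR _ (fun i j hij => (hd hij).preimage _)
        (fun i => (hfm i).preimage (hτ.measurable.iterate n))).tsum_eq.symm
    simp only [e]
    rw [← hsu.tsum_eq, ← tsum_mul_left]
    refine tendsto_tsum_of_dominated_convergence hsu.summable ih (Eventually.of_forall fun n i => ?_)
    rw [Real.norm_of_nonneg measureReal_nonneg,
      ← (hτ.iterate n).measureReal_preimage (hfm i).nullMeasurableSet]
    exact measureReal_mono Set.inter_subset_right

theorem orn_bwd {X : Type*} [MeasurableSpace X] (μ : Measure X) [IsProbabilityMeasure μ]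
    (T : X → X) (hT : MeasurePreserving T μ μ)
    (h : ∀ A B : Set X, MeasurableSet A → MeasurableSet B →
        Tendsto (fun n : ℕ => (μ (A ∩ T^[n] ⁻¹' B)).toReal) atTop
          (nhds ((μ A).toReal * (μ B).toReal))) :
    Ergodic (Prod.map T T) (μ.prod μ) := by
  have hm : MeasurePreserving (Prod.map T T) (μ.prod μ) (μ.prod μ) := hT.prod hT
  refine ⟨hm, ⟨fun E hE hinv => ?_⟩⟩
  set ν := μ.prod μ with hν
  have hinvn : ∀ n : ℕ, (Prod.map T T)^[n] ⁻¹' E = E := by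
    intro n
    rw [Set.preimage_iterate_eq]
    exact Function.iterate_fixed hinv n
  have hrect : ∀ R ∈ Set.image2 (· ×ˢ ·) {s : Set X | MeasurableSet s} {t : Set X | MeasurableSet t},
      ν.real (R ∩ E) = ν.real R * ν.real E := by
    rintro R ⟨A, hA, B, hB, rfl⟩
    have hA' : MeasurableSet A := hA
    have hB' : MeasurableSet B := hB
    have := orn_mix ν _ hm _ generateFrom_prod.symm isPiSystem_prod (A ×ˢ B) (hA'.prod hB') ?_ E hE
    · simp only [hinvn] at this
      exact tendsto_nhds_unique tendsto_const_nhds this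
    · rintro D ⟨A', hA2, B', hB2, rfl⟩
      have e : ∀ n : ℕ, ν.real (A ×ˢ B ∩ (Prod.map T T)^[n] ⁻¹' A' ×ˢ B')
          = μ.real (A ∩ T^[n] ⁻¹' A') * μ.real (B ∩ T^[n] ⁻¹' B') := by
        intro n
        have e0 : (Prod.map T T)^[n] ⁻¹' A' ×ˢ B' = (T^[n] ⁻¹' A') ×ˢ (T^[n] ⁻¹' B') := by
          rw [Prod.map_iterate]; rfl
        rw [e0, Set.prod_inter_prod, hν, measureReal_prod_prod]
      simp only [e]
      rw [hν, measureReal_prod_prod, measureReal_prod_prod, mul_mul_mul_comm]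
      exact (h A A' hA hA2).mul (h B B' hB hB2)
  have h2 := orn_mix ν id (MeasurePreserving.id ν) _ generateFrom_prod.symm isPiSystem_prod E hE
    (by
      intro D hD
      have := hrect D hD
      simp only [Function.iterate_id, Set.preimage_id]
      rw [Set.inter_comm, this, mul_comm]
      exact tendsto_const_nhds) E hE
  simp only [Function.iterate_id, Set.preimage_id, Set.inter_self] at h2
  have h3 := tendsto_nhds_unique tendsto_const_nhds h2
  rw [eventuallyConst_set']
  have h4 : ν.real E = 0 ∨ ν.real E = 1 := by
    have : ν.real E * (ν.real E - 1) = 0 := by linarith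
    rcases mul_eq_zero.1 this with h | h
    · exact Or.inl h
    · exact Or.inr (by linarith)
  rcases h4 with h4 | h4
  · left
    rw [measureReal_eq_zero_iff] at h4
    exact ae_eq_empty.2 h4
  · right
    have h5 : ν.real Eᶜ = 0 := by rw [probReal_compl_eq_one_sub hE]; linarith
    rw [measureReal_eq_zero_iff] at h5
    exact ae_eq_univ.2 h5

/-- Ornstein's criterion for mixing: `T` is strongly mixing if and only if `T` is weakly
mixing and there is `θ > 0` with `limsup_n μ(A ∩ T^{-n}B) ≤ θ μ(A) μ(B)` for all `A, B`. -/
theorem ornstein_criterion_for_mixing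
    {X : Type*} [MeasurableSpace X]
    (μ : Measure X) [IsProbabilityMeasure μ]
    (T : X ≃ᵐ X) (hT : MeasurePreserving T μ μ) :
    (∀ A B : Set X, MeasurableSet A → MeasurableSet B →
        Tendsto (fun n : ℕ => (μ (A ∩ T^[n] ⁻¹' B)).toReal) atTop
          (nhds ((μ A).toReal * (μ B).toReal)))
      ↔ (Ergodic (Prod.map T T) (μ.prod μ) ∧
          ∃ θ : ℝ, 0 < θ ∧
            ∀ A B : Set X, MeasurableSet A → MeasurableSet B →
              Filter.limsup (fun n : ℕ => (μ (A ∩ T^[n] ⁻¹' B)).toReal) atTop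
                ≤ θ * (μ A).toReal * (μ B).toReal) := by
  constructor
  · intro h
    refine ⟨orn_bwd μ T hT h, 1, one_pos, fun A B hA hB => ?_⟩
    rw [(h A B hA hB).limsup_eq, one_mul]
  · rintro ⟨hE, θ, hθ0, hθ⟩ A B hA hB
    exact orn_fwd μ T hT hE θ hθ0 hθ A B hA hB
end

section
/- Let T and S be invertible measure-preserving transformations of standard Borel probability spaces (X, 𝒜, μ) and (Y, ℬ, ν). Suppose there exists a joining λ of T and S such that for every B ∈ ℬ there exists A ∈ 𝒜 with λ((X × B) Δ (A × Y)) = 0. Then S is a factor of T: there exists a measurable map π : X → Y such that π∗μ = ν, π ∘ T = S ∘ π μ-almost everywhere, and λ is the pushforward of μ under the map x ↦ (x, π(x)) (in particular λ is supported on the graph of π). -/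
open MeasureTheory Set

/-- If there is a joining `λ` of `T` and `S` under which the σ-algebra of the second
coordinate is contained (mod `λ`) in that of the first, then `S` is a factor of `T`,
via a homomorphism `π` whose graph carries `λ`. -/
theorem factor_of_joining
    {X Y : Type*} [MeasurableSpace X] [StandardBorelSpace X]
    [MeasurableSpace Y] [StandardBorelSpace Y]
    (μ : Measure X) (ν : Measure Y) [IsProbabilityMeasure μ] [IsProbabilityMeasure ν]
    (T : X ≃ᵐ X) (S : Y ≃ᵐ Y)
    (hT : MeasurePreserving T μ μ) (hS : MeasurePreserving S ν ν)
    (lam : Measure (X × Y))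
    (h1 : lam.map Prod.fst = μ)
    (h2 : lam.map Prod.snd = ν)
    (hinv : MeasurePreserving (Prod.map T S) lam lam)
    (hsub : ∀ B : Set Y, MeasurableSet B → ∃ A : Set X, MeasurableSet A ∧
      lam (symmDiff (univ ×ˢ B) (A ×ˢ univ)) = 0) :
    ∃ π : X → Y, Measurable π ∧ μ.map π = ν ∧
      (∀ᵐ x ∂μ, π (T x) = S (π x)) ∧
      lam = μ.map (fun x => (x, π x)) := by
  have hne : Nonempty Y := by
    by_contra hY
    rw [not_nonempty_iff] at hY
    have h := measure_univ (μ := ν)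
    rw [Set.univ_eq_empty_iff.mpr hY, measure_empty] at h
    exact zero_ne_one h
  let g : Y → ℕ → Bool := MeasurableSpace.mapNatBool Y
  have hg : Measurable g := MeasurableSpace.measurable_mapNatBool Y
  have hge : MeasurableEmbedding g :=
    hg.measurableEmbedding (MeasurableSpace.injective_mapNatBool Y)
  have hB : ∀ n, MeasurableSet {y : Y | g y n = true} := fun n =>
    ((measurable_pi_apply n).comp hg) (measurableSet_singleton true)
  choose A hA hA0 using fun n => hsub _ (hB n)
  classical
  let f : X → ℕ → Bool := fun x n => decide (x ∈ A n)
  have hf : Measurable f := by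
    refine measurable_pi_lambda _ fun n => measurable_to_bool ?_
    have : (fun x => f x n) ⁻¹' {true} = A n := by
      ext x
      simp [f]
    rw [this]
    exact hA n
  obtain ⟨k, hk, hkg⟩ := hge.exists_measurable_extend measurable_id (fun _ => hne)
  have hπ : Measurable (k ∘ f) := hk.comp hf
  have hae : ∀ᵐ p ∂lam, (k ∘ f) p.1 = p.2 := by
    have h : ∀ᵐ p ∂lam, ∀ n, p ∉ symmDiff (univ ×ˢ {y : Y | g y n = true}) (A n ×ˢ univ) :=
      ae_all_iff.mpr fun n => measure_eq_zero_iff_ae_notMem.mp (hA0 n)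
    filter_upwards [h] with p hp
    have hfg : f p.1 = g p.2 := by
      funext n
      have := hp n
      simp only [Set.mem_symmDiff, Set.mem_prod, Set.mem_univ, Set.mem_ofPred_eq, true_and,
        and_true] at this
      by_cases hx : p.1 ∈ A n <;> cases hy : g p.2 n <;> simp_all [f]
    have := congrFun hkg p.2
    simpa [hfg] using this
  have hm : Measurable (fun x => (x, (k ∘ f) x)) := measurable_id.prodMk hπ
  have hlam : lam = μ.map (fun x => (x, (k ∘ f) x)) := by
    rw [← h1, Measure.map_map hm measurable_fst]
    conv_lhs => rw [← Measure.map_id (μ := lam)]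
    refine Measure.map_congr ?_
    filter_upwards [hae] with p hp
    exact Prod.ext rfl hp.symm
  refine ⟨k ∘ f, hπ, ?_, ?_, hlam⟩
  · rw [← h1, ← h2, Measure.map_map hπ measurable_fst]
    exact Measure.map_congr hae
  · have h3 := hinv.quasiMeasurePreserving.ae hae
    have h4 : ∀ᵐ p ∂lam, (k ∘ f) (T p.1) = S ((k ∘ f) p.1) := by
      filter_upwards [hae, h3] with p hp hp3
      rw [hp]
      exact hp3
    rw [hlam] at h4
    exact ae_of_ae_map hm.aemeasurable h4
end

section
/- Let T and S be invertible measure-preserving transformations of standard Borel probability spaces (X, 𝒜, μ) and (Y, ℬ, ν). Then T and S are isomorphic (there exist measurable sets X₀ ⊆ X and Y₀ ⊆ Y with μ(X₀) = ν(Y₀) = 1, invariant under T and S respectively, and a bimeasurable bijection φ : X₀ → Y₀ with φ∗μ = ν and φ ∘ T = S ∘ φ on X₀) if and only if there exists a joining λ of T and S such that both: for every B ∈ ℬ there exists A ∈ 𝒜 with λ((X × B) Δ (A × Y)) = 0, and for every A ∈ 𝒜 there exists B ∈ ℬ with λ((A × Y) Δ (X × B)) = 0. Moreover, in this case such a λ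 is supported on the graph of an isomorphism. -/
open MeasureTheory Set

/-- `φ` realizes an isomorphism between the systems `(X, μ, T)` and `(Y, ν, S)`:
there are invariant full-measure sets `X₀, Y₀` on which `φ` is a bimeasurable
measure-preserving bijection intertwining `T` and `S`. -/
def IsIsomorphismVia {X Y : Type*} [MeasurableSpace X] [MeasurableSpace Y]
    (μ : Measure X) (ν : Measure Y) (T : X ≃ᵐ X) (S : Y ≃ᵐ Y) (φ : X → Y) : Prop :=
  ∃ (X₀ : Set X) (Y₀ : Set Y) (ψ : Y → X),
    MeasurableSet X₀ ∧ MeasurableSet Y₀ ∧ μ X₀ = 1 ∧ ν Y₀ = 1 ∧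
    T '' X₀ = X₀ ∧ S '' Y₀ = Y₀ ∧
    Measurable φ ∧ Measurable ψ ∧
    Set.MapsTo φ X₀ Y₀ ∧ Set.MapsTo ψ Y₀ X₀ ∧
    (∀ x ∈ X₀, ψ (φ x) = x) ∧ (∀ y ∈ Y₀, φ (ψ y) = y) ∧
    μ.map φ = ν ∧ (∀ x ∈ X₀, φ (T x) = S (φ x))

theorem aux_factor {X Y : Type*} [MeasurableSpace X]
    [MeasurableSpace Y] [StandardBorelSpace Y] [Nonempty Y]
    {Z : Type*} [MeasurableSpace Z] (lam : Measure Z) (p : Z → X) (q : Z → Y)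
    (h : ∀ B : Set Y, MeasurableSet B → ∃ A : Set X, MeasurableSet A ∧
          ∀ᵐ z ∂lam, (q z ∈ B ↔ p z ∈ A)) :
    ∃ φ : X → Y, Measurable φ ∧ ∀ᵐ z ∂lam, q z = φ (p z) := by
  classical
  have hm := MeasurableSpace.measurable_mapNatBool Y
  have hi := MeasurableSpace.injective_mapNatBool Y
  have he : MeasurableEmbedding (MeasurableSpace.mapNatBool Y) := hm.measurableEmbedding hi
  have hB : ∀ n : ℕ, MeasurableSet {y : Y | MeasurableSpace.mapNatBool Y y n = true} := by
    intro n
    exact ((measurable_pi_apply n).comp hm) (MeasurableSet.singleton true)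
  choose A hA hA' using fun n => h _ (hB n)
  obtain ⟨g, hg, hgq⟩ := he.exists_measurable_extend (g := fun y : Y => y) measurable_id
    (fun _ => inferInstance)
  refine ⟨fun x => g (fun n => decide (x ∈ A n)), hg.comp ?_, ?_⟩
  · refine measurable_pi_lambda _ fun n => ?_
    exact measurable_to_bool (by
      have : (fun x => decide (x ∈ A n)) ⁻¹' {true} = A n := by ext; simp
      rw [this]; exact hA n)
  · filter_upwards [ae_all_iff.2 hA'] with z hz
    have : (fun n => decide (p z ∈ A n)) = MeasurableSpace.mapNatBool Y (q z) := by
      funext n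
      have : MeasurableSpace.mapNatBool Y (q z) n = true ↔ p z ∈ A n := hz n
      rw [Bool.eq_iff_iff, this]
      simp
    rw [this]
    exact (congrFun hgq (q z)).symm

theorem aux_invariant {X : Type*} [MeasurableSpace X] (μ : Measure X) (T : X ≃ᵐ X)
    (hT : MeasurePreserving T μ μ) (P : X → Prop) (hP : ∀ᵐ x ∂μ, P x) :
    ∃ X₀ : Set X, MeasurableSet X₀ ∧ (∀ᵐ x ∂μ, x ∈ X₀) ∧ T '' X₀ = X₀ ∧ ∀ x ∈ X₀, P x := by
  obtain ⟨G, hG, hGm, hGP⟩ := hP.exists_measurable_mem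
  have hT' : MeasurePreserving T.symm μ μ := hT.symm T
  have h1 : ∀ n : ℕ, MeasurePreserving (T^[n]) μ μ := fun n => hT.iterate n
  have h2 : ∀ n : ℕ, MeasurePreserving (T.symm^[n]) μ μ := fun n => hT'.iterate n
  set X₀ : Set X := (⋂ n : ℕ, T^[n] ⁻¹' G) ∩ ⋂ n : ℕ, T.symm^[n] ⁻¹' G with hX
  have mem : ∀ x, x ∈ X₀ ↔ (∀ n : ℕ, T^[n] x ∈ G) ∧ (∀ n : ℕ, T.symm^[n] x ∈ G) := by
    intro x; simp [hX]
  refine ⟨X₀, ?_, ?_, ?_, ?_⟩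
  · exact (MeasurableSet.iInter fun n => (h1 n).measurable hGm).inter
      (MeasurableSet.iInter fun n => (h2 n).measurable hGm)
  · have a1 : ∀ᵐ x ∂μ, ∀ n : ℕ, T^[n] x ∈ G :=
      ae_all_iff.2 fun n => (h1 n).quasiMeasurePreserving.ae hG
    have a2 : ∀ᵐ x ∂μ, ∀ n : ℕ, T.symm^[n] x ∈ G :=
      ae_all_iff.2 fun n => (h2 n).quasiMeasurePreserving.ae hG
    filter_upwards [a1, a2] with x b1 b2 using (mem x).2 ⟨b1, b2⟩
  · apply Set.Subset.antisymm
    · rintro _ ⟨x, hx, rfl⟩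
      rw [mem] at hx ⊢
      refine ⟨fun n => hx.1 (n + 1), fun n => ?_⟩
      cases n with
      | zero => exact hx.1 1
      | succ n => simpa [Function.iterate_succ_apply] using hx.2 n
    · intro x hx
      refine ⟨T.symm x, ?_, by simp⟩
      rw [mem] at hx ⊢
      refine ⟨fun n => ?_, fun n => hx.2 (n + 1)⟩
      cases n with
      | zero => exact hx.2 1
      | succ n => simpa [Function.iterate_succ_apply] using hx.1 n
  · intro x hx
    exact hGP x (((mem x).1 hx).1 0)

theorem aux_main
    {X Y : Type*} [MeasurableSpace X] [StandardBorelSpace X]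
    [MeasurableSpace Y] [StandardBorelSpace Y]
    (μ : Measure X) (ν : Measure Y) [IsProbabilityMeasure μ] [IsProbabilityMeasure ν]
    (T : X ≃ᵐ X) (S : Y ≃ᵐ Y)
    (hT : MeasurePreserving T μ μ)
    (lam : Measure (X × Y))
    (h1 : lam.map Prod.fst = μ) (h2 : lam.map Prod.snd = ν)
    (hl : MeasurePreserving (Prod.map T S) lam lam)
    (hB : ∀ B : Set Y, MeasurableSet B → ∃ A : Set X, MeasurableSet A ∧
        lam (symmDiff (univ ×ˢ B) (A ×ˢ univ)) = 0)
    (hA : ∀ A : Set X, MeasurableSet A → ∃ B : Set Y, MeasurableSet B ∧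
        lam (symmDiff (A ×ˢ univ) (univ ×ˢ B)) = 0) :
      ∃ φ : X → Y, IsIsomorphismVia μ ν T S φ ∧
        lam {p : X × Y | p.2 = φ p.1} = 1 := by
  have : Nonempty X := nonempty_of_isProbabilityMeasure μ
  have : Nonempty Y := nonempty_of_isProbabilityMeasure ν
  have hlp : lam univ = 1 := by
    have := measure_univ (μ := μ)
    rwa [← h1, Measure.map_apply measurable_fst MeasurableSet.univ, preimage_univ] at this
  obtain ⟨φ, hφ, hφ'⟩ := aux_factor lam Prod.fst Prod.snd (by
    intro B hBm
    obtain ⟨A, hAm, h0⟩ := hB B hBm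
    refine ⟨A, hAm, ?_⟩
    filter_upwards [(measure_symmDiff_eq_zero_iff.1 h0).mem_iff] with z hz
    simpa using hz)
  obtain ⟨ψ, hψ, hψ'⟩ := aux_factor lam Prod.snd Prod.fst (by
    intro A hAm
    obtain ⟨B, hBm, h0⟩ := hA A hAm
    refine ⟨B, hBm, ?_⟩
    filter_upwards [(measure_symmDiff_eq_zero_iff.1 h0).mem_iff] with z hz
    simpa using hz)
  have q1 : MeasurePreserving Prod.fst lam μ := ⟨measurable_fst, h1⟩
  have hmap : μ.map φ = ν := by
    rw [← h1, Measure.map_map hφ measurable_fst, ← h2]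
    refine Measure.map_congr ?_
    filter_upwards [hφ'] with z hz using hz.symm
  have e1 : ∀ᵐ z ∂lam, ψ (φ z.1) = z.1 ∧ φ (T z.1) = S (φ z.1) := by
    filter_upwards [hφ', hψ', hl.quasiMeasurePreserving.ae hφ'] with z a b c
    refine ⟨by rw [← a, ← b], ?_⟩
    rw [← a]; exact c.symm
  have e2 : ∀ᵐ x ∂μ, ψ (φ x) = x ∧ φ (T x) = S (φ x) := by
    rw [← h1]
    refine (ae_map_iff measurable_fst.aemeasurable ?_).2 e1
    exact (measurableSet_eq_fun (hψ.comp hφ) measurable_id).inter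
      (measurableSet_eq_fun (hφ.comp T.measurable) (S.measurable.comp hφ))
  obtain ⟨X₀, hm, hae, hinv, hP⟩ := aux_invariant μ T hT _ e2
  have hX1 : μ X₀ = 1 := by
    exact (mem_ae_iff_prob_eq_one hm).1 hae
  have hinj : InjOn φ X₀ := fun a ha b hb hab => by
    rw [← (hP a ha).1, hab, (hP b hb).1]
  have hYm : MeasurableSet (φ '' X₀) := hm.image_of_measurable_injOn hφ hinj
  refine ⟨φ, ⟨X₀, φ '' X₀, ψ, hm, hYm, hX1, ?_, hinv, ?_, hφ, hψ, mapsTo_image _ _, ?_,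
    fun x hx => (hP x hx).1, ?_, hmap, fun x hx => (hP x hx).2⟩, ?_⟩
  · apply le_antisymm prob_le_one
    rw [← hmap, Measure.map_apply hφ hYm, ← hX1]
    exact measure_mono (subset_preimage_image _ _)
  · have : S '' (φ '' X₀) = φ '' (T '' X₀) := by
      rw [image_image, image_image]
      exact image_congr fun x hx => (hP x hx).2.symm
    rw [this, hinv]
  · rintro _ ⟨x, hx, rfl⟩
    rw [(hP x hx).1]; exact hx
  · rintro _ ⟨x, hx, rfl⟩
    rw [(hP x hx).1]
  · rw [measure_congr (Filter.eventuallyEq_univ.2 hφ'), hlp]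

/-- Two systems are isomorphic if and only if there is a joining identifying (mod 0) the
σ-algebras of the two coordinates; moreover such a joining is supported on the graph of
an isomorphism. -/
theorem isomorphic_iff_joining_identifying
    {X Y : Type*} [MeasurableSpace X] [StandardBorelSpace X]
    [MeasurableSpace Y] [StandardBorelSpace Y]
    (μ : Measure X) (ν : Measure Y) [IsProbabilityMeasure μ] [IsProbabilityMeasure ν]
    (T : X ≃ᵐ X) (S : Y ≃ᵐ Y)
    (hT : MeasurePreserving T μ μ) (hS : MeasurePreserving S ν ν) :
    ((∃ φ : X → Y, IsIsomorphismVia μ ν T S φ) ↔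
      (∃ lam : Measure (X × Y),
        lam.map Prod.fst = μ ∧ lam.map Prod.snd = ν ∧
        MeasurePreserving (Prod.map T S) lam lam ∧
        (∀ B : Set Y, MeasurableSet B → ∃ A : Set X, MeasurableSet A ∧
          lam (symmDiff (univ ×ˢ B) (A ×ˢ univ)) = 0) ∧
        (∀ A : Set X, MeasurableSet A → ∃ B : Set Y, MeasurableSet B ∧
          lam (symmDiff (A ×ˢ univ) (univ ×ˢ B)) = 0)))
    ∧
    (∀ lam : Measure (X × Y),
      lam.map Prod.fst = μ → lam.map Prod.snd = ν →
      MeasurePreserving (Prod.map T S) lam lam →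
      (∀ B : Set Y, MeasurableSet B → ∃ A : Set X, MeasurableSet A ∧
        lam (symmDiff (univ ×ˢ B) (A ×ˢ univ)) = 0) →
      (∀ A : Set X, MeasurableSet A → ∃ B : Set Y, MeasurableSet B ∧
        lam (symmDiff (A ×ˢ univ) (univ ×ˢ B)) = 0) →
      ∃ φ : X → Y, IsIsomorphismVia μ ν T S φ ∧
        lam {p : X × Y | p.2 = φ p.1} = 1) := by
  refine ⟨⟨?_, ?_⟩, ?_⟩
  · rintro ⟨φ, X₀, Y₀, ψ, hX, hY, hX1, hY1, hTX, hSY, hφ, hψ, m1, m2, i1, i2, hmap, hc⟩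
    have hae : ∀ᵐ x ∂μ, x ∈ X₀ := (mem_ae_iff_prob_eq_one hX).2 hX1
    have hg : Measurable (fun x => (x, φ x)) := measurable_id.prodMk hφ
    refine ⟨μ.map (fun x => (x, φ x)), ?_, ?_, ⟨T.measurable.prodMap S.measurable, ?_⟩, ?_, ?_⟩
    · rw [Measure.map_map measurable_fst hg]
      exact Measure.map_id
    · rw [Measure.map_map measurable_snd hg]
      exact hmap
    · rw [Measure.map_map (T.measurable.prodMap S.measurable) hg]
      conv_rhs => rw [← hT.map_eq]
      rw [Measure.map_map hg T.measurable]
      refine Measure.map_congr ?_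
      filter_upwards [hae] with x hx
      simp [hc x hx]
    · intro B hB
      refine ⟨φ ⁻¹' B, hφ hB, ?_⟩
      rw [Measure.map_apply hg ((MeasurableSet.univ.prod hB).symmDiff
        ((hφ hB).prod MeasurableSet.univ))]
      convert measure_empty (μ := μ)
      ext x
      simp [Set.mem_symmDiff]
    · intro A hA
      refine ⟨ψ ⁻¹' A, hψ hA, ?_⟩
      rw [Measure.map_apply hg ((hA.prod MeasurableSet.univ).symmDiff
        (MeasurableSet.univ.prod (hψ hA)))]
      have : ∀ᵐ x ∂μ, x ∉ (fun x => (x, φ x)) ⁻¹'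
          (symmDiff (A ×ˢ univ) (univ ×ˢ (ψ ⁻¹' A))) := by
        filter_upwards [hae] with x hx
        simp [Set.mem_symmDiff, i1 x hx]
      exact measure_eq_zero_iff_ae_notMem.2 this
  · rintro ⟨lam, h1, h2, hl, hB, hA⟩
    obtain ⟨φ, h, -⟩ := aux_main μ ν T S hT lam h1 h2 hl hB hA
    exact ⟨φ, h⟩
  · intro lam h1 h2 hl hB hA
    exact aux_main μ ν T S hT lam h1 h2 hl hB hA
end

section
/- Halmos–von Neumann theorem (joining proof): Let T and S be invertible measure-preserving transformations of standard Borel probability spaces (X, 𝒜, μ) and (Y, ℬ, ν). Suppose T is ergodic and has discrete spectrum, and suppose S is spectrally isomorphic to T, i.e., there exists a unitary operator U : L²(ν) → L²(μ) such that U(g ∘ S) = (U g) ∘ T for all g ∈ L²(ν). Then T and S are isomorphic: there exist measurable sets X₀ ⊆ X, Y₀ ⊆ Y of full measure, invariant under T and S respectively, and a bimeasurable measure-preserving bijection φ : X₀ → Y₀ with φ ∘ T = S ∘ φ. -/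
open MeasureTheory Set

noncomputable instance hvnMeas : MeasurableSpace Circle := borel Circle
instance hvnBorel : BorelSpace Circle := ⟨rfl⟩
instance hvnSC : SecondCountableTopology Circle := inferInstance
instance hvnPolish (L : Type*) [Countable L] : PolishSpace (L → Circle) := by
  infer_instance

/-- rotation -/
noncomputable def hvnRot (L : Subgroup Circle) (z : L → Circle) : L → Circle := fun l => l * z l

lemma hvnRot_inj (L : Subgroup Circle) : Function.Injective (hvnRot L) := by
  intro z w h
  funext l
  have := congrFun h l
  simpa [hvnRot] using this

lemma hvnRot_meas (L : Subgroup Circle) : Measurable (hvnRot L) := by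
  unfold hvnRot
  fun_prop

open Classical in
lemma hvn_unique_aux (L : Subgroup Circle) [Countable L] (P : Measure (L → Circle))
    [IsProbabilityMeasure P]
    (hP : P.map (hvnRot L) = P) (hPm : ∀ᵐ z ∂P, ∀ l m, z (l * m) = z l * z m) (l : L) :
    ∫ z, (z l : ℂ) ∂P = if l = 1 then 1 else 0 := by
  split_ifs with h
  · subst h
    have : ∀ᵐ z ∂P, (z 1 : ℂ) = 1 := by
      filter_upwards [hPm] with z hz
      have := hz 1 1
      simp at this
      simp [this]
    rw [integral_congr_ae this]
    simp
  · have h1 : ∫ z, (z l : ℂ) ∂P = (l : Circle) * ∫ z, (z l : ℂ) ∂P := by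
      conv_lhs => rw [← hP]
      rw [integral_map (hvnRot_meas L).aemeasurable (by
        apply Measurable.aestronglyMeasurable; fun_prop)]
      simp [hvnRot, integral_const_mul]
    have h2 : (1 - ((l : Circle) : ℂ)) * ∫ z, (z l : ℂ) ∂P = 0 := by linear_combination h1
    rcases mul_eq_zero.1 h2 with h3 | h3
    · exfalso
      apply h
      ext
      simp only [OneMemClass.coe_one, Circle.coe_one]
      linear_combination -h3
    · exact h3

/-- coordinate -/
noncomputable def hvnCoord (L : Subgroup Circle) (l : L) :
    BoundedContinuousFunction (L → Circle) ℂ :=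
  BoundedContinuousFunction.ofNormedAddCommGroup (fun z => (z l : ℂ)) (by fun_prop) 1
    (fun z => (Circle.norm_coe (z l)).le)

lemma hvn_unique (L : Subgroup Circle) [Countable L] (P Q : Measure (L → Circle))
    [IsProbabilityMeasure P] [IsProbabilityMeasure Q]
    (hP : P.map (hvnRot L) = P) (hPm : ∀ᵐ z ∂P, ∀ l m, z (l * m) = z l * z m)
    (hQ : Q.map (hvnRot L) = Q) (hQm : ∀ᵐ z ∂Q, ∀ l m, z (l * m) = z l * z m) :
    P = Q := by
  have key : ∀ p ∈ Submonoid.closure (Set.range (hvnCoord L) ∪ star (Set.range (hvnCoord L))),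
      ∃ l : L, ∀ z : L → Circle, (∀ l m, z (l * m) = z l * z m) → p z = z l := by
    intro p hp
    induction hp using Submonoid.closure_induction with
    | mem x hx =>
      rcases hx with ⟨l, rfl⟩ | ⟨l, hl⟩
      · exact ⟨l, fun z _ => rfl⟩
      · refine ⟨l⁻¹, fun z hz => ?_⟩
        have h1 : z 1 = 1 := by
          have := hz 1 1
          simpa using this
        have h2 : z l⁻¹ = (z l)⁻¹ := by
          have := hz l⁻¹ l
          rw [inv_mul_cancel, h1] at this
          exact eq_inv_of_mul_eq_one_left this.symm
        rw [h2, Circle.coe_inv_eq_conj]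
        have : x = star (hvnCoord L l) := by rw [hl, star_star]
        rw [this]
        rfl
    | one => 
      refine ⟨1, fun z hz => ?_⟩
      have h1 : z 1 = 1 := by
          have := hz 1 1
          simpa using this
      simp [h1]
    | mul x y _ _ hx hy =>
      obtain ⟨l, hl⟩ := hx
      obtain ⟨m, hm⟩ := hy
      refine ⟨l * m, fun z hz => ?_⟩
      simp [hl z hz, hm z hz, hz l m]
  apply ext_of_forall_mem_subalgebra_integral_eq_of_polish (𝕜 := ℂ)
    (A := StarAlgebra.adjoin ℂ (Set.range (hvnCoord L)))
  · intro z w hzw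
    obtain ⟨l, hl⟩ := Function.ne_iff.1 hzw
    refine ⟨fun z => (z l : ℂ), ⟨BoundedContinuousFunction.toContinuousMapStarₐ ℂ (hvnCoord L l), 
      ?_, rfl⟩, ?_⟩
    · exact ⟨_, StarAlgebra.subset_adjoin _ _ ⟨l, rfl⟩, rfl⟩
    · exact fun h => hl (Circle.ext h)
  · intro g hg
    have hg' : g ∈ Submodule.span ℂ (Submonoid.closure (Set.range (hvnCoord L) ∪ 
        star (Set.range (hvnCoord L))) : Set (BoundedContinuousFunction (L → Circle) ℂ)) := by
      rw [← Algebra.adjoin_eq_span]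
      exact hg
    clear hg
    induction hg' using Submodule.span_induction with
    | mem x h => 
      obtain ⟨l, hl⟩ := key x h
      rw [integral_congr_ae (g := fun z => (z l : ℂ)), hvn_unique_aux L P hP hPm,
        integral_congr_ae (g := fun z => (z l : ℂ)), hvn_unique_aux L Q hQ hQm]
      · filter_upwards [hQm] with z hz using hl z hz
      · filter_upwards [hPm] with z hz using hl z hz
    | zero => simp
    | add x y hx hy ihx ihy => 
      simp only [BoundedContinuousFunction.coe_add, Pi.add_apply]
      rw [integral_add (x.integrable P) (y.integrable P),
        integral_add (x.integrable Q) (y.integrable Q), ihx, ihy]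
    | smul a x hx ih => 
      simp only [BoundedContinuousFunction.coe_smul]
      rw [integral_smul, integral_smul, ih]

lemma hvn_invariant_subset {X : Type*} [MeasurableSpace X] (μ : Measure X) (T : X ≃ᵐ X)
    (hT : MeasurePreserving T μ μ) (X₁ : Set X) (h1 : MeasurableSet X₁) (h2 : μ X₁ᶜ = 0) :
    ∃ X₂ ⊆ X₁, MeasurableSet X₂ ∧ μ X₂ᶜ = 0 ∧ ∀ x, T x ∈ X₂ ↔ x ∈ X₂ := by
  have hTs : MeasurePreserving T.symm μ μ := hT.symm T
  refine ⟨{x | ∀ n : ℤ, (T.toEquiv ^ n : Equiv.Perm X) x ∈ X₁}, fun x hx => by simpa using hx 0,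
    ?_, ?_, ?_⟩
  all_goals
    have hmp : ∀ n : ℤ, MeasurePreserving (T.toEquiv ^ n : Equiv.Perm X) μ μ := by
      intro n
      have hn : ∀ n : ℕ, MeasurePreserving (T.toEquiv ^ n : Equiv.Perm X) μ μ := by
        intro n
        rw [Equiv.Perm.coe_pow]
        exact hT.iterate n
      have hn' : ∀ n : ℕ, MeasurePreserving (T.toEquiv⁻¹ ^ n : Equiv.Perm X) μ μ := by
        intro n
        rw [Equiv.Perm.coe_pow]
        exact hTs.iterate n
      obtain ⟨m, rfl | rfl⟩ := n.eq_nat_or_neg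
      · simpa using hn m
      · simpa using hn' m
  · rw [ofPred_forall]
    exact MeasurableSet.iInter fun n => (hmp n).measurable h1
  · rw [ofPred_forall, compl_iInter]
    refine measure_iUnion_null fun n => ?_
    have := (hmp n).measure_preimage h1.compl.nullMeasurableSet
    rw [h2] at this
    exact this
  · intro x
    have hh : ∀ n : ℤ, (T.toEquiv ^ n : Equiv.Perm X) (T x) = (T.toEquiv ^ (n + 1) : Equiv.Perm X) x := by
      intro n
      rw [zpow_add_one]
      rfl
    constructor
    · intro h n
      have := h (n - 1)
      rw [hh] at this
      simpa using this
    · intro h n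
      rw [hh]
      exact h _

/-- data -/
structure HvnData {X : Type*} [MeasurableSpace X] (μ : Measure X) (T : X ≃ᵐ X)
    (L : Subgroup Circle) (F : X → L → Circle) : Prop where
  meas : Measurable F
  equi : ∀ᵐ x ∂μ, F (T x) = hvnRot L (F x)
  mult : ∀ᵐ x ∂μ, ∀ l m, F x (l * m) = F x l * F x m
  inj : ∃ X₁, MeasurableSet X₁ ∧ μ X₁ᶜ = 0 ∧ InjOn F X₁

lemma HvnData.good {X : Type*} [MeasurableSpace X] [StandardBorelSpace X] 
    {μ : Measure X} [IsProbabilityMeasure μ] {T : X ≃ᵐ X}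
    (hT : MeasurePreserving T μ μ)
    {L : Subgroup Circle} [Countable L] {F : X → L → Circle} (h : HvnData μ T L F) :
    ∃ (X₂ : Set X) (F' : (L → Circle) → X), MeasurableSet X₂ ∧ μ X₂ᶜ = 0 ∧ 
    (∀ x, T x ∈ X₂ ↔ x ∈ X₂) ∧ Measurable F' ∧ (∀ x ∈ X₂, F (T x) = hvnRot L (F x)) ∧ 
    (∀ x ∈ X₂, F' (F x) = x) ∧ MeasurableSet (F '' X₂) := by
  obtain ⟨X₁, h1, h2, h3⟩ := h.inj
  have hm := h.meas
  have hr := hvnRot_meas L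
  have hE : MeasurableSet {x | F (T x) = hvnRot L (F x)} :=
    measurableSet_eq_fun (hm.comp T.measurable) (hr.comp hm)
  obtain ⟨X₂, hs, h4, h5, h6⟩ := hvn_invariant_subset μ T hT
    (X₁ ∩ {x | F (T x) = hvnRot L (F x)}) (h1.inter hE) (by
      rw [compl_inter]
      exact measure_union_null h2 h.equi)
  have := h4.standardBorel
  have hemb : MeasurableEmbedding (fun x : X₂ => F x) := by
    apply Measurable.measurableEmbedding (hm.comp measurable_subtype_coe)
    intro x y hxy
    exact Subtype.ext (h3 (hs x.2).1 (hs y.2).1 hxy)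
  have : Nonempty X := by
    have := (inferInstance : IsProbabilityMeasure μ).neZero
    exact μ.nonempty_of_neZero
  obtain ⟨F', hF', hc⟩ := hemb.exists_measurable_extend measurable_subtype_coe 
    (fun _ => this)
  refine ⟨X₂, F', h4, h5, h6, hF', fun x hx => (hs hx).2, fun x hx => congrFun hc ⟨x, hx⟩, ?_⟩
  have := hemb.measurableSet_range
  convert this
  ext z
  simp

lemma HvnData.map_rot {X : Type*} [MeasurableSpace X] 
    {μ : Measure X} {T : X ≃ᵐ X}
    (hT : MeasurePreserving T μ μ)
    {L : Subgroup Circle} {F : X → L → Circle} (h : HvnData μ T L F) :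
    (μ.map F).map (hvnRot L) = μ.map F := by
  rw [Measure.map_map (hvnRot_meas L) h.meas]
  conv_rhs => rw [← hT.map_eq, Measure.map_map h.meas T.measurable]
  apply Measure.map_congr
  filter_upwards [h.equi] with x hx using hx.symm

lemma HvnData.map_mult {X : Type*} [MeasurableSpace X] 
    {μ : Measure X} {T : X ≃ᵐ X} 
    {L : Subgroup Circle} [Countable L] {F : X → L → Circle} (h : HvnData μ T L F) :
    ∀ᵐ z ∂(μ.map F), ∀ l m, z (l * m) = z l * z m := by
  rw [ae_map_iff h.meas.aemeasurable]
  · exact h.mult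
  · simp only [ofPred_forall]
    refine MeasurableSet.iInter fun l => MeasurableSet.iInter fun m => ?_
    apply measurableSet_eq_fun <;> fun_prop

lemma hvn_glue {X Y : Type*} [MeasurableSpace X] [StandardBorelSpace X]
    [MeasurableSpace Y] [StandardBorelSpace Y]
    (μ : Measure X) (ν : Measure Y) [IsProbabilityMeasure μ] [IsProbabilityMeasure ν]
    (T : X ≃ᵐ X) (S : Y ≃ᵐ Y)
    (hT : MeasurePreserving T μ μ) (hS : MeasurePreserving S ν ν)
    (L : Subgroup Circle) [Countable L] (F : X → L → Circle) (G : Y → L → Circle)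
    (hF : HvnData μ T L F) (hG : HvnData ν S L G) : ∃ φ : X → Y, IsIsomorphismVia μ ν T S φ := by
  have hFm := hF.meas
  have hGm := hG.meas
  have hPQ : μ.map F = ν.map G := by
    have := Measure.isProbabilityMeasure_map (μ := μ) hFm.aemeasurable
    have := Measure.isProbabilityMeasure_map (μ := ν) hGm.aemeasurable
    exact hvn_unique L _ _ (hF.map_rot hT) hF.map_mult (hG.map_rot hS) hG.map_mult
  obtain ⟨X₂, F', hX1, hX2, hX3, hF'm, hXe, hXi, hFX⟩ := hF.good hT
  obtain ⟨Y₂, G', hY1, hY2, hY3, hG'm, hYe, hYi, hGY⟩ := hG.good hS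
  have rotF : ∀ z, hvnRot L z ∈ F '' X₂ ↔ z ∈ F '' X₂ := by
    intro z
    constructor
    · rintro ⟨x, hx, hxz⟩
      refine ⟨T.symm x, (hX3 _).1 (by simpa using hx), hvnRot_inj L ?_⟩
      rw [← hxz, ← hXe _ ((hX3 _).1 (by simpa using hx))]
      simp
    · rintro ⟨x, hx, rfl⟩
      exact ⟨T x, (hX3 x).2 hx, hXe x hx⟩
  have rotG : ∀ z, hvnRot L z ∈ G '' Y₂ ↔ z ∈ G '' Y₂ := by
    intro z
    constructor
    · rintro ⟨x, hx, hxz⟩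
      refine ⟨S.symm x, (hY3 _).1 (by simpa using hx), hvnRot_inj L ?_⟩
      rw [← hxz, ← hYe _ ((hY3 _).1 (by simpa using hx))]
      simp
    · rintro ⟨x, hx, rfl⟩
      exact ⟨S x, (hY3 x).2 hx, hYe x hx⟩
  have nullF : μ (F ⁻¹' (G '' Y₂))ᶜ = 0 := by
    rw [← preimage_compl, ← Measure.map_apply hFm hGY.compl, hPQ, Measure.map_apply hGm hGY.compl]
    refine measure_mono_null ?_ hY2
    intro y hy hy'
    exact hy ⟨y, hy', rfl⟩
  have nullG : ν (G ⁻¹' (F '' X₂))ᶜ = 0 := by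
    rw [← preimage_compl, ← Measure.map_apply hGm hFX.compl, ← hPQ, Measure.map_apply hFm hFX.compl]
    refine measure_mono_null ?_ hX2
    intro y hy hy'
    exact hy ⟨y, hy', rfl⟩
  have hX0m : MeasurableSet (X₂ ∩ F ⁻¹' (G '' Y₂)) := hX1.inter (hFm hGY)
  have hY0m : MeasurableSet (Y₂ ∩ G ⁻¹' (F '' X₂)) := hY1.inter (hGm hFX)
  have hcov : ∀ {Z : Type _} (R : Z ≃ Z) (A : Set Z), (∀ z, R z ∈ A ↔ z ∈ A) → R '' A = A := by
    intro Z R A h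
    ext z
    rw [R.image_eq_preimage_symm, mem_preimage, ← h]
    simp
  have hcov' : ∀ {Z : Type _} (R : Z ≃ Z) (A : Set Z), (∀ z, R z ∈ A ↔ z ∈ A) → R '' A = A := by
    intro Z R A h
    ext z
    rw [R.image_eq_preimage_symm, mem_preimage, ← h]
    simp
  refine ⟨G' ∘ F, X₂ ∩ F ⁻¹' (G '' Y₂), Y₂ ∩ G ⁻¹' (F '' X₂), F' ∘ G, hX0m, hY0m, ?_, ?_, ?_, ?_,
    hG'm.comp hFm, hF'm.comp hGm, ?_, ?_, ?_, ?_, ?_, ?_⟩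
  · rw [prob_compl_eq_zero_iff hX0m |>.symm, compl_inter]
    exact measure_union_null hX2 nullF
  · rw [prob_compl_eq_zero_iff hY0m |>.symm, compl_inter]
    exact measure_union_null hY2 nullG
  · refine hcov T.toEquiv _ fun x => ?_
    have h1 := hX3 x
    constructor
    · rintro ⟨h, h'⟩
      have h2 := h1.1 h
      refine ⟨h2, ?_⟩
      have h3 : F (T x) ∈ G '' Y₂ := h'
      rw [hXe x h2, rotG] at h3
      exact h3
    · rintro ⟨h, h'⟩
      refine ⟨h1.2 h, ?_⟩
      change F (T x) ∈ G '' Y₂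
      rw [hXe x h, rotG]
      exact h'
  · refine hcov' S.toEquiv _ fun x => ?_
    have h1 := hY3 x
    constructor
    · rintro ⟨h, h'⟩
      have h2 := h1.1 h
      refine ⟨h2, ?_⟩
      have h3 : G (S x) ∈ F '' X₂ := h'
      rw [hYe x h2, rotF] at h3
      exact h3
    · rintro ⟨h, h'⟩
      refine ⟨h1.2 h, ?_⟩
      change G (S x) ∈ F '' X₂
      rw [hYe x h, rotF]
      exact h'
  · rintro x ⟨hx, y, hy, hxy⟩
    simp only [Function.comp, mem_inter_iff, mem_preimage]
    rw [← hxy, hYi y hy, hxy]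
    exact ⟨hy, x, hx, rfl⟩
  · rintro x ⟨hx, y, hy, hxy⟩
    simp only [Function.comp, mem_inter_iff, mem_preimage]
    rw [← hxy, hXi y hy, hxy]
    exact ⟨hy, x, hx, rfl⟩
  · rintro x ⟨hx, y, hy, hxy⟩
    simp only [Function.comp]
    rw [← hxy, hYi y hy, hxy, hXi x hx]
  · rintro x ⟨hx, y, hy, hxy⟩
    simp only [Function.comp]
    rw [← hxy, hXi y hy, hxy, hYi x hx]
  · rw [← Measure.map_map hG'm hFm, hPQ, Measure.map_map hG'm hGm]
    have : G' ∘ G =ᵐ[ν] id := by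
      have : ∀ᵐ y ∂ν, y ∈ Y₂ := hY2
      filter_upwards [this] with y hy using hYi y hy
    rw [Measure.map_congr this, Measure.map_id]
  · rintro x ⟨hx, y, hy, hxy⟩
    simp only [Function.comp]
    rw [hXe x hx, ← hxy, ← hYe y hy, hYi _ ((hY3 y).2 hy), hYi y hy]

lemma hvn_meas_coe {X : Type*} [MeasurableSpace X] {f : X → Circle}
    (h : Measurable (fun x => (f x : ℂ))) : Measurable f := by
  refine measurable_of_isOpen fun V hV => ?_
  have hind : Topology.IsInducing (fun z : Circle => (z : ℂ)) := ⟨rfl⟩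
  obtain ⟨W, hW, rfl⟩ := hind.isOpen_iff.1 hV
  exact h hW.measurableSet

/-- normalization -/
noncomputable def hvnN (z : ℂ) : Circle :=
  ⟨if z = 0 then 1 else z / ‖z‖, by
    refine mem_sphere_zero_iff_norm.2 ?_
    split_ifs with h
    · simp
    · simp [h]⟩

lemma hvnN_coe (z : ℂ) : (hvnN z : ℂ) = if z = 0 then 1 else z / ‖z‖ := rfl

lemma hvnN_meas : Measurable hvnN := by
  apply hvn_meas_coe
  simp only [hvnN_coe]
  exact Measurable.ite (measurableSet_singleton 0) measurable_const (by fun_prop)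

/-- eigenvalue group -/
noncomputable def hvnEig {X : Type*} [MeasurableSpace X] (μ : Measure X) (T : X ≃ᵐ X) :
    Subgroup Circle where
  carrier := {l | ∃ f : X → Circle, Measurable f ∧ ∀ᵐ x ∂μ, f (T x) = l * f x}
  mul_mem' := by
    rintro a b ⟨f, hf, hfa⟩ ⟨g, hg, hgb⟩
    refine ⟨fun x => f x * g x, hf.mul hg, ?_⟩
    filter_upwards [hfa, hgb] with x h1 h2
    rw [h1, h2, mul_mul_mul_comm]
  one_mem' := ⟨fun _ => 1, measurable_const, by simp⟩
  inv_mem' := by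
    rintro a ⟨f, hf, hfa⟩
    refine ⟨fun x => (f x)⁻¹, hf.inv, ?_⟩
    filter_upwards [hfa] with x h1
    rw [h1, mul_inv]

lemma hvn_simple {X : Type*} [MeasurableSpace X] {μ : Measure X} {T : X ≃ᵐ X}
    (hT : Ergodic T μ) {f g : X → Circle} {l : Circle} (hf : Measurable f) (hg : Measurable g)
    (hfl : ∀ᵐ x ∂μ, f (T x) = l * f x) (hgl : ∀ᵐ x ∂μ, g (T x) = l * g x) :
    ∃ c : Circle, ∀ᵐ x ∂μ, f x = c * g x := by
  obtain ⟨c, hc⟩ := hT.ae_eq_const_of_ae_eq_comp_ae (g := fun x => f x / g x)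
    (hf.div hg).aestronglyMeasurable (by
      filter_upwards [hfl, hgl] with x h1 h2
      simp [h1, h2])
  refine ⟨c, ?_⟩
  filter_upwards [hc] with x hx
  rw [← div_eq_iff_eq_mul]
  exact hx

lemma hvn_lp_eig {X : Type*} [MeasurableSpace X] {μ : Measure X} {T : X ≃ᵐ X}
    (hT : Ergodic T μ) (f : Lp ℂ 2 μ) (hf0 : f ≠ 0) (c : ℂ)
    (hf : Lp.compMeasurePreserving (⇑T) hT.toMeasurePreserving f = c • f) :
    ∃ l : Circle, (l : ℂ) = c ∧ ∃ h : X → Circle, Measurable h ∧ (∀ᵐ x ∂μ, h (T x) = l * h x) ∧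
      ∃ r : ℂ, r ≠ 0 ∧ ∀ᵐ x ∂μ, f x = r * h x := by
  have hc : ‖c‖ = 1 := by
    have h1 := Lp.norm_compMeasurePreserving f hT.toMeasurePreserving
    rw [hf, norm_smul] at h1
    have : ‖f‖ ≠ 0 := norm_ne_zero_iff.2 hf0
    exact mul_right_cancel₀ this (by rw [h1, one_mul])
  have hae : ∀ᵐ x ∂μ, f (T x) = c * f x := by
    have h1 := Lp.coeFn_compMeasurePreserving f hT.toMeasurePreserving
    rw [hf] at h1
    filter_upwards [h1, Lp.coeFn_smul c f] with x h2 h3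
    rw [h3] at h2
    exact h2.symm
  have hfm := (Lp.stronglyMeasurable f).measurable
  obtain ⟨r, hr⟩ := hT.ae_eq_const_of_ae_eq_comp_ae (g := fun x => ‖f x‖)
    hfm.norm.aestronglyMeasurable (by
      filter_upwards [hae] with x h1
      simp [h1, hc])
  have hr0 : r ≠ 0 := by
    rintro rfl
    apply hf0
    rw [Lp.eq_zero_iff_ae_eq_zero]
    filter_upwards [hr] with x hx
    simpa using hx
  refine ⟨⟨c, mem_sphere_zero_iff_norm.2 hc⟩, rfl, fun x => hvnN (f x), hvnN_meas.comp hfm, ?_, r, 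
    by exact_mod_cast hr0, ?_⟩
  · filter_upwards [hae, hr] with x h1 h2
    have h3 : f x ≠ 0 := by
      intro h
      simp [h] at h2
      exact hr0 h2.symm
    have hc0 : c ≠ 0 := by
      intro h
      simp [h] at hc
    apply Circle.ext
    change (hvnN (f (T x)) : ℂ) = c * (hvnN (f x) : ℂ)
    rw [h1, hvnN_coe, hvnN_coe, if_neg h3, if_neg (mul_ne_zero hc0 h3), norm_mul, hc, one_mul]
    ring
  · filter_upwards [hr] with x h2
    simp only [Function.const_apply] at h2
    have h3 : f x ≠ 0 := by
      intro h
      simp [h] at h2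
      exact hr0 h2.symm
    rw [hvnN_coe, if_neg h3, h2]
    have : (r : ℂ) ≠ 0 := by exact_mod_cast hr0
    field_simp

lemma hvn_memLp {X : Type*} [MeasurableSpace X] (μ : Measure X) [IsProbabilityMeasure μ]
    {h : X → Circle} (hh : Measurable h) : MemLp (fun x => (h x : ℂ)) 2 μ := by
  apply MemLp.of_bound (C := 1)
  · apply Measurable.aestronglyMeasurable
    fun_prop
  · exact Filter.Eventually.of_forall fun x => (Circle.norm_coe (h x)).le

/-- eigenvector -/
noncomputable def hvnE {X : Type*} [MeasurableSpace X] (μ : Measure X) [IsProbabilityMeasure μ]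
    {h : X → Circle} (hh : Measurable h) : Lp ℂ 2 μ := (hvn_memLp μ hh).toLp

lemma hvnE_coe {X : Type*} [MeasurableSpace X] (μ : Measure X) [IsProbabilityMeasure μ]
    {h : X → Circle} (hh : Measurable h) : ∀ᵐ x ∂μ, hvnE μ hh x = h x := 
  (hvn_memLp μ hh).coeFn_toLp

lemma hvnE_norm {X : Type*} [MeasurableSpace X] (μ : Measure X) [IsProbabilityMeasure μ]
    {h : X → Circle} (hh : Measurable h) : ‖hvnE μ hh‖ = 1 := by
  unfold hvnE
  rw [Lp.norm_toLp, eLpNorm_congr_norm_ae (g := fun _ => (1 : ℂ))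
    (Filter.Eventually.of_forall fun x => by rw [Circle.norm_coe, norm_one])]
  rw [eLpNorm_const _ (by simp) (IsProbabilityMeasure.neZero μ).out]
  simp

lemma hvnE_eig {X : Type*} [MeasurableSpace X] (μ : Measure X) [IsProbabilityMeasure μ]
    {T : X ≃ᵐ X} (hT : MeasurePreserving T μ μ) {l : Circle}
    {h : X → Circle} (hh : Measurable h) (hl : ∀ᵐ x ∂μ, h (T x) = l * h x) : 
    Lp.compMeasurePreserving (⇑T) hT (hvnE μ hh) = (l : ℂ) • hvnE μ hh := by
  apply Lp.ext
  filter_upwards [Lp.coeFn_compMeasurePreserving (hvnE μ hh) hT, Lp.coeFn_smul (l : ℂ) (hvnE μ hh),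
    hvnE_coe μ hh, hT.quasiMeasurePreserving.ae (hvnE_coe μ hh), hl] with x h1 h2 h3 h4 h5
  rw [h1, h2]
  simp [h3, h4, h5]

lemma hvn_countable {X : Type*} [MeasurableSpace X] [StandardBorelSpace X] 
    (μ : Measure X) [IsProbabilityMeasure μ]
    (T : X ≃ᵐ X) (hT : MeasurePreserving T μ μ) : Countable (hvnEig μ T) := by
  have hex : ∀ l : hvnEig μ T, ∃ f : X → Circle, Measurable f ∧ ∀ᵐ x ∂μ, f (T x) = l * f x :=
    fun l => l.2
  choose f hf hfl using hex
  have : Fact ((2 : ENNReal) ≠ ⊤) := ⟨by simp⟩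
  have horth : ∀ l m, l ≠ m → inner ℂ (hvnE μ (hf l)) (hvnE μ (hf m)) = 0 := by
    intro l m hlm
    have h1 := (Lp.compMeasurePreservingₗᵢ ℂ T hT (E := ℂ) (p := 2)).inner_map_map 
      (hvnE μ (hf l)) (hvnE μ (hf m))
    have h2 : ∀ l, Lp.compMeasurePreservingₗᵢ ℂ T hT (hvnE μ (hf l)) = 
        ((l : Circle) : ℂ) • hvnE μ (hf l) := fun l => hvnE_eig μ hT (hf l) (hfl l)
    rw [h2, h2, inner_smul_left, inner_smul_right, ← Circle.coe_inv_eq_conj] at h1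
    by_contra h0
    apply hlm
    have h3 : (((l : Circle)⁻¹ * (m : Circle) : Circle) : ℂ) = 1 := by
      rw [Circle.coe_mul]
      apply mul_right_cancel₀ h0
      rw [mul_assoc, h1, one_mul]
    have h4 : (l : Circle)⁻¹ * (m : Circle) = 1 := Circle.ext h3
    exact Subtype.ext (inv_mul_eq_one.1 h4)
  apply Pairwise.countable_of_isOpen_disjoint 
    (s := fun l : hvnEig μ T => Metric.ball (hvnE μ (hf l)) (1/2))
  · intro l m hlm
    apply Metric.ball_disjoint_ball
    rw [dist_eq_norm]
    have h1 := norm_sub_sq (𝕜 := ℂ) (hvnE μ (hf l)) (hvnE μ (hf m))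
    rw [horth l m hlm, hvnE_norm, hvnE_norm] at h1
    simp at h1
    nlinarith [norm_nonneg (hvnE μ (hf l) - hvnE μ (hf m))]
  · exact fun i => Metric.isOpen_ball
  · exact fun i => ⟨_, Metric.mem_ball_self (by norm_num)⟩

lemma hvn_inj {X : Type*} [MeasurableSpace X] [StandardBorelSpace X] 
    (μ : Measure X) [IsProbabilityMeasure μ] {K : Type*} [MeasurableSpace K]
    (F : X → K) (hF : Measurable F) (s : Set (Lp ℂ 2 μ)) 
    (hs : (Submodule.span ℂ s).topologicalClosure = ⊤)
    (hsF : ∀ f ∈ s, ∃ p : K → ℂ, Measurable p ∧ ∀ᵐ x ∂μ, f x = p (F x)) :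
    ∃ X₁, MeasurableSet X₁ ∧ μ X₁ᶜ = 0 ∧ InjOn F X₁ := by
  have hall : ∀ f : Lp ℂ 2 μ, AEStronglyMeasurable[MeasurableSpace.comap F inferInstance] f μ := by
    have hcl := isClosed_aestronglyMeasurable (F := ℂ) (p := 2) (μ := μ) hF.comap_le
    intro f
    have hle : (Submodule.span ℂ s).topologicalClosure ≤ 
        lpMeas ℂ ℂ (MeasurableSpace.comap F inferInstance) 2 μ := by
      apply Submodule.topologicalClosure_minimal
      · rw [Submodule.span_le]
        intro g hg
        obtain ⟨p, hp, hgp⟩ := hsF g hg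
        refine ⟨fun x => p (F x), ?_, hgp⟩
        exact (hp.comp (comap_measurable F)).stronglyMeasurable
      · exact hcl
    rw [hs] at hle
    exact hle (Submodule.mem_top (x := f))
  have hset : ∀ A : Set X, MeasurableSet A → ∃ B : Set K, MeasurableSet B ∧ 
      ∀ᵐ x ∂μ, x ∈ A ↔ F x ∈ B := by
    intro A hA
    obtain ⟨h, hh, hAh⟩ := hall (indicatorConstLp 2 hA (measure_ne_top μ A) (1 : ℂ))
    obtain ⟨B, hB, hBh⟩ := hh.measurable (measurableSet_singleton (1 : ℂ))
    refine ⟨B, hB, ?_⟩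
    filter_upwards [hAh, indicatorConstLp_coeFn (p := 2) (hs := hA) (hμs := measure_ne_top μ A) 
      (c := (1 : ℂ))] with x h1 h2
    have h3 : F x ∈ B ↔ h x = 1 := by
      change x ∈ F ⁻¹' B ↔ _
      rw [hBh]
      rfl
    rw [h3, ← h1, h2]
    by_cases hx : x ∈ A <;> simp [hx]
  have hsep := MeasurableSpace.measurable_mapNatBool X
  have hAn : ∀ n, MeasurableSet {x | MeasurableSpace.mapNatBool X x n = true} := fun n =>
    ((measurable_pi_apply n).comp hsep) (measurableSet_singleton true)
  choose B hB hAB using fun n => hset _ (hAn n)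
  have hae := ae_all_iff.2 hAB
  refine ⟨{x | ∀ n, x ∈ {x | MeasurableSpace.mapNatBool X x n = true} ↔ F x ∈ B n}, ?_, hae, ?_⟩
  · rw [ofPred_forall]
    refine MeasurableSet.iInter fun n => ?_
    exact (hAn n).iff (hF (hB n))
  · intro x hx y hy hxy
    apply MeasurableSpace.injective_mapNatBool X
    funext n
    have h1 := hx n
    have h2 := hy n
    rw [hxy, ← h2] at h1
    exact Bool.eq_iff_iff.2 h1

lemma hvn_data {X : Type*} [MeasurableSpace X] [StandardBorelSpace X] 
    (μ : Measure X) [IsProbabilityMeasure μ]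
    (T : X ≃ᵐ X) (hT : Ergodic T μ)
    (hds : (Submodule.span ℂ
        {f : Lp ℂ 2 μ | ∃ c : ℂ,
          Lp.compMeasurePreserving (⇑T) hT.toMeasurePreserving f = c • f}).topologicalClosure
        = ⊤) : ∃ F, HvnData μ T (hvnEig μ T) F := by
  have := hvn_countable μ T hT.toMeasurePreserving
  have hex : ∀ l : hvnEig μ T, ∃ f : X → Circle, Measurable f ∧ ∀ᵐ x ∂μ, f (T x) = l * f x :=
    fun l => l.2
  choose f hf hfl using hex
  have hmul : ∀ l m, ∃ c : Circle, ∀ᵐ x ∂μ, f l x * f m x = c * f (l * m) x := by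
    intro l m
    refine hvn_simple hT (l := l * m) ((hf l).mul (hf m)) (hf (l * m)) ?_ (hfl (l * m))
    filter_upwards [hfl l, hfl m] with x h1 h2
    rw [h1, h2, mul_mul_mul_comm]
  choose c hc using hmul
  have hall := ae_all_iff.2 fun l => ae_all_iff.2 fun m => hc l m
  obtain ⟨x₀, hx₀⟩ := hall.exists
  have hFm : Measurable (fun x (l : hvnEig μ T) => f l x / f l x₀) :=
    measurable_pi_lambda _ fun l => (hf l).div measurable_const
  refine ⟨fun x l => f l x / f l x₀, hFm, ?_, ?_, ?_⟩
  · filter_upwards [ae_all_iff.2 hfl] with x hx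
    funext l
    simp only [hvnRot]
    rw [hx l, mul_div_assoc]
  · filter_upwards [hall] with x hx l m
    have h1 := hx l m
    have h2 := hx₀ l m
    rw [div_mul_div_comm, h1, h2, mul_div_mul_left_eq_div]
  · refine hvn_inj μ _ hFm _ hds ?_
    rintro g ⟨d, hd⟩
    by_cases hg : g = 0
    · refine ⟨fun _ => 0, measurable_const, ?_⟩
      exact (Lp.eq_zero_iff_ae_eq_zero).1 hg
    · obtain ⟨l, hld, h, hh, hhl, r, -, hr⟩ := hvn_lp_eig hT g hg d hd
      have hl : l ∈ hvnEig μ T := ⟨h, hh, hhl⟩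
      obtain ⟨k, hk⟩ := hvn_simple hT hh (hf ⟨l, hl⟩) hhl (hfl ⟨l, hl⟩)
      refine ⟨fun z => r * (k * (f ⟨l, hl⟩ x₀ * z ⟨l, hl⟩) : Circle), by fun_prop, ?_⟩
      filter_upwards [hr, hk] with x h1 h2
      rw [h1, h2]
      simp

lemma hvn_lp_simple {X : Type*} [MeasurableSpace X] {μ : Measure X} {T : X ≃ᵐ X}
    (hT : Ergodic T μ) (f g : Lp ℂ 2 μ) (hg0 : g ≠ 0) (c : ℂ)
    (hf : Lp.compMeasurePreserving (⇑T) hT.toMeasurePreserving f = c • f) 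
    (hg : Lp.compMeasurePreserving (⇑T) hT.toMeasurePreserving g = c • g) : ∃ k : ℂ, f = k • g := by
  by_cases hf0 : f = 0
  · exact ⟨0, by simp [hf0]⟩
  obtain ⟨l, hl, h, hh, hhl, r, hr0, hr⟩ := hvn_lp_eig hT f hf0 c hf
  obtain ⟨l', hl', h', hh', hhl', r', hr0', hr'⟩ := hvn_lp_eig hT g hg0 c hg
  obtain rfl : l = l' := Circle.ext (hl.trans hl'.symm)
  obtain ⟨k, hk⟩ := hvn_simple hT hh hh' hhl hhl'
  refine ⟨r * k / r', ?_⟩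
  apply Lp.ext
  filter_upwards [hr, hr', hk, Lp.coeFn_smul (r * k / r') g] with x h1 h2 h3 h4
  rw [h4, Pi.smul_apply, h1, h2, h3, smul_eq_mul, Circle.coe_mul]
  field_simp

lemma hvn_ergodic {X Y : Type*} [MeasurableSpace X] [MeasurableSpace Y]
    (μ : Measure X) (ν : Measure Y) [IsProbabilityMeasure μ] [IsProbabilityMeasure ν]
    (T : X ≃ᵐ X) (S : Y ≃ᵐ Y)
    (hT : Ergodic T μ) (hS : MeasurePreserving S ν ν)
    (U : Lp ℂ 2 ν ≃ₗᵢ[ℂ] Lp ℂ 2 μ)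
    (hU : ∀ g : Lp ℂ 2 ν,
      U (Lp.compMeasurePreserving (⇑S) hS g)
        = Lp.compMeasurePreserving (⇑T) hT.toMeasurePreserving (U g)) : Ergodic S ν := by
  refine ⟨hS, ⟨?_⟩⟩
  intro A hA hSA
  have h1 : Lp.compMeasurePreserving (⇑S) hS (indicatorConstLp 2 hA (measure_ne_top ν A) (1 : ℂ)) = 
      indicatorConstLp 2 hA (measure_ne_top ν A) (1 : ℂ) := by
    rw [Lp.indicatorConstLp_compMeasurePreserving]
    congr 1
  have hone : (hvnE ν (h := fun _ => 1) measurable_const) ≠ 0 := by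
    rw [← norm_ne_zero_iff, hvnE_norm]
    exact one_ne_zero
  have h2 : Lp.compMeasurePreserving (⇑S) hS (hvnE ν (h := fun _ => 1) measurable_const) =
      ((1 : Circle) : ℂ) • hvnE ν (h := fun _ => 1) measurable_const := 
    hvnE_eig ν hS measurable_const (by simp)
  obtain ⟨k, hk⟩ := hvn_lp_simple hT (U (indicatorConstLp 2 hA (measure_ne_top ν A) (1 : ℂ)))
    (U (hvnE ν (h := fun _ => 1) measurable_const)) (by simpa using hone) 1 
    (by rw [← hU, h1, one_smul]) (by rw [← hU, h2]; simp)
  rw [← map_smul] at hk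
  have hk' := U.injective hk
  have h3 : ∀ᵐ x ∂ν, A.indicator (fun _ => (1 : ℂ)) x = k := by
    have h4 := indicatorConstLp_coeFn (p := 2) (hs := hA) (hμs := measure_ne_top ν A) (c := (1 : ℂ))
    rw [hk'] at h4
    filter_upwards [h4, hvnE_coe ν (h := fun _ => 1) measurable_const, 
      Lp.coeFn_smul k (hvnE ν (h := fun _ => 1) measurable_const)] with x h5 h6 h7
    rw [← h5, h7, Pi.smul_apply, h6]
    simp
  rw [Filter.eventuallyConst_set]
  by_cases hk1 : k = 1
  · left
    filter_upwards [h3] with x hx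
    by_contra hxA
    simp [hxA, hk1] at hx
  · right
    filter_upwards [h3] with x hx hxA
    simp [hxA] at hx
    exact hk1 hx.symm

lemma hvn_eig_le {X Y : Type*} [MeasurableSpace X] [MeasurableSpace Y]
    (μ : Measure X) (ν : Measure Y) [IsProbabilityMeasure μ] [IsProbabilityMeasure ν]
    (T : X ≃ᵐ X) (S : Y ≃ᵐ Y)
    (hT : Ergodic T μ) (hS : MeasurePreserving S ν ν)
    (U : Lp ℂ 2 ν ≃ₗᵢ[ℂ] Lp ℂ 2 μ)
    (hU : ∀ g : Lp ℂ 2 ν,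
      U (Lp.compMeasurePreserving (⇑S) hS g)
        = Lp.compMeasurePreserving (⇑T) hT.toMeasurePreserving (U g)) : 
    hvnEig ν S ≤ hvnEig μ T := by
  rintro l ⟨h, hh, hl⟩
  obtain ⟨l', hl', h', hh', hhl', -⟩ := hvn_lp_eig hT (U (hvnE ν hh)) (by
    have := hvnE_norm ν hh
    rw [← norm_ne_zero_iff, U.norm_map, this]
    exact one_ne_zero) (l : ℂ) (by rw [← hU, hvnE_eig ν hS hh hl, map_smul])
  obtain rfl : l' = l := Circle.ext hl'
  exact ⟨h', hh', hhl'⟩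

/-- Halmos–von Neumann: an ergodic system with discrete spectrum is isomorphic to any
system spectrally isomorphic to it. -/
theorem halmos_von_neumann
    {X Y : Type*} [MeasurableSpace X] [StandardBorelSpace X]
    [MeasurableSpace Y] [StandardBorelSpace Y]
    (μ : Measure X) (ν : Measure Y) [IsProbabilityMeasure μ] [IsProbabilityMeasure ν]
    (T : X ≃ᵐ X) (S : Y ≃ᵐ Y)
    (hT : Ergodic T μ) (hS : MeasurePreserving S ν ν)
    -- `T` has discrete spectrum: the span of the eigenvectors of the Koopman operator
    -- `f ↦ f ∘ T` is dense in `L²(μ)`.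
    (hds : (Submodule.span ℂ
        {f : Lp ℂ 2 μ | ∃ c : ℂ,
          Lp.compMeasurePreserving (⇑T) hT.toMeasurePreserving f = c • f}).topologicalClosure
        = ⊤)
    -- `S` is spectrally isomorphic to `T`: a unitary `U : L²(ν) → L²(μ)` intertwining
    -- the Koopman operators.
    (U : Lp ℂ 2 ν ≃ₗᵢ[ℂ] Lp ℂ 2 μ)
    (hU : ∀ g : Lp ℂ 2 ν,
      U (Lp.compMeasurePreserving (⇑S) hS g)
        = Lp.compMeasurePreserving (⇑T) hT.toMeasurePreserving (U g)) :
    ∃ φ : X → Y, IsIsomorphismVia μ ν T S φ := by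
  have hSe := hvn_ergodic μ ν T S hT hS U hU
  have hU' : ∀ g : Lp ℂ 2 μ, U.symm (Lp.compMeasurePreserving (⇑T) hT.toMeasurePreserving g)
        = Lp.compMeasurePreserving (⇑S) hS (U.symm g) := by
    intro g
    apply U.injective
    rw [hU]
    simp
  have hdsS : (Submodule.span ℂ
        {f : Lp ℂ 2 ν | ∃ c : ℂ,
          Lp.compMeasurePreserving (⇑S) hS f = c • f}).topologicalClosure
        = ⊤ := by
    rw [eq_top_iff]
    intro w _
    have h1 : U w ∈ (Submodule.span ℂ
        {f : Lp ℂ 2 μ | ∃ c : ℂ,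
          Lp.compMeasurePreserving (⇑T) hT.toMeasurePreserving f = c • f}).topologicalClosure := by
      rw [hds]
      trivial
    have h2 : w = U.symm (U w) := by simp
    rw [h2]
    refine map_mem_closure U.symm.continuous h1 ?_
    intro a ha
    induction ha using Submodule.span_induction with
    | mem x h =>
      obtain ⟨c, hc⟩ := h
      refine Submodule.subset_span ⟨c, ?_⟩
      rw [← hU', hc, map_smul]
    | zero => simp
    | add x y _ _ h1 h2 => 
      rw [map_add]
      exact Submodule.add_mem _ h1 h2
    | smul a x _ h =>
      rw [map_smul]
      exact Submodule.smul_mem _ _ h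
  have hL : hvnEig ν S = hvnEig μ T := le_antisymm (hvn_eig_le μ ν T S hT hS U hU)
    (hvn_eig_le ν μ S T hSe hT.toMeasurePreserving U.symm hU')
  obtain ⟨F, hF⟩ := hvn_data μ T hT hds
  obtain ⟨G, hG⟩ : ∃ G, HvnData ν S (hvnEig μ T) G := hL ▸ hvn_data ν S hSe hdsS
  have := hvn_countable μ T hT.toMeasurePreserving
  exact hvn_glue μ ν T S hT.toMeasurePreserving hS _ F G hF hG
end

section
/- Fundamental lemma of non-disjointness: Let T and S be invertible measure-preserving transformations of standard Borel probability spaces (X, 𝒜, μ) and (Y, ℬ, ν). If T and S are not disjoint (i.e., there exists a joining λ of T and S with λ ≠ μ ⊗ ν), then S has a non-trivial common factor with a joining of a countable family of copies of T: there exist a probability measure λ∞ on X^ℕ which is invariant under the coordinatewise map (x_n)_n ↦ (T x_n)_n and whose marginal on each coordinate is μ, a standard Borel probability space (Z, 𝒞, ρ) with ρ not a Dirac mass, an invertible measure-preserving transformation R of (Z, 𝒞, ρ), and measurable maps φ : Y → Z and ψ : X^ℕ → Z with φ∗ν = ρ, ψ∗λ∞ = ρ, φ ∘ S = R ∘ φ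 ν-a.e., and ψ ∘ T^{(∞)} = R ∘ ψ λ∞-a.e., where T^{(∞)} denotes the coordinatewise action of T on X^ℕ. -/
open MeasureTheory Set

namespace NDJ
open ProbabilityTheory Filter Topology

/-- The kernel of infinite products. -/
noncomputable def piK {X Y : Type*} [MeasurableSpace X] [MeasurableSpace Y]
    (κ : Kernel Y X) [IsMarkovKernel κ] : Kernel Y (ℕ → X) where
  toFun y := Measure.infinitePi (fun _ : ℕ => κ y)
  measurable' := by
    refine Measurable.measure_of_isPiSystem_of_isProbabilityMeasure
      (generateFrom_squareCylinders (α := fun _ : ℕ => X)).symm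
      (isPiSystem_squareCylinders (fun _ => MeasurableSpace.isPiSystem_measurableSet) (by simp)) ?_
    rintro _ ⟨s, t, ht, rfl⟩
    have ht' : ∀ i, MeasurableSet (t i) := fun i => ht i (mem_univ i)
    simp_rw [Measure.infinitePi_pi (fun _ : ℕ => κ _) (fun i (_ : i ∈ s) => ht' i)]
    exact Finset.measurable_fun_prod _ fun i _ => κ.measurable_coe (ht' i)

theorem piK_apply {X Y : Type*} [MeasurableSpace X] [MeasurableSpace Y]
    (κ : Kernel Y X) [IsMarkovKernel κ] (y : Y) :
    piK κ y = Measure.infinitePi (fun _ : ℕ => κ y) := rfl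

instance {X Y : Type*} [MeasurableSpace X] [MeasurableSpace Y]
    (κ : Kernel Y X) [IsMarkovKernel κ] : IsMarkovKernel (piK κ) :=
  ⟨fun y => by rw [piK_apply]; infer_instance⟩

/-- upper frequency of visits to `A` -/
noncomputable def freq {X : Type*} (A : Set X) (x : ℕ → X) : ℝ :=
  limsup (fun n : ℕ => (∑ i ∈ Finset.range n, A.indicator (fun _ => (1 : ℝ)) (x i)) / n) atTop

theorem measurable_freq {X : Type*} [MeasurableSpace X] {A : Set X} (hA : MeasurableSet A) :
    Measurable (freq A) := by
  refine Measurable.limsup fun n => ?_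
  refine Measurable.div_const (Finset.measurable_fun_sum _ fun i _ => ?_) _
  exact (measurable_const.indicator hA).comp (measurable_pi_apply i)

theorem freq_ae {X : Type*} [MeasurableSpace X] {A : Set X} (hA : MeasurableSet A)
    (P : Measure X) [IsProbabilityMeasure P] :
    ∀ᵐ x ∂(Measure.infinitePi (fun _ : ℕ => P)), freq A x = P.real A := by
  have hm : Measurable (A.indicator (fun _ => (1 : ℝ))) := measurable_const.indicator hA
  have hmap : ∀ i : ℕ, Measure.map (fun x : ℕ → X => x i) (Measure.infinitePi (fun _ : ℕ => P)) = P :=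
    fun i => Measure.infinitePi_map_eval (fun _ : ℕ => P) i
  have hI : Integrable (A.indicator (fun _ => (1 : ℝ))) P :=
    (integrable_const 1).indicator hA
  have key := strong_law_ae_real (μ := Measure.infinitePi (fun _ : ℕ => P))
    (fun i x => A.indicator (fun _ => (1 : ℝ)) (x i)) ?_ ?_ ?_
  · filter_upwards [key] with x hx
    have := hx.limsup_eq
    rw [freq, this]
    have e := integral_map (μ := Measure.infinitePi (fun _ : ℕ => P))
      (φ := fun x : ℕ → X => x 0) (f := A.indicator (fun _ => (1 : ℝ)))
      (measurable_pi_apply 0).aemeasurable hm.aestronglyMeasurable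
    rw [hmap] at e
    rw [← e, integral_indicator_const _ hA]
    simp
  · have : Integrable (A.indicator (fun _ => (1 : ℝ)))
      (Measure.map (fun x : ℕ → X => x 0) (Measure.infinitePi (fun _ : ℕ => P))) := by
      rw [hmap]; exact hI
    exact this.comp_measurable (measurable_pi_apply 0)
  · intro i j hij
    exact (iIndepFun_infinitePi (P := fun _ : ℕ => P)
      (X := fun _ => A.indicator (fun _ => (1 : ℝ))) (fun _ => hm)).indepFun hij
  · intro i
    refine ⟨(hm.comp (measurable_pi_apply i)).aemeasurable,
      (hm.comp (measurable_pi_apply 0)).aemeasurable, ?_⟩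
    have h : ∀ i : ℕ, Measure.map (fun x : ℕ → X => A.indicator (fun _ => (1 : ℝ)) (x i))
        (Measure.infinitePi (fun _ : ℕ => P)) = P.map (A.indicator (fun _ => (1 : ℝ))) := by
      intro i
      rw [← hmap i, Measure.map_map hm (measurable_pi_apply i), hmap i]
      rfl
    rw [h, h]

theorem mp_zpow {α : Type*} [MeasurableSpace α] (e : α ≃ᵐ α) (m : Measure α)
    (h : MeasurePreserving e m m) (k : ℤ) :
    MeasurePreserving ((e.toEquiv ^ k : Equiv.Perm α) : α → α) m m := by
  have hs : MeasurePreserving e.symm m m := h.symm e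
  cases k with
  | ofNat n =>
    have := h.iterate n
    rw [Int.ofNat_eq_natCast, zpow_natCast, ← Equiv.Perm.iterate_eq_pow]
    exact this
  | negSucc n =>
    have := hs.iterate (n + 1)
    have h2 : (e.toEquiv ^ (Int.negSucc n) : Equiv.Perm α) = (e.toEquiv⁻¹) ^ (n + 1) := by
      rw [zpow_negSucc, inv_pow]
    rw [h2, ← Equiv.Perm.iterate_eq_pow]
    exact this

theorem meas_zpow {α : Type*} [MeasurableSpace α] (e : α ≃ᵐ α) (k : ℤ) :
    Measurable ((e.toEquiv ^ k : Equiv.Perm α) : α → α) :=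
  (mp_zpow e 0 ⟨e.measurable, by simp⟩ k).measurable

theorem semiconj_zpow {α β : Type*} (e : Equiv.Perm α) (f : Equiv.Perm β) (p : α → β)
    (h : ∀ a, p (e a) = f (p a)) (k : ℤ) (a : α) : p ((e ^ k) a) = (f ^ k) (p a) := by
  have hi : ∀ a, p (e⁻¹ a) = f⁻¹ (p a) := fun a => by
    rw [Equiv.Perm.eq_inv_iff_eq, ← h]; simp
  induction k using Int.induction_on generalizing a with
  | zero => simp
  | succ n ih => rw [zpow_add_one, zpow_add_one, Equiv.Perm.mul_apply, ih, h]; rfl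
  | pred n ih => rw [zpow_sub_one, zpow_sub_one, Equiv.Perm.mul_apply, ih, hi]; rfl

/-- If the fibre measures are equivariant, the skew measure is invariant. -/
theorem compProd_inv {Y W : Type*} [MeasurableSpace Y] [MeasurableSpace W]
    (ν : Measure Y) [SFinite ν] (K K' : Kernel Y W) [IsSFiniteKernel K] [IsSFiniteKernel K']
    (S : Y → Y) (hS : MeasurePreserving S ν ν) (V : W → W) (hV : Measurable V)
    (h : ∀ᵐ y ∂ν, (K y).map V = K' (S y)) :
    (ν ⊗ₘ K).map (Prod.map S V) = ν ⊗ₘ K' := by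
  ext s hs
  rw [Measure.map_apply (hS.measurable.prodMap hV) hs,
    Measure.compProd_apply (hS.measurable.prodMap hV hs), Measure.compProd_apply hs,
    ← hS.lintegral_comp (Kernel.measurable_kernel_prodMk_left hs)]
  refine lintegral_congr_ae ?_
  filter_upwards [h] with y hy
  rw [← hy, Measure.map_apply hV (measurable_prodMk_left hs)]
  rfl

/-- The shift. -/
def shift : (ℤ → ℝ) ≃ᵐ (ℤ → ℝ) where
  toFun z k := z (k + 1)
  invFun z k := z (k - 1)
  left_inv z := by ext; simp
  right_inv z := by ext; simp
  measurable_toFun := measurable_pi_lambda _ fun k => measurable_pi_apply (k + 1)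
  measurable_invFun := measurable_pi_lambda _ fun k => measurable_pi_apply (k - 1)

end NDJ

open ProbabilityTheory NDJ

/-- Fundamental lemma of non-disjointness: if `T` and `S` are not disjoint, then `S`
has a non-trivial common factor with some joining of countably many copies of `T`. -/
theorem nontrivial_common_factor_of_not_disjoint
    {X Y : Type*} [MeasurableSpace X] [StandardBorelSpace X]
    [MeasurableSpace Y] [StandardBorelSpace Y]
    (μ : Measure X) (ν : Measure Y) [IsProbabilityMeasure μ] [IsProbabilityMeasure ν]
    (T : X ≃ᵐ X) (S : Y ≃ᵐ Y)
    (hT : MeasurePreserving T μ μ) (hS : MeasurePreserving S ν ν)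
    -- `T` and `S` are not disjoint: some joining differs from the product measure.
    (lam : Measure (X × Y))
    (h1 : lam.map Prod.fst = μ)
    (h2 : lam.map Prod.snd = ν)
    (hinv : MeasurePreserving (Prod.map T S) lam lam)
    (hne : lam ≠ μ.prod ν) :
    ∃ (lamInf : Measure (ℕ → X)) (Z : Type) (_ : MeasurableSpace Z) (_ : StandardBorelSpace Z)
      (ρ : Measure Z) (R : Z ≃ᵐ Z) (φ : Y → Z) (ψ : (ℕ → X) → Z),
      IsProbabilityMeasure lamInf ∧
      -- `lamInf` is a joining of countably many copies of `T`:
      MeasurePreserving (fun x : ℕ → X => fun n => T (x n)) lamInf lamInf ∧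
      (∀ n : ℕ, lamInf.map (fun x : ℕ → X => x n) = μ) ∧
      -- `(Z, ρ, R)` is a non-trivial system:
      IsProbabilityMeasure ρ ∧
      (∀ z : Z, ρ ≠ Measure.dirac z) ∧
      MeasurePreserving R ρ ρ ∧
      -- it is a factor of `S`:
      Measurable φ ∧ ν.map φ = ρ ∧ (∀ᵐ y ∂ν, φ (S y) = R (φ y)) ∧
      -- and a factor of the joining of the copies of `T`:
      Measurable ψ ∧ lamInf.map ψ = ρ ∧
      (∀ᵐ x ∂lamInf, ψ (fun n => T (x n)) = R (ψ x)) := by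
  have hXne : Nonempty X := nonempty_of_isProbabilityMeasure μ
  have hlamP : IsProbabilityMeasure lam := by
    constructor
    have : (lam.map Prod.fst) univ = 1 := by rw [h1]; simp
    rwa [Measure.map_apply measurable_fst MeasurableSet.univ] at this
  -- disintegration over `Y`
  obtain ⟨κ, hκM, hκ⟩ : ∃ κ : Kernel Y X, IsMarkovKernel κ ∧
      Measure.compProd ν κ = lam.map Prod.swap := by
    have : IsProbabilityMeasure (lam.map Prod.swap) :=
      Measure.isProbabilityMeasure_map measurable_swap.aemeasurable
    refine ⟨(lam.map Prod.swap).condKernel, inferInstance, ?_⟩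
    have e : (lam.map Prod.swap).fst = ν := by
      rw [Measure.fst, Measure.map_map measurable_fst measurable_swap, ← h2]; rfl
    have := (lam.map Prod.swap).disintegrate (lam.map Prod.swap).condKernel
    rwa [e] at this
  have hrect : ∀ (A : Set X) (B : Set Y), MeasurableSet A → MeasurableSet B →
      lam (A ×ˢ B) = ∫⁻ y in B, κ y A ∂ν := by
    intro A B hA hB
    rw [← Measure.compProd_apply_prod hB hA, hκ, Measure.map_apply measurable_swap (hB.prod hA)]
    congr 1
    ext; simp [and_comm]
  have hmarg : ∀ A, MeasurableSet A → μ A = ∫⁻ y, κ y A ∂ν := by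
    intro A hA
    rw [← h1, Measure.map_apply measurable_fst hA, ← setLIntegral_univ,
      ← hrect A univ hA MeasurableSet.univ, prod_univ]
  -- equivariance of the fibre measures
  have heq : ∀ᵐ y ∂ν, (κ y).map T = κ (S y) := by
    have hη : κ.map T =ᵐ[ν] κ.comap S S.measurable := by
      refine Kernel.ae_eq_of_compProd_eq ?_
      have a1 : (Measure.compProd ν κ).map (Prod.map S T) = Measure.compProd ν κ := by
        rw [hκ, Measure.map_map (S.measurable.prodMap T.measurable) measurable_swap]
        conv_rhs => rw [← hinv.map_eq, Measure.map_map measurable_swap hinv.measurable]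
        rfl
      have a2 : (Measure.compProd ν (κ.map T)).map (Prod.map S id) = Measure.compProd ν κ := by
        rw [← a1, ← compProd_inv ν κ (κ.map T) id (MeasurePreserving.id ν) T T.measurable
          (Filter.Eventually.of_forall fun y => (Kernel.map_apply _ T.measurable y).symm),
          Measure.map_map (S.measurable.prodMap measurable_id)
            (measurable_id.prodMap T.measurable)]
        rfl
      have a3 : (Measure.compProd ν (κ.comap S S.measurable)).map (Prod.map S id) =
          Measure.compProd ν κ :=
        compProd_inv ν _ κ S hS id measurable_id (Filter.Eventually.of_forall fun y => by
          rw [Measure.map_id]; rfl)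
      have hinj := (S.prodCongr (MeasurableEquiv.refl X)).map_measurableEquiv_injective
      exact hinj (a2.trans a3.symm)
    filter_upwards [hη] with y hy
    rw [← Kernel.map_apply _ T.measurable, hy]; rfl
  -- a set whose fibre measure is not constant
  obtain ⟨A, hA, hAc⟩ : ∃ A, MeasurableSet A ∧ ∀ c : ℝ, ¬ ∀ᵐ y ∂ν, (κ y).real A = c := by
    by_contra! hcon
    refine hne (Measure.prod_eq fun A B hA hB => ?_).symm
    obtain ⟨c, hc⟩ := hcon A hA
    have hc' : ∀ᵐ y ∂ν, κ y A = ENNReal.ofReal c := by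
      filter_upwards [hc] with y hy
      rw [← hy, ofReal_measureReal]
    rw [hrect A B hA hB, hmarg A hA, lintegral_congr_ae hc',
      lintegral_congr_ae (ae_restrict_of_ae hc')]
    simp
  let TT : (ℕ → X) ≃ᵐ (ℕ → X) := MeasurableEquiv.piCongrRight fun _ => T
  have hTT : ∀ x, TT x = fun n => T (x n) := fun x => rfl
  let L : Measure (Y × (ℕ → X)) := Measure.compProd ν (piK κ)
  let U : (Y × (ℕ → X)) ≃ᵐ (Y × (ℕ → X)) := S.prodCongr TT
  have hU : MeasurePreserving U L L := by
    refine ⟨U.measurable, ?_⟩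
    refine compProd_inv ν (piK κ) (piK κ) S hS TT TT.measurable ?_
    filter_upwards [heq] with y hy
    rw [piK_apply, piK_apply, ← hy]
    exact Measure.infinitePi_map_pi (fun _ : ℕ => κ y) (fun _ => T.measurable)
  have hfst : L.map Prod.fst = ν := Measure.fst_compProd ν (piK κ)
  let f : Y → ℝ := fun y => (κ y).real A
  have hf : Measurable f := (κ.measurable_coe hA).ennreal_toReal
  have hg : Measurable (freq A : (ℕ → X) → ℝ) := measurable_freq hA
  have hfg : ∀ᵐ p ∂L, freq A p.2 = f p.1 := by
    refine (Measure.ae_compProd_iff ?_).2 ?_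
    · exact measurableSet_eq_fun (hg.comp measurable_snd) (hf.comp measurable_fst)
    · exact Filter.Eventually.of_forall fun y => by
        rw [piK_apply]; exact freq_ae hA (κ y)
  let φ : Y → (ℤ → ℝ) := fun y k => f ((S.toEquiv ^ k : Equiv.Perm Y) y)
  let ψ : (ℕ → X) → (ℤ → ℝ) := fun x k => freq A ((TT.toEquiv ^ k : Equiv.Perm (ℕ → X)) x)
  have hφ : Measurable φ := measurable_pi_lambda _ fun k => hf.comp (meas_zpow S k)
  have hψ : Measurable ψ := measurable_pi_lambda _ fun k => hg.comp (meas_zpow TT k)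
  have hφS : ∀ y, φ (S y) = shift (φ y) := by
    intro y; ext k
    change f ((S.toEquiv ^ k : Equiv.Perm Y) (S y)) = f ((S.toEquiv ^ (k + 1) : Equiv.Perm Y) y)
    rw [zpow_add_one]; rfl
  have hψT : ∀ x, ψ (TT x) = shift (ψ x) := by
    intro x; ext k
    change freq A ((TT.toEquiv ^ k : Equiv.Perm (ℕ → X)) (TT x)) =
      freq A ((TT.toEquiv ^ (k + 1) : Equiv.Perm (ℕ → X)) x)
    rw [zpow_add_one]; rfl
  have hψφ : ∀ᵐ p ∂L, ψ p.2 = φ p.1 := by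
    have : ∀ k : ℤ, ∀ᵐ p ∂L, ψ p.2 k = φ p.1 k := by
      intro k
      filter_upwards [(mp_zpow U L hU k).quasiMeasurePreserving.ae hfg] with p hp
      rw [semiconj_zpow U.toEquiv S.toEquiv Prod.fst (fun _ => rfl),
        semiconj_zpow U.toEquiv TT.toEquiv Prod.snd (fun _ => rfl)] at hp
      exact hp
    filter_upwards [ae_all_iff.2 this] with p hp
    exact funext hp
  refine ⟨L.map Prod.snd, ℤ → ℝ, inferInstance, inferInstance, ν.map φ, shift, φ, ψ,
    Measure.isProbabilityMeasure_map measurable_snd.aemeasurable, ?_, ?_,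
    Measure.isProbabilityMeasure_map hφ.aemeasurable, ?_, ?_, hφ, rfl,
    Filter.Eventually.of_forall hφS, hψ, ?_, Filter.Eventually.of_forall hψT⟩
  · refine ⟨TT.measurable, ?_⟩
    change (L.map Prod.snd).map TT = _
    rw [Measure.map_map TT.measurable measurable_snd]
    conv_rhs => rw [← hU.map_eq, Measure.map_map measurable_snd U.measurable]
    rfl
  · intro n
    ext B hB
    have hm : Measurable fun p : Y × (ℕ → X) => p.2 n := (measurable_pi_apply n).comp measurable_snd
    rw [Measure.map_map (measurable_pi_apply n) measurable_snd, hmarg B hB]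
    rw [Measure.map_apply ((measurable_pi_apply n).comp measurable_snd) hB]
    change (Measure.compProd ν (piK κ)) ((fun p : Y × (ℕ → X) => p.2 n) ⁻¹' B) = _
    rw [Measure.compProd_apply (hm hB)]
    refine lintegral_congr fun y => ?_
    rw [piK_apply]
    conv_rhs => rw [← Measure.infinitePi_map_eval (fun _ : ℕ => κ y) n,
      Measure.map_apply (measurable_pi_apply n) hB]
    rfl
  · intro z hz
    refine hAc (z 0) ?_
    have : ∀ᵐ w ∂(ν.map φ), w = z := by
      rw [hz]
      exact (ae_dirac_iff (p := fun w => w = z) (measurableSet_singleton z)).2 rfl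
    filter_upwards [ae_of_ae_map hφ.aemeasurable this] with y hy
    rw [← hy]; rfl
  · refine ⟨shift.measurable, ?_⟩
    rw [Measure.map_map shift.measurable hφ]
    conv_rhs => rw [← hS.map_eq, Measure.map_map hφ S.measurable]
    congr 1
    exact (funext hφS).symm
  · rw [Measure.map_map hψ measurable_snd, ← hfst, Measure.map_map hφ measurable_fst]
    exact Measure.map_congr hψφ
end

section
/- Let T and S be invertible measure-preserving transformations of standard Borel probability spaces (X, 𝒜, μ) and (Y, ℬ, ν). Call a sub-σ-algebra ℱ ⊆ ℬ with S⁻¹ℱ = ℱ a T-factor σ-algebra of S if there exists a probability measure Λ on Y × X^ℕ, invariant under S × T^{(∞)} (where T^{(∞)} acts coordinatewise on X^ℕ), whose marginal on Y is ν and whose marginal on each X-coordinate is μ, such that for every F ∈ ℱ there is a measurable E ⊆ X^ℕ with Λ((F × X^ℕ) Δ (Y × E)) = 0. Then: (1) there exists a maximum T-factor σ-algebra ℱ_T of S, i.e., a T-factor σ-algebra containing every T-factor σ-algebra of S modulo ν-null sets; (2) under any joining λ of T and S, the σ-algebras 𝒜 ⊗ {∅, Y} and {∅, X} ⊗ ℬ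 are conditionally independent given {∅, X} ⊗ ℱ_T. -/
open MeasureTheory Set

/-- `F` is a `T`-factor σ-algebra of `S`: an `S`-invariant sub-σ-algebra of `Y` which is
a factor σ-algebra of a joining of `S` with countably many copies of `T` identified,
mod `0`, with a sub-σ-algebra of the `X^ℕ`-coordinates. -/
def IsTFactorSigmaAlgebra {X Y : Type*} [mX : MeasurableSpace X] [mY : MeasurableSpace Y]
    (μ : Measure X) (ν : Measure Y) (T : X ≃ᵐ X) (S : Y ≃ᵐ Y)
    (F : {m : MeasurableSpace Y // m ≤ mY}) : Prop :=
  (∀ B : Set Y, MeasurableSet[F.1] (⇑S ⁻¹' B) ↔ MeasurableSet[F.1] B) ∧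
  ∃ Lam : Measure (Y × (ℕ → X)),
    IsProbabilityMeasure Lam ∧
    MeasurePreserving (Prod.map ⇑S fun (x : ℕ → X) (n : ℕ) => T (x n)) Lam Lam ∧
    Lam.map Prod.fst = ν ∧
    (∀ n : ℕ, Lam.map (fun p : Y × (ℕ → X) => p.2 n) = μ) ∧
    ∀ Fs : Set Y, MeasurableSet[F.1] Fs → ∃ E : Set (ℕ → X), MeasurableSet E ∧
      Lam (symmDiff (Fs ×ˢ (univ : Set (ℕ → X))) ((univ : Set Y) ×ˢ E)) = 0

open ProbabilityTheory Filter Topology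

section TFactorHelpers

lemma tf_measurable_infinitePi {Y Z : Type*} [MeasurableSpace Y] [MeasurableSpace Z]
    (κ : ℕ → Kernel Y Z) [∀ n, IsMarkovKernel (κ n)] :
    Measurable fun y => Measure.infinitePi (fun n => κ n y) := by
  refine Measurable.measure_of_isPiSystem_of_isProbabilityMeasure
    generateFrom_squareCylinders.symm
    (isPiSystem_squareCylinders (fun _ ↦ MeasurableSpace.isPiSystem_measurableSet) (by simp)) ?_
  rintro _ ⟨s, t, ht, rfl⟩
  have ht' : ∀ i, MeasurableSet (t i) := fun i => by simpa using ht i (mem_univ i)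
  have : (fun y => Measure.infinitePi (fun n => κ n y) ((s : Set ℕ).pi t))
      = fun y => ∏ i ∈ s, κ i y (t i) := by
    funext y
    exact Measure.infinitePi_pi _ (fun i _ => ht' i)
  rw [this]
  exact Finset.measurable_prod _ fun i _ => (κ i).measurable_coe (ht' i)

/-- product kernel -/
noncomputable def tfPiKernel {Y Z : Type*} [MeasurableSpace Y] [MeasurableSpace Z]
    (κ : ℕ → Kernel Y Z) [∀ n, IsMarkovKernel (κ n)] : Kernel Y (ℕ → Z) where
  toFun y := Measure.infinitePi (fun n => κ n y)
  measurable' := tf_measurable_infinitePi κ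

lemma tfPiKernel_apply {Y Z : Type*} [MeasurableSpace Y] [MeasurableSpace Z]
    (κ : ℕ → Kernel Y Z) [∀ n, IsMarkovKernel (κ n)] (y : Y) :
    tfPiKernel κ y = Measure.infinitePi (fun n => κ n y) := rfl

instance tfPiKernel_markov {Y Z : Type*} [MeasurableSpace Y] [MeasurableSpace Z]
    (κ : ℕ → Kernel Y Z) [∀ n, IsMarkovKernel (κ n)] : IsMarkovKernel (tfPiKernel κ) where
  isProbabilityMeasure y := by rw [tfPiKernel_apply]; infer_instance

lemma tf_transport {Y Z : Type*} [MeasurableSpace Y] [MeasurableSpace Z]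
    (ν : Measure Y) [IsProbabilityMeasure ν] (S : Y ≃ᵐ Y) (hS : MeasurePreserving S ν ν)
    (R : Z → Z) (hR : Measurable R) (κ : Kernel Y Z) [IsMarkovKernel κ] :
    (ν ⊗ₘ κ).map (Prod.map S R) = ν ⊗ₘ ((κ.comap S.symm S.symm.measurable).map R) := by
  ext s hs
  have hm : Measurable (Prod.map S R) := S.measurable.prodMap hR
  have : IsMarkovKernel ((κ.comap S.symm S.symm.measurable).map R) :=
    Kernel.IsMarkovKernel.map _ hR
  rw [Measure.map_apply hm hs, Measure.compProd_apply (hm hs), Measure.compProd_apply hs]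
  conv_rhs => rw [← hS.map_eq]
  rw [lintegral_map (Kernel.measurable_kernel_prodMk_left hs) S.measurable]
  refine lintegral_congr fun y => ?_
  rw [Kernel.map_apply' _ hR _ (measurable_prodMk_left hs), Kernel.comap_apply]
  simp only [MeasurableEquiv.symm_apply_apply]
  rfl

lemma tf_pi_invariant {Y Z : Type*} [MeasurableSpace Y] [MeasurableSpace Z]
    [StandardBorelSpace Z]
    (ν : Measure Y) [IsProbabilityMeasure ν] (S : Y ≃ᵐ Y) (hS : MeasurePreserving S ν ν)
    (R : Z → Z) (hR : Measurable R) (κ : ℕ → Kernel Y Z) [∀ n, IsMarkovKernel (κ n)]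
    (h : ∀ n, (ν ⊗ₘ κ n).map (Prod.map S R) = ν ⊗ₘ κ n) :
    (ν ⊗ₘ tfPiKernel κ).map (Prod.map S fun (x : ℕ → Z) (n : ℕ) => R (x n))
      = ν ⊗ₘ tfPiKernel κ := by
  have hRR : Measurable fun (x : ℕ → Z) (n : ℕ) => R (x n) := by fun_prop
  rw [tf_transport ν S hS _ hRR]
  refine Measure.compProd_congr ?_
  have h1 : ∀ n, ∀ᵐ y ∂ν, ((κ n).comap S.symm S.symm.measurable).map R y = κ n y := by
    intro n
    have : IsMarkovKernel (((κ n).comap S.symm S.symm.measurable).map R) :=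
      Kernel.IsMarkovKernel.map _ hR
    refine Kernel.ae_eq_of_compProd_eq ?_
    rw [← tf_transport ν S hS _ hR, h n]
  filter_upwards [ae_all_iff.2 h1] with y hy
  rw [Kernel.map_apply _ hRR, Kernel.comap_apply, tfPiKernel_apply, tfPiKernel_apply,
    Measure.infinitePi_map_pi _ (fun _ => hR)]
  congr 1
  funext n
  rw [← hy n, Kernel.map_apply _ hR, Kernel.comap_apply]

lemma tf_pi_marginal {Y Z : Type*} [MeasurableSpace Y] [MeasurableSpace Z]
    (ν : Measure Y) [IsProbabilityMeasure ν]
    (κ : ℕ → Kernel Y Z) [∀ n, IsMarkovKernel (κ n)] (n : ℕ) :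
    (ν ⊗ₘ tfPiKernel κ).map (Prod.map id fun x : ℕ → Z => x n) = ν ⊗ₘ κ n := by
  have hm : Measurable fun x : ℕ → Z => x n := measurable_pi_apply n
  ext s hs
  have hm2 : Measurable (Prod.map (id : Y → Y) fun x : ℕ → Z => x n) := measurable_id.prodMap hm
  rw [Measure.map_apply hm2 hs, Measure.compProd_apply (hm2 hs), Measure.compProd_apply hs]
  refine lintegral_congr fun y => ?_
  rw [tfPiKernel_apply, ← Measure.infinitePi_map_eval (fun n => κ n y) n,
    Measure.map_apply hm (measurable_prodMk_left hs)]
  rfl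

/-- joinings -/
structure TFJoin {X Y : Type*} [MeasurableSpace X] [MeasurableSpace Y]
    (μ : Measure X) (ν : Measure Y) (T : X ≃ᵐ X) (S : Y ≃ᵐ Y)
    (Lam : Measure (Y × (ℕ → X))) : Prop where
  prob : IsProbabilityMeasure Lam
  inv : MeasurePreserving (Prod.map ⇑S fun (x : ℕ → X) (n : ℕ) => T (x n)) Lam Lam
  fst : Lam.map Prod.fst = ν
  snd : ∀ n : ℕ, Lam.map (fun p : Y × (ℕ → X) => p.2 n) = μ

lemma tf_pair_join {X Y : Type*} [MeasurableSpace X] [StandardBorelSpace X]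
    [MeasurableSpace Y]
    (μ : Measure X) (ν : Measure Y) [IsProbabilityMeasure ν]
    (T : X ≃ᵐ X) (S : Y ≃ᵐ Y) (hS : MeasurePreserving S ν ν)
    (κ : Kernel Y X) [IsMarkovKernel κ]
    (h : (ν ⊗ₘ κ).map (Prod.map S T) = ν ⊗ₘ κ) (h2 : (ν ⊗ₘ κ).map Prod.snd = μ) :
    TFJoin μ ν T S (ν ⊗ₘ tfPiKernel (fun _ => κ)) where
  prob := inferInstance
  inv := ⟨by fun_prop, tf_pi_invariant ν S hS T T.measurable (fun _ => κ) (fun _ => h)⟩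
  fst := Measure.fst_compProd _ _
  snd n := by
    rw [← h2, ← tf_pi_marginal ν (fun _ => κ) n, Measure.map_map (by fun_prop) (by fun_prop)]
    rfl

lemma tf_combine {X Y : Type*} [MeasurableSpace X] [StandardBorelSpace X]
    [MeasurableSpace Y] [StandardBorelSpace Y] [Nonempty X]
    (μ : Measure X) (ν : Measure Y) [IsProbabilityMeasure ν]
    (T : X ≃ᵐ X) (S : Y ≃ᵐ Y) (hS : MeasurePreserving S ν ν)
    (L : ℕ → Measure (Y × (ℕ → X))) (hL : ∀ i, TFJoin μ ν T S (L i)) :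
    ∃ Lam, TFJoin μ ν T S Lam ∧ ∀ i, ∃ r : (ℕ → X) → (ℕ → X), Measurable r ∧
      Lam.map (Prod.map id r) = L i := by
  have := fun i => (hL i).prob
  let κ : ℕ → Kernel Y (ℕ → X) := fun i => (L i).condKernel
  have hκ : ∀ i, ν ⊗ₘ κ i = L i := fun i => by
    have h := (L i).disintegrate (L i).condKernel
    rwa [Measure.fst, (hL i).fst] at h
  let M := ν ⊗ₘ tfPiKernel κ
  have hTT : Measurable fun (x : ℕ → X) (n : ℕ) => T (x n) := by fun_prop
  have hM := tf_pi_invariant ν S hS _ hTT κ (fun i => by rw [hκ i]; exact (hL i).inv.map_eq)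
  let e := Nat.pairEquiv
  let φ : Y × (ℕ → ℕ → X) → Y × (ℕ → X) := fun p => (p.1, fun n => p.2 n.unpair.1 n.unpair.2)
  have hφ : Measurable φ := by fun_prop
  have hr : ∀ i, (M.map φ).map (Prod.map id fun (x : ℕ → X) k => x (Nat.pair i k)) = L i := by
    intro i
    rw [Measure.map_map (by fun_prop) hφ, ← hκ i, ← tf_pi_marginal ν κ i]
    congr 1
    funext p
    simp [φ, Prod.map]
  refine ⟨M.map φ, ⟨?_, ?_, ?_, ?_⟩, fun i => ⟨_, by fun_prop, hr i⟩⟩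
  · exact Measure.isProbabilityMeasure_map hφ.aemeasurable
  · refine ⟨by fun_prop, ?_⟩
    conv_rhs => rw [show M = _ from hM.symm]
    rw [Measure.map_map (by fun_prop) hφ, Measure.map_map hφ (by fun_prop)]
    rfl
  · rw [Measure.map_map (by fun_prop) hφ]
    exact Measure.fst_compProd _ _
  · intro n
    have h := (hL n.unpair.1).snd n.unpair.2
    rw [← hr, Measure.map_map (by fun_prop) (by fun_prop)] at h
    rw [← h]
    congr 1
    funext p
    simp

/-- sigma-algebra attached to a joining -/
@[reducible] def tfSigma {X Y : Type*} [MeasurableSpace X] [MeasurableSpace Y]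
    (Lam : Measure (Y × (ℕ → X))) : MeasurableSpace Y where
  MeasurableSet' B := MeasurableSet B ∧ ∃ E : Set (ℕ → X), MeasurableSet E ∧
      Lam (symmDiff (B ×ˢ (univ : Set (ℕ → X))) ((univ : Set Y) ×ˢ E)) = 0
  measurableSet_empty := ⟨.empty, ∅, .empty, by simp⟩
  measurableSet_compl B := by
    rintro ⟨hB, E, hE, h⟩
    refine ⟨hB.compl, Eᶜ, hE.compl, ?_⟩
    rw [← h]
    congr 1
    ext p
    simp [mem_symmDiff]
    tauto
  measurableSet_iUnion B hB := by
    choose h1 E hE h using hB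
    refine ⟨.iUnion h1, ⋃ i, E i, .iUnion hE, ?_⟩
    refine measure_mono_null ?_ (measure_iUnion_null h)
    rintro p hp
    simp only [mem_symmDiff, mem_prod, mem_iUnion, mem_univ, and_true, true_and] at hp ⊢
    rcases hp with ⟨⟨i, hi⟩, h2⟩ | ⟨⟨i, hi⟩, h2⟩
    · exact ⟨i, Or.inl ⟨hi, fun h => h2 ⟨i, h⟩⟩⟩
    · exact ⟨i, Or.inr ⟨hi, fun h => h2 ⟨i, h⟩⟩⟩

lemma tfSigma_iff {X Y : Type*} [MeasurableSpace X] [MeasurableSpace Y]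
    (Lam : Measure (Y × (ℕ → X))) (B : Set Y) : MeasurableSet[tfSigma Lam] B ↔
      MeasurableSet B ∧ ∃ E : Set (ℕ → X), MeasurableSet E ∧
      Lam (symmDiff (B ×ˢ (univ : Set (ℕ → X))) ((univ : Set Y) ×ˢ E)) = 0 := Iff.rfl

lemma tfSigma_le {X Y : Type*} [MeasurableSpace X] [mY : MeasurableSpace Y]
    (Lam : Measure (Y × (ℕ → X))) : tfSigma Lam ≤ mY := fun _ h => h.1

lemma tfSigma_isT {X Y : Type*} [MeasurableSpace X] [mY : MeasurableSpace Y]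
    (μ : Measure X) (ν : Measure Y) (T : X ≃ᵐ X) (S : Y ≃ᵐ Y)
    (Lam : Measure (Y × (ℕ → X))) (h : TFJoin μ ν T S Lam) :
    IsTFactorSigmaAlgebra μ ν T S ⟨tfSigma Lam, tfSigma_le Lam⟩ := by
  have key : ∀ (B : Set Y) (E : Set (ℕ → X)), MeasurableSet B → MeasurableSet E →
      Lam (symmDiff ((S ⁻¹' B) ×ˢ (univ : Set (ℕ → X)))
        ((univ : Set Y) ×ˢ ((fun (x : ℕ → X) (n : ℕ) => T (x n)) ⁻¹' E)))
      = Lam (symmDiff (B ×ˢ (univ : Set (ℕ → X))) ((univ : Set Y) ×ˢ E)) := by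
    intro B E hB hE
    rw [← h.inv.measure_preimage
      ((hB.prod MeasurableSet.univ).symmDiff (MeasurableSet.univ.prod hE)).nullMeasurableSet]
    rfl
  refine ⟨fun B => ⟨?_, ?_⟩, Lam, h.prob, h.inv, h.fst, h.snd, fun Fs hF => hF.2⟩
  · rintro ⟨hB, E, hE, h0⟩
    have hB' : MeasurableSet B := S.measurableSet_preimage.1 hB
    have hE' : MeasurableSet ((fun (x : ℕ → X) (n : ℕ) => T.symm (x n)) ⁻¹' E) :=
      (by fun_prop : Measurable fun (x : ℕ → X) (n : ℕ) => T.symm (x n)) hE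
    refine ⟨hB', _, hE', ?_⟩
    rw [← key _ _ hB' hE', ← h0]
    congr 3
    ext x
    simp
  · rintro ⟨hB, E, hE, h0⟩
    exact ⟨S.measurable hB, _, (by fun_prop : Measurable fun (x : ℕ → X) (n : ℕ) => T (x n)) hE,
      by rw [key _ _ hB hE, h0]⟩

lemma tfSigma_mono {X Y : Type*} [MeasurableSpace X] [MeasurableSpace Y]
    (L Lam : Measure (Y × (ℕ → X))) (r : (ℕ → X) → (ℕ → X)) (hr : Measurable r)
    (h : Lam.map (Prod.map id r) = L) : tfSigma L ≤ tfSigma Lam := by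
  rintro B ⟨hB, E, hE, h0⟩
  refine ⟨hB, r ⁻¹' E, hr hE, ?_⟩
  rw [← h, Measure.map_apply (measurable_id.prodMap hr)
    ((hB.prod MeasurableSet.univ).symmDiff (MeasurableSet.univ.prod hE))] at h0
  exact h0

lemma tfSigma_congr {X Y : Type*} [MeasurableSpace X] [MeasurableSpace Y]
    (ν : Measure Y) (Lam : Measure (Y × (ℕ → X))) (h : Lam.map Prod.fst = ν)
    (B B' : Set Y) (hB : MeasurableSet B) (hB' : MeasurableSet[tfSigma Lam] B')
    (hBB : B =ᵐ[ν] B') : MeasurableSet[tfSigma Lam] B := by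
  obtain ⟨_, E, hE, h0⟩ := hB'
  refine ⟨hB, E, hE, ?_⟩
  rw [measure_symmDiff_eq_zero_iff] at h0 ⊢
  refine EventuallyEq.trans ?_ h0
  rw [← h] at hBB
  have h1 := ae_of_ae_map measurable_fst.aemeasurable hBB
  filter_upwards [h1] with p hp
  have hp' : (p.1 ∈ B) = (p.1 ∈ B') := hp
  change (p ∈ _ ×ˢ _) = (p ∈ _ ×ˢ _)
  simp [hp']

lemma tf_exists_max {X Y : Type*} [MeasurableSpace X] [StandardBorelSpace X]
    [MeasurableSpace Y] [StandardBorelSpace Y] [Nonempty X]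
    (μ : Measure X) (ν : Measure Y) [IsProbabilityMeasure ν]
    (T : X ≃ᵐ X) (S : Y ≃ᵐ Y) (hS : MeasurePreserving S ν ν)
    (hne : ∃ L, TFJoin μ ν T S L) :
    ∃ Lam, TFJoin μ ν T S Lam ∧ ∀ L, TFJoin μ ν T S L → tfSigma L ≤ tfSigma Lam := by
  let A : Set (Lp ℝ 1 ν) := {f | ∃ L, TFJoin μ ν T S L ∧ ∃ (B : Set Y) (hB : MeasurableSet B),
    MeasurableSet[tfSigma L] B ∧ f = indicatorConstLp 1 hB (measure_ne_top ν B) (1 : ℝ)}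
  have : Fact ((1 : ENNReal) ≠ ⊤) := ⟨by simp⟩
  obtain ⟨c, hcA, hcc, hcl⟩ :=
    (TopologicalSpace.IsSeparable.of_separableSpace A).exists_countable_dense_subset
  obtain ⟨L0, hL0⟩ := hne
  have hAne : A.Nonempty := ⟨_, L0, hL0, ∅, .empty, MeasurableSpace.measurableSet_empty _, rfl⟩
  have hcne : c.Nonempty := by
    obtain ⟨a, ha⟩ := hAne
    exact closure_nonempty_iff.1 ⟨a, hcl ha⟩
  obtain ⟨f, rfl⟩ := hcc.exists_eq_range hcne
  choose L hL B hB hLB hf using fun n => hcA (mem_range_self n)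
  obtain ⟨Lam, hLam, hr⟩ := tf_combine μ ν T S hS L hL
  refine ⟨Lam, hLam, fun L' hL' B' hB' => ?_⟩
  have hle := tfSigma_le Lam
  have hclosed : IsClosed {g : Lp ℝ 1 ν | AEStronglyMeasurable[tfSigma Lam] g ν} :=
    isClosed_aestronglyMeasurable hle
  have hsub : closure (range f) ⊆ {g : Lp ℝ 1 ν | AEStronglyMeasurable[tfSigma Lam] g ν} := by
    refine closure_minimal ?_ hclosed
    rintro _ ⟨n, rfl⟩
    obtain ⟨r, hrm, hrL⟩ := hr n
    have hBn : MeasurableSet[tfSigma Lam] (B n) := tfSigma_mono _ _ r hrm hrL _ (hLB n)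
    refine ⟨(B n).indicator fun _ => (1 : ℝ), ?_, ?_⟩
    · exact (@stronglyMeasurable_const _ _ (tfSigma Lam) _ _).indicator hBn
    · rw [hf n]; exact indicatorConstLp_coeFn
  have hmem := hsub (hcl ⟨L', hL', B', hB'.1, hB', rfl⟩ :
    indicatorConstLp 1 hB'.1 (measure_ne_top ν B') (1 : ℝ) ∈ _)
  obtain ⟨g, hg, hge⟩ := hmem
  refine tfSigma_congr ν Lam hLam.fst B' (g ⁻¹' {1}) hB'.1
    (hg.measurable (measurableSet_singleton 1)) ?_
  have h1 : indicatorConstLp 1 hB'.1 (measure_ne_top ν B') (1 : ℝ) =ᵐ[ν]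
    B'.indicator fun _ => (1 : ℝ) := indicatorConstLp_coeFn
  filter_upwards [hge, h1] with y hy1 hy2
  rw [hy1] at hy2
  apply propext
  change y ∈ B' ↔ g y = 1
  rw [hy2]
  by_cases hy : y ∈ B' <;> simp [hy]

lemma tf_slln {X Y : Type*} [MeasurableSpace X] [StandardBorelSpace X]
    [MeasurableSpace Y]
    (ν : Measure Y) [IsProbabilityMeasure ν]
    (κ : Kernel Y X) [IsMarkovKernel κ] (U : Set X) (hU : MeasurableSet U) :
    Measurable[tfSigma (ν ⊗ₘ tfPiKernel (fun _ => κ))] fun y => (κ y).real U := by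
  have hf : Measurable fun y => (κ y).real U := (κ.measurable_coe hU).ennreal_toReal
  let a : ℕ → (ℕ → X) → ℝ := fun n x =>
    (∑ i ∈ Finset.range n, U.indicator (fun _ => (1 : ℝ)) (x i)) / n
  have hind : Measurable (U.indicator (fun _ => (1 : ℝ))) := measurable_const.indicator hU
  have ha : ∀ n, Measurable (a n) := fun n => by
    refine Measurable.div_const (Finset.measurable_sum _ fun i _ => ?_) _
    exact hind.comp (measurable_pi_apply i)
  let g : (ℕ → X) → ℝ := fun x => limsup (fun n => a n x) atTop
  have hg : Measurable g := Measurable.limsup ha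
  have hae : ∀ᵐ p ∂(ν ⊗ₘ tfPiKernel (fun _ => κ)), g p.2 = (κ p.1).real U := by
    refine Measure.ae_compProd_of_ae_ae
      (measurableSet_eq_fun (hg.comp measurable_snd) (hf.comp measurable_fst)) ?_
    refine Eventually.of_forall fun y => ?_
    rw [tfPiKernel_apply]
    have hi : iIndepFun (fun (i : ℕ) (x : ℕ → X) => U.indicator (fun _ => (1 : ℝ)) (x i))
        (Measure.infinitePi (fun _ : ℕ => κ y)) :=
      iIndepFun_infinitePi (X := fun _ => U.indicator (fun _ => (1 : ℝ))) (fun _ => hind)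
    have hlaw : ∀ i : ℕ, IdentDistrib (fun (x : ℕ → X) => U.indicator (fun _ => (1 : ℝ)) (x i))
        (U.indicator (fun _ => (1 : ℝ))) (Measure.infinitePi (fun _ : ℕ => κ y)) (κ y) := by
      intro i
      refine ⟨(hind.comp (measurable_pi_apply i)).aemeasurable, hind.aemeasurable, ?_⟩
      rw [← Measure.infinitePi_map_eval (fun _ : ℕ => κ y) i,
        Measure.map_map hind (measurable_pi_apply i)]
      simp [Measure.infinitePi_map_eval]
      rfl
    have hint : Integrable (U.indicator (fun _ => (1 : ℝ))) (κ y) :=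
      (integrable_const _).indicator hU
    have := strong_law_ae_real
      (fun (i : ℕ) (x : ℕ → X) => U.indicator (fun _ => (1 : ℝ)) (x i))
      ((hlaw 0).integrable_iff.2 hint)
      (fun i j hij => hi.indepFun hij) (fun i => (hlaw i).trans (hlaw 0).symm)
    rw [(hlaw 0).integral_eq, integral_indicator_const _ hU] at this
    filter_upwards [this] with x hx
    have := hx.limsup_eq
    simpa [g, a] using this
  intro s hs
  refine ⟨hf hs, g ⁻¹' s, hg hs, ?_⟩
  rw [measure_symmDiff_eq_zero_iff]
  filter_upwards [hae] with p hp
  apply propext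
  change p ∈ _ ×ˢ _ ↔ p ∈ _ ×ˢ _
  simp [hp]

end TFactorHelpers

/-- There is a maximum `T`-factor σ-algebra `ℱ_T` of `S`, and under any joining of `T`
and `S` the two coordinate σ-algebras are conditionally independent given `ℱ_T` (lifted
to the second coordinate). -/
theorem maximal_T_factor_sigma_algebra
    {X Y : Type*} [mX : MeasurableSpace X] [StandardBorelSpace X]
    [mY : MeasurableSpace Y] [StandardBorelSpace Y]
    (μ : Measure X) (ν : Measure Y) [IsProbabilityMeasure μ] [IsProbabilityMeasure ν]
    (T : X ≃ᵐ X) (S : Y ≃ᵐ Y)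
    (hT : MeasurePreserving T μ μ) (hS : MeasurePreserving S ν ν) :
    ∃ FT : {m : MeasurableSpace Y // m ≤ mY},
      IsTFactorSigmaAlgebra μ ν T S FT ∧
      -- `FT` contains every `T`-factor σ-algebra of `S`, modulo `ν`-null sets:
      (∀ F : {m : MeasurableSpace Y // m ≤ mY}, IsTFactorSigmaAlgebra μ ν T S F →
        ∀ B : Set Y, MeasurableSet[F.1] B →
          ∃ B' : Set Y, MeasurableSet[FT.1] B' ∧ ν (symmDiff B B') = 0) ∧
      -- conditional independence of the coordinates given `FT`, under any joining:
      (∀ lam : Measure (X × Y),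
        lam.map Prod.fst = μ → lam.map Prod.snd = ν →
        MeasurePreserving (Prod.map T S) lam lam →
        ∀ (U : Set X) (V : Set Y), MeasurableSet U → MeasurableSet V →
          lam[((U ×ˢ (univ : Set Y)) ∩ ((univ : Set X) ×ˢ V)).indicator
                (fun _ => (1 : ℝ)) | FT.1.comap Prod.snd]
            =ᵐ[lam]
          fun p => (lam[(U ×ˢ (univ : Set Y)).indicator (fun _ => (1 : ℝ))
                      | FT.1.comap Prod.snd]) p *
                   (lam[((univ : Set X) ×ˢ V).indicator (fun _ => (1 : ℝ))
                      | FT.1.comap Prod.snd]) p) := by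
  have hXne : Nonempty X := nonempty_of_isProbabilityMeasure μ
  have hbase : ∃ L, TFJoin μ ν T S L := by
    refine ⟨_, tf_pair_join μ ν T S hS (Kernel.const Y μ) ?_ ?_⟩
    · rw [Measure.compProd_const]
      exact (hS.prod hT).map_eq
    · rw [Measure.compProd_const, Measure.map_snd_prod]
      simp
  obtain ⟨Lam, hLam, hmax⟩ := tf_exists_max μ ν T S hS hbase
  refine ⟨⟨tfSigma Lam, tfSigma_le Lam⟩, tfSigma_isT μ ν T S Lam hLam, ?_, ?_⟩
  · rintro F ⟨-, L, h1, h2, h3, h4, h5⟩ B hB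
    refine ⟨B, hmax L ⟨h1, h2, h3, h4⟩ B ⟨F.2 B hB, h5 B hB⟩, by simp⟩
  intro lam hl1 hl2 hinv U V hU hV
  have hprob : IsProbabilityMeasure lam := by
    refine ⟨?_⟩
    have : (lam.map Prod.fst) univ = 1 := by rw [hl1]; exact measure_univ
    rwa [Measure.map_apply measurable_fst .univ, preimage_univ] at this
  let κ : Kernel Y X := condDistrib Prod.fst Prod.snd lam
  have hκ : ν ⊗ₘ κ = lam.map Prod.swap := by
    have h := compProd_map_condDistrib (mβ := mY) (μ := lam) (X := (Prod.snd : X × Y → Y))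
      (Y := (Prod.fst : X × Y → X)) measurable_fst.aemeasurable
    rw [hl2] at h
    exact h
  have hjoin : TFJoin μ ν T S (ν ⊗ₘ tfPiKernel (fun _ => κ)) := by
    refine tf_pair_join μ ν T S hS κ ?_ ?_
    · rw [hκ, Measure.map_map (by fun_prop) (by fun_prop)]
      conv_rhs => rw [← hinv.map_eq]
      rw [Measure.map_map (by fun_prop) (by fun_prop)]
      rfl
    · rw [hκ, Measure.map_map (by fun_prop) (by fun_prop), ← hl1]
      rfl
  have hfm : Measurable[tfSigma Lam] fun y => (κ y).real U :=
    (tf_slln ν κ U hU).mono (hmax _ hjoin) le_rfl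
  have hle1 : (tfSigma Lam).comap (Prod.snd : X × Y → Y) ≤ mY.comap Prod.snd :=
    MeasurableSpace.comap_mono (tfSigma_le Lam)
  have hle2 : mY.comap (Prod.snd : X × Y → Y) ≤ (inferInstance : MeasurableSpace (X × Y)) :=
    measurable_snd.comap_le
  have hcd : (fun p : X × Y => (κ p.2).real U) =ᵐ[lam]
      lam[(U ×ˢ (univ : Set Y)).indicator (fun _ => (1 : ℝ)) | mY.comap Prod.snd] := by
    rw [prod_univ]
    exact condDistrib_ae_eq_condExp measurable_snd measurable_fst hU
  have hfm2 : Measurable[(tfSigma Lam).comap (Prod.snd : X × Y → Y)]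
      fun p : X × Y => (κ p.2).real U :=
    hfm.comp (comap_measurable (Prod.snd : X × Y → Y))
  have hfs := hfm2.stronglyMeasurable
  have hbd : ∀ᵐ p ∂lam, ‖(fun p : X × Y => (κ p.2).real U) p‖ ≤ 1 :=
    Eventually.of_forall fun p => by
      simp only [Real.norm_eq_abs, abs_of_nonneg measureReal_nonneg]
      exact measureReal_le_one
  have hUi : Integrable ((U ×ˢ (univ : Set Y)).indicator (fun _ => (1 : ℝ))) lam :=
    (integrable_const _).indicator (hU.prod .univ)
  have hVi : Integrable (((univ : Set X) ×ˢ V).indicator (fun _ => (1 : ℝ))) lam :=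
    (integrable_const _).indicator (MeasurableSet.univ.prod hV)
  have hfi : Integrable (fun p : X × Y => (κ p.2).real U) lam :=
    integrable_condExp.congr hcd.symm
  have hVs : StronglyMeasurable[mY.comap (Prod.snd : X × Y → Y)]
      (((univ : Set X) ×ˢ V).indicator (fun _ => (1 : ℝ))) := by
    refine (@stronglyMeasurable_const _ _ (mY.comap (Prod.snd : X × Y → Y)) _ _).indicator ?_
    exact ⟨V, hV, by rw [univ_prod]⟩
  have hVb : ∀ᵐ p ∂lam, ‖((univ : Set X) ×ˢ V).indicator (fun _ => (1 : ℝ)) p‖ ≤ 1 :=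
    Eventually.of_forall fun p => by
      by_cases hp : p ∈ (univ : Set X) ×ˢ V <;> simp only [indicator, hp] <;> simp
  have e1 : lam[(U ×ˢ (univ : Set Y)).indicator (fun _ => (1 : ℝ)) | (tfSigma Lam).comap Prod.snd]
      =ᵐ[lam] fun p => (κ p.2).real U := by
    refine (condExp_condExp_of_le hle1 hle2).symm.trans ?_
    refine (condExp_congr_ae hcd.symm).trans ?_
    rw [condExp_of_stronglyMeasurable (hle1.trans hle2) hfs hfi]
  have hmul : ((U ×ˢ (univ : Set Y)) ∩ ((univ : Set X) ×ˢ V)).indicator (fun _ => (1 : ℝ))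
      = ((univ : Set X) ×ˢ V).indicator (fun _ => (1 : ℝ)) *
        (U ×ˢ (univ : Set Y)).indicator (fun _ => (1 : ℝ)) := by
    funext p
    by_cases h1 : p.1 ∈ U <;> by_cases h2 : p.2 ∈ V <;> simp [indicator, h1, h2]
  have e2 : lam[((U ×ˢ (univ : Set Y)) ∩ ((univ : Set X) ×ˢ V)).indicator (fun _ => (1 : ℝ))
      | mY.comap Prod.snd] =ᵐ[lam] (fun p => (κ p.2).real U) *
        ((univ : Set X) ×ˢ V).indicator (fun _ => (1 : ℝ)) := by
    rw [hmul]
    refine (condExp_stronglyMeasurable_mul_of_bound hle2 hVs hUi 1 hVb).trans ?_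
    filter_upwards [hcd] with p hp
    simp only [Pi.mul_apply]
    rw [← hp, mul_comm]
  have e3 : lam[((U ×ˢ (univ : Set Y)) ∩ ((univ : Set X) ×ˢ V)).indicator (fun _ => (1 : ℝ))
      | (tfSigma Lam).comap Prod.snd] =ᵐ[lam] (fun p => (κ p.2).real U) *
        lam[((univ : Set X) ×ˢ V).indicator (fun _ => (1 : ℝ))
          | (tfSigma Lam).comap Prod.snd] := by
    refine (condExp_condExp_of_le hle1 hle2).symm.trans ?_
    refine (condExp_congr_ae e2).trans ?_
    exact condExp_stronglyMeasurable_mul_of_bound (hle1.trans hle2) hfs hVi 1 hbd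
  filter_upwards [e1, e3] with p h1 h3
  rw [h3, h1]
  rfl
end

section
/- Any discrete-spectrum system is disjoint from any weakly mixing system: if T is an invertible measure-preserving transformation of a probability space (X, 𝒜, μ) with discrete spectrum, and S is a weakly mixing invertible measure-preserving transformation of a probability space (Y, ℬ, ν), then the only joining of T and S is the product measure μ ⊗ ν. -/
open MeasureTheory

theorem exists_adj_comp {E F G : Type*} [NormedAddCommGroup E] [InnerProductSpace ℂ E]
    [NormedAddCommGroup F] [InnerProductSpace ℂ F] [NormedAddCommGroup G] [InnerProductSpace ℂ G]
    [CompleteSpace E] [CompleteSpace F] [CompleteSpace G] (A : F →ₗᵢ[ℂ] G) (B : E →ₗᵢ[ℂ] G) :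
    ∃ P : E →L[ℂ] F, ∀ g f, inner ℂ g (P f) = inner ℂ (A g) (B f) :=
  ⟨(ContinuousLinearMap.adjoint A.toContinuousLinearMap).comp B.toContinuousLinearMap,
    fun g f => ContinuousLinearMap.adjoint_inner_right A.toContinuousLinearMap g (B f)⟩

theorem wm_eig_const {Y : Type*} [MeasurableSpace Y] (ν : Measure Y) [IsProbabilityMeasure ν]
    (S : Y ≃ᵐ Y) (hS : MeasurePreserving S ν ν)
    (hwm : Ergodic (Prod.map S S) (ν.prod ν)) (h : Lp ℂ 2 ν) (c : ℂ) (hc : ‖c‖ = 1)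
    (hh : Lp.compMeasurePreserving (⇑S) hS h = c • h) :
    h ∈ Submodule.span ℂ
      {indicatorConstLp 2 MeasurableSet.univ (measure_ne_top ν Set.univ) (1 : ℂ)} := by
  have h1 : ∀ᵐ y ∂ν, h (S y) = c * h y := by
    have a1 := Lp.coeFn_compMeasurePreserving h hS
    have a2 := Lp.coeFn_smul c h
    rw [hh] at a1
    filter_upwards [a1, a2] with y b1 b2
    rw [b2] at b1
    simpa using b1.symm
  have hcc : c * (starRingEnd ℂ) c = 1 := by
    rw [Complex.mul_conj, Complex.normSq_eq_norm_sq, hc]; simp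
  have hm := Lp.aestronglyMeasurable h
  obtain ⟨k, hk⟩ := hwm.quasiErgodic.ae_eq_const_of_ae_eq_comp_ae
    (g := fun z : Y × Y => h z.1 * (starRingEnd ℂ) (h z.2))
    (hm.comp_fst.mul (Complex.continuous_conj.comp_aestronglyMeasurable hm.comp_snd))
    (by
      have e1 := (Measure.quasiMeasurePreserving_fst (μ := ν) (ν := ν)).ae h1
      have e2 := (Measure.quasiMeasurePreserving_snd (μ := ν) (ν := ν)).ae h1
      filter_upwards [e1, e2] with z b1 b2
      simp only [Function.comp, Prod.map_fst, Prod.map_snd, b1, b2, map_mul]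
      linear_combination (h z.1 * (starRingEnd ℂ) (h z.2)) * hcc)
  have hk2 := Measure.ae_ae_of_ae_prod hk
  have key : ∃ a : ℂ, ∀ᵐ y ∂ν, h y = a := by
    by_cases h0 : ∀ᵐ y ∂ν, h y = 0
    · exact ⟨0, h0⟩
    · obtain ⟨y, hy0, hy⟩ := ((Filter.not_eventually.1 h0).and_eventually hk2).exists
      refine ⟨(starRingEnd ℂ) (k / h y), ?_⟩
      filter_upwards [hy] with z hz
      have hz' : h y * (starRingEnd ℂ) (h z) = k := hz
      rw [← hz', mul_div_cancel_left₀ _ hy0, Complex.conj_conj]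
  obtain ⟨a, ha⟩ := key
  refine Submodule.mem_span_singleton.2 ⟨a, ?_⟩
  apply Lp.ext
  filter_upwards [ha, Lp.coeFn_smul a (indicatorConstLp 2 MeasurableSet.univ
    (measure_ne_top ν Set.univ) (1 : ℂ)), indicatorConstLp_coeFn (p := 2)
    (hs := MeasurableSet.univ) (hμs := measure_ne_top ν Set.univ) (c := (1 : ℂ))] with y b1 b2 b3
  rw [b2, b1, Pi.smul_apply, b3]; simp

/-- Any discrete-spectrum system is disjoint from any weakly mixing system: the only
joining of them is the product measure. -/
theorem discrete_spectrum_disjoint_weakly_mixing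
    {X Y : Type*} [MeasurableSpace X] [MeasurableSpace Y]
    (μ : Measure X) (ν : Measure Y) [IsProbabilityMeasure μ] [IsProbabilityMeasure ν]
    (T : X ≃ᵐ X) (S : Y ≃ᵐ Y)
    (hT : MeasurePreserving T μ μ) (hS : MeasurePreserving S ν ν)
    -- `T` has discrete spectrum: the span of the eigenvectors of the Koopman operator
    -- `f ↦ f ∘ T` is dense in `L²(μ)`:
    (hds : (Submodule.span ℂ
        {f : Lp ℂ 2 μ | ∃ c : ℂ,
          Lp.compMeasurePreserving (⇑T) hT f = c • f}).topologicalClosure = ⊤)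
    -- `S` is weakly mixing:
    (hwm : Ergodic (Prod.map S S) (ν.prod ν)) :
    ∀ lam : Measure (X × Y),
      lam.map Prod.fst = μ → lam.map Prod.snd = ν →
      MeasurePreserving (Prod.map T S) lam lam →
      lam = μ.prod ν := by
  intro lam hl1 hl2 hl
  have hfst : MeasurePreserving (Prod.fst : X × Y → X) lam μ := ⟨measurable_fst, hl1⟩
  have hsnd : MeasurePreserving (Prod.snd : X × Y → Y) lam ν := ⟨measurable_snd, hl2⟩
  have : IsProbabilityMeasure lam := ⟨by
    have := hfst.measure_preimage MeasurableSet.univ.nullMeasurableSet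
    simpa using this⟩
  let A : Lp ℂ 2 ν →ₗᵢ[ℂ] Lp ℂ 2 lam := Lp.compMeasurePreservingₗᵢ ℂ Prod.snd hsnd
  let B : Lp ℂ 2 μ →ₗᵢ[ℂ] Lp ℂ 2 lam := Lp.compMeasurePreservingₗᵢ ℂ Prod.fst hfst
  let U : Lp ℂ 2 ν →ₗᵢ[ℂ] Lp ℂ 2 ν := Lp.compMeasurePreservingₗᵢ ℂ S hS
  let V : Lp ℂ 2 lam →ₗᵢ[ℂ] Lp ℂ 2 lam := Lp.compMeasurePreservingₗᵢ ℂ _ hl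
  have hVA : ∀ g, V (A g) = A (U g) := fun g => by
    have h1 := Lp.compMeasurePreserving_comp_apply g hsnd hl
    have h2 := Lp.compMeasurePreserving_comp_apply g hS hsnd
    exact h1.symm.trans h2
  have hVB : ∀ f, V (B f) = B (Lp.compMeasurePreserving (⇑T) hT f) := fun f => by
    have h1 := Lp.compMeasurePreserving_comp_apply f hfst hl
    have h2 := Lp.compMeasurePreserving_comp_apply f hT hfst
    exact h1.symm.trans h2
  have hU : ∀ g, ∃ g', U g' = g := fun g => by
    have hS' : MeasurePreserving S.symm ν ν := hS.symm S
    refine ⟨Lp.compMeasurePreserving S.symm hS' g, ?_⟩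
    have h1 := Lp.compMeasurePreserving_comp_apply g hS' hS
    refine h1.symm.trans ?_
    apply Lp.ext
    filter_upwards [Lp.coeFn_compMeasurePreserving g (hS'.comp hS)] with y hy
    rw [hy]; simp
  obtain ⟨P, hP⟩ := exists_adj_comp A B
  set one := indicatorConstLp 2 MeasurableSet.univ (measure_ne_top ν Set.univ) (1 : ℂ) with hone
  have hmem : ∀ f, P f ∈ Submodule.span ℂ {one} := by
    have hle : (Submodule.span ℂ {f : Lp ℂ 2 μ | ∃ c : ℂ,
          Lp.compMeasurePreserving (⇑T) hT f = c • f}).topologicalClosure ≤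
          (Submodule.span ℂ {one}).comap P.toLinearMap := by
      apply Submodule.topologicalClosure_minimal
      · rw [Submodule.span_le]
        rintro f ⟨c, hf⟩
        change P f ∈ Submodule.span ℂ {one}
        by_cases hf0 : f = 0
        · rw [hf0, map_zero]; exact Submodule.zero_mem _
        have hc : ‖c‖ = 1 := by
          have := Lp.norm_compMeasurePreserving f hT
          rw [hf, norm_smul] at this
          exact mul_right_cancel₀ (norm_ne_zero_iff.2 hf0) (this.trans (one_mul _).symm)
        refine wm_eig_const ν S hS hwm (P f) c hc ?_
        change U (P f) = c • P f
        refine ext_inner_left ℂ fun g => ?_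
        obtain ⟨g', rfl⟩ := hU g
        rw [U.inner_map_map, hP, inner_smul_right, hP, ← V.inner_map_map, hVA, hVB, hf, map_smul,
          inner_smul_right]
      · exact (Submodule.closed_of_finiteDimensional (Submodule.span ℂ {one})).preimage
          P.continuous
    intro f
    rw [hds] at hle
    exact hle Submodule.mem_top
  symm
  refine Measure.prod_eq fun s t hs ht => ?_
  obtain ⟨a, ha⟩ := Submodule.mem_span_singleton.1
    (hmem (indicatorConstLp 2 hs (measure_ne_top μ s) (1 : ℂ)))
  have main : ∀ t (ht : MeasurableSet t), a * ν.real t = lam.real (s ×ˢ t) := by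
    intro t ht
    have h1 := hP (indicatorConstLp 2 ht (measure_ne_top ν t) (1 : ℂ))
      (indicatorConstLp 2 hs (measure_ne_top μ s) (1 : ℂ))
    have hA : A (indicatorConstLp 2 ht (measure_ne_top ν t) (1 : ℂ)) =
      indicatorConstLp 2 (measurable_snd ht) (measure_ne_top _ _) (1 : ℂ) :=
      Lp.indicatorConstLp_compMeasurePreserving ht (measure_ne_top ν t) (1 : ℂ) hsnd
    have hB : B (indicatorConstLp 2 hs (measure_ne_top μ s) (1 : ℂ)) =
      indicatorConstLp 2 (measurable_fst hs) (measure_ne_top _ _) (1 : ℂ) :=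
      Lp.indicatorConstLp_compMeasurePreserving hs (measure_ne_top μ s) (1 : ℂ) hfst
    rw [← ha, inner_smul_right, hA, hB, hone,
      L2.inner_indicatorConstLp_indicatorConstLp, L2.inner_indicatorConstLp_indicatorConstLp] at h1
    have hst : (Prod.snd ⁻¹' t ∩ Prod.fst ⁻¹' s : Set (X × Y)) = s ×ˢ t := by
      ext z; simp [and_comm]
    rw [hst] at h1
    simpa using h1
  have hu := main Set.univ MeasurableSet.univ
  have hs1 : lam (s ×ˢ Set.univ) = μ s := by
    rw [← hfst.measure_preimage hs.nullMeasurableSet, Set.prod_univ]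
  have hs2 : lam.real (s ×ˢ Set.univ) = μ.real s := by simp only [Measure.real, hs1]
  rw [hs2] at hu
  have ha' : a = μ.real s := by simpa using hu
  have h3 := main t ht
  rw [ha'] at h3
  have h4 : μ.real s * ν.real t = lam.real (s ×ˢ t) := by exact_mod_cast h3
  rw [← ENNReal.toReal_eq_toReal_iff' (measure_ne_top _ _)
    (ENNReal.mul_ne_top (measure_ne_top _ _) (measure_ne_top _ _)), ENNReal.toReal_mul]
  exact h4.symm
end

section
/- Let ξ₁, ξ₂, ξ₃ be random variables on a probability space, taking values in a finite set A, identically distributed and pairwise independent, and suppose there exists a function f : A × A → A such that ξ₃ = f(ξ₁, ξ₂) almost surely. Then their common probability law is the uniform distribution on the set {a ∈ A : P(ξ₁ = a) > 0} of values taken with positive probability. -/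
open MeasureTheory ProbabilityTheory
open scoped ENNReal

/-- If `ξ₁, ξ₂, ξ₃` are identically distributed, pairwise independent random variables
with values in a finite set, and `ξ₃ = f(ξ₁, ξ₂)` a.s. for some function `f`, then their
common law is uniform on the set of values taken with positive probability. -/
theorem uniform_law_of_pairwise_indep_functional_relation
    {Ω : Type*} [MeasurableSpace Ω] (P : Measure Ω) [IsProbabilityMeasure P]
    {A : Type*} [Fintype A] [MeasurableSpace A] [MeasurableSingletonClass A]
    (ξ₁ ξ₂ ξ₃ : Ω → A)
    (hm1 : Measurable ξ₁) (hm2 : Measurable ξ₂) (hm3 : Measurable ξ₃)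
    (hid12 : P.map ξ₁ = P.map ξ₂) (hid13 : P.map ξ₁ = P.map ξ₃)
    (hi12 : IndepFun ξ₁ ξ₂ P) (hi13 : IndepFun ξ₁ ξ₃ P) (hi23 : IndepFun ξ₂ ξ₃ P)
    (f : A × A → A) (hf : ∀ᵐ ω ∂P, ξ₃ ω = f (ξ₁ ω, ξ₂ ω)) :
    ∀ a : A, P (ξ₁ ⁻¹' {a}) ≠ 0 →
      P (ξ₁ ⁻¹' {a}) = ((Nat.card {b : A // P (ξ₁ ⁻¹' {b}) ≠ 0} : ℝ≥0∞))⁻¹ := by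
  classical
  have e2 : ∀ b, P (ξ₂ ⁻¹' {b}) = P (ξ₁ ⁻¹' {b}) := fun b => by
    rw [← Measure.map_apply hm1 (measurableSet_singleton b),
      ← Measure.map_apply hm2 (measurableSet_singleton b), hid12]
  have e3 : ∀ b, P (ξ₃ ⁻¹' {b}) = P (ξ₁ ⁻¹' {b}) := fun b => by
    rw [← Measure.map_apply hm1 (measurableSet_singleton b),
      ← Measure.map_apply hm3 (measurableSet_singleton b), hid13]
  have i12 : ∀ a b, P (ξ₁ ⁻¹' {a} ∩ ξ₂ ⁻¹' {b}) = P (ξ₁ ⁻¹' {a}) * P (ξ₁ ⁻¹' {b}) :=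
    fun a b => by
      rw [hi12.measure_inter_preimage_eq_mul _ _ (measurableSet_singleton a)
        (measurableSet_singleton b), e2]
  have i13 : ∀ a b, P (ξ₁ ⁻¹' {a} ∩ ξ₃ ⁻¹' {b}) = P (ξ₁ ⁻¹' {a}) * P (ξ₁ ⁻¹' {b}) :=
    fun a b => by
      rw [hi13.measure_inter_preimage_eq_mul _ _ (measurableSet_singleton a)
        (measurableSet_singleton b), e3]
  have i23 : ∀ a b, P (ξ₂ ⁻¹' {a} ∩ ξ₃ ⁻¹' {b}) = P (ξ₁ ⁻¹' {a}) * P (ξ₁ ⁻¹' {b}) :=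
    fun a b => by
      rw [hi23.measure_inter_preimage_eq_mul _ _ (measurableSet_singleton a)
        (measurableSet_singleton b), e2, e3]
  have hsum : ∑ b, P (ξ₁ ⁻¹' {b}) = 1 := by
    rw [sum_measure_preimage_singleton Finset.univ
      (fun y _ => hm1 (measurableSet_singleton y))]
    simp
  have hfin : ∀ b, P (ξ₁ ⁻¹' {b}) ≠ ⊤ := fun b => measure_ne_top _ _
  have h1 : ∀ a b, P (ξ₁ ⁻¹' {b}) ≠ 0 → P (ξ₁ ⁻¹' {a}) ≤ P (ξ₁ ⁻¹' {f (a, b)}) := by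
    intro a b hb
    have h : P (ξ₁ ⁻¹' {a} ∩ ξ₂ ⁻¹' {b}) ≤ P (ξ₂ ⁻¹' {b} ∩ ξ₃ ⁻¹' {f (a, b)}) := by
      apply measure_mono_ae
      filter_upwards [hf] with ω hω h
      have ha : ξ₁ ω = a := h.1
      have hb : ξ₂ ω = b := h.2
      exact ⟨hb, by rw [ha, hb] at hω; exact hω⟩
    rw [i12, i23, mul_comm] at h
    exact (ENNReal.mul_le_mul_iff_right hb (hfin b)).1 h
  have h2 : ∀ a c, P (ξ₁ ⁻¹' {a}) ≠ 0 → P (ξ₁ ⁻¹' {c}) ≠ 0 →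
      ∃ b, P (ξ₁ ⁻¹' {b}) ≠ 0 ∧ f (a, b) = c := by
    intro a c ha hc
    by_contra! hno
    have hz : ∀ᵐ ω ∂P, ∀ b, P (ξ₁ ⁻¹' {b}) = 0 → ξ₂ ω ≠ b := by
      rw [ae_all_iff]
      intro b
      by_cases hb : P (ξ₁ ⁻¹' {b}) = 0
      · have h0 : P (ξ₂ ⁻¹' {b}) = 0 := by rw [e2, hb]
        filter_upwards [measure_eq_zero_iff_ae_notMem.1 h0] with ω hω _ h
        exact hω h
      · exact Filter.Eventually.of_forall fun ω h => absurd h hb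
    have h0 : P (ξ₁ ⁻¹' {a} ∩ ξ₃ ⁻¹' {c}) = 0 := by
      rw [measure_eq_zero_iff_ae_notMem]
      filter_upwards [hf, hz] with ω hω hzω h
      have ha : ξ₁ ω = a := h.1
      have hc : ξ₃ ω = c := h.2
      refine hno (ξ₂ ω) (fun h => hzω _ h rfl) ?_
      rw [← ha, ← hω, hc]
    rw [i13] at h0
    exact (mul_ne_zero ha hc) h0
  intro a ha
  haveI : Nonempty A := ⟨a⟩
  obtain ⟨m, hm⟩ := Finite.exists_max fun b => P (ξ₁ ⁻¹' {b})
  have hm0 : P (ξ₁ ⁻¹' {m}) ≠ 0 := fun h => ha (le_antisymm (h ▸ hm a) bot_le)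
  have hall : ∀ c, P (ξ₁ ⁻¹' {c}) ≠ 0 → P (ξ₁ ⁻¹' {c}) = P (ξ₁ ⁻¹' {m}) := by
    intro c hc
    obtain ⟨b, hb, rfl⟩ := h2 m c hm0 hc
    exact le_antisymm (hm _) (h1 m b hb)
  rw [hall a ha]
  apply ENNReal.eq_inv_of_mul_eq_one_left
  rw [← hsum, ← Finset.sum_filter_ne_zero, Finset.sum_congr rfl
    (fun c hc => hall c (Finset.mem_filter.1 hc).2), Finset.sum_const, nsmul_eq_mul, mul_comm,
    Nat.card_eq_fintype_card, Fintype.card_subtype]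
end
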